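/- Let d ≥ 4 and 1 < p < p_d = (2d−2)/(d+1). Then for every finitely supported function γ : 𝒴 × ℛ → ℂ, ‖∑_{(y,r)∈𝒴×ℛ} γ(y,r) F_{y,r}‖_{L^p(ℝ^d)} ≤ C (∑_{(y,r)∈𝒴×ℛ} |γ(y,r)|^p r^{d−1})^{1/p}, where C depends only on p, d and ψ. -/

import Mathlib

open MeasureTheory Metric Set
open scoped FourierTransform ENNReal NNReal

noncomputable section

abbrev Ed (d : ℕ) := EuclideanSpace ℝ (Fin d)

/-- Surface measure on the sphere of radius `r` centered at the origin in `ℝ^d`: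
the `(d-1)`-dimensional Hausdorff measure restricted to the sphere. -/
def sphereM (d : ℕ) (r : ℝ) : Measure (Ed d) :=
  (μH[(d : ℝ) - 1]).restrict (Metric.sphere (0 : Ed d) r)

/-- `ψ₀` is admissible: radial, `C^∞`, supported in the ball of radius `1/10`, and
its Fourier transform vanishes to order `20d` at the origin. -/
def Admissible (d : ℕ) (ψ₀ : Ed d → ℂ) : Prop :=
  ContDiff ℝ (⊤ : ℕ∞) ψ₀ ∧
  (∀ x, ψ₀ x ≠ 0 → ‖x‖ ≤ 1 / 10) ∧
  (∀ x y : Ed d, ‖x‖ = ‖y‖ → ψ₀ x = ψ₀ y) ∧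
  (∀ n : ℕ, n < 20 * d → iteratedFDeriv ℝ n (𝓕 ψ₀) 0 = 0)

/-- `ψ = ψ₀ * ψ₀` (convolution). -/
def psiOf (d : ℕ) (ψ₀ : Ed d → ℂ) : Ed d → ℂ :=
  fun x => ∫ y, ψ₀ y * ψ₀ (x - y)

/-- `F_{y,r} = σ_r * ψ(· - y)`. -/
def Fyr (d : ℕ) (ψ₀ : Ed d → ℂ) (y : Ed d) (r : ℝ) : Ed d → ℂ :=
  fun x => ∫ z, psiOf d ψ₀ (x - y - z) ∂(sphereM d r)

/-! The Fourier transform of the sphere and the vanishing of `𝓕 ψ₀` at the origin give the inner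
products `⟪F_{y,r}, F_{y',r'}⟫` the decay `(r r' / (1 + |y - y'|)) ^ ((d - 1) / 2)`, and by
support considerations they vanish unless `|r - r'| ≤ |y - y'| + 2 / 5`. Hence the functions
`F_{y,r}` are almost orthogonal in `L²` for sets of pairs with few points in every ball. A general
set is split into levels according to the density `2 ^ ν` of its points in balls of `ℝ^d × ℝ`.
Where the density is high, the supports of many `F_{y,r}` lie in a neighborhood of a single
sphere, so the sum has small support, and Hölder's inequality turns the `L²` bound into an `L^q`
bound summable in `ν` when `q < p_d`. This is the inequality for coefficients bounded by `1`;
splitting `|γ|` dyadically, the interaction of the levels `j` and `k` is controlled by the bounds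
for two exponents on either side of `p` and decays geometrically in `|j - k|`. -/

open Module
open scoped Pointwise RealInnerProductSpace ComplexConjugate Topology

section SphereMeasure

variable {E : Type*} [NormedAddCommGroup E] [InnerProductSpace ℝ E] [FiniteDimensional ℝ E]
  [MeasurableSpace E] [BorelSpace E]

lemma hausdorffMeasure_hemisphere_lt_top {n : ℕ} (hn : finrank ℝ E = n + 1) {v : E}
    (hv : ‖v‖ = 1) : μH[(n : ℝ)] (sphere (0 : E) 1 ∩ {x | ⟪v, x⟫ ≤ 0}) < ∞ := by
  let f : (ℝ ∙ v)ᗮ → E := fun w => stereoInvFunAux v w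
  have hf : ContDiff ℝ 1 f := contDiff_stereoInvFunAux.comp (ℝ ∙ v)ᗮ.subtypeL.contDiff
  obtain ⟨K, hK⟩ := hf.contDiffOn.exists_lipschitzOnWith one_ne_zero
    (convex_closedBall 0 2) (isCompact_closedBall (0 : (ℝ ∙ v)ᗮ) 2)
  have hdim : finrank ℝ (ℝ ∙ v)ᗮ = n := by
    have : Fact (finrank ℝ E = n + 1) := ⟨hn⟩
    exact Submodule.finrank_orthogonal_span_singleton (norm_ne_zero_iff.mp (by simp [hv]))
  have hball : μH[(n : ℝ)] (closedBall (0 : (ℝ ∙ v)ᗮ) 2) < ∞ := by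
    have := isAddHaarMeasure_hausdorffMeasure (E := (ℝ ∙ v)ᗮ)
    rw [← hdim]
    exact (isCompact_closedBall _ _).measure_lt_top
  have hsub : sphere (0 : E) 1 ∩ {x | ⟪v, x⟫ ≤ 0} ⊆ f '' closedBall 0 2 := by
    rintro x ⟨hx, hvx : ⟪v, x⟫ ≤ 0⟩
    have hxv : x ≠ v := by
      rintro rfl
      rw [real_inner_self_eq_norm_sq, hv] at hvx
      norm_num at hvx
    refine ⟨stereoToFun v x, ?_, congrArg Subtype.val (stereo_left_inv hv (x := ⟨x, hx⟩) hxv)⟩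
    have hproj : ‖(ℝ ∙ v)ᗮ.orthogonalProjectionOnto x‖ ≤ 1 :=
      ((ℝ ∙ v)ᗮ.norm_orthogonalProjectionOnto_apply_le x).trans (mem_sphere_zero_iff_norm.mp hx).le
    have hcoef : |2 / (1 - ⟪v, x⟫)| ≤ 2 := by
      rw [abs_of_pos (by apply div_pos <;> linarith), div_le_iff₀ (by linarith)]
      linarith
    rw [mem_closedBall_zero_iff, stereoToFun_apply, norm_smul, Real.norm_eq_abs,
      innerSL_apply_apply]
    exact (mul_le_mul hcoef hproj (norm_nonneg _) zero_le_two).trans_eq (mul_one 2)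
  calc μH[(n : ℝ)] (sphere (0 : E) 1 ∩ {x | ⟪v, x⟫ ≤ 0})
      ≤ μH[(n : ℝ)] (f '' closedBall 0 2) := measure_mono hsub
    _ ≤ (K : ℝ≥0∞) ^ (n : ℝ) * μH[(n : ℝ)] (closedBall (0 : (ℝ ∙ v)ᗮ) 2) :=
      hK.hausdorffMeasure_image_le n.cast_nonneg
    _ < ∞ := ENNReal.mul_lt_top (by simp) hball

lemma hausdorffMeasure_unitSphere_lt_top {n : ℕ} (hn : finrank ℝ E = n + 1) :
    μH[(n : ℝ)] (sphere (0 : E) 1) < ∞ := by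
  have : Nontrivial E := nontrivial_of_finrank_eq_succ hn
  obtain ⟨v, hv⟩ := exists_norm_eq E zero_le_one
  have hcover : sphere (0 : E) 1 ⊆
      sphere 0 1 ∩ {x | ⟪v, x⟫ ≤ 0} ∪ sphere 0 1 ∩ {x | ⟪-v, x⟫ ≤ 0} := by
    intro x hx
    rcases le_total ⟪v, x⟫ 0 with h | h
    · exact .inl ⟨hx, h⟩
    · exact .inr ⟨hx, by simpa [inner_neg_left] using h⟩
  refine (measure_mono hcover).trans_lt ((measure_union_le _ _).trans_lt (ENNReal.add_lt_top.mpr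
    ⟨hausdorffMeasure_hemisphere_lt_top hn hv, hausdorffMeasure_hemisphere_lt_top hn ?_⟩))
  rwa [norm_neg]

variable {d : ℕ} {r : ℝ} {G : Type*} [NormedAddCommGroup G] [NormedSpace ℝ G]

lemma sphereM_zero_dim (hr : r ≠ 0) : sphereM 0 r = 0 := by
  rw [sphereM, sphere_eq_empty_of_subsingleton hr, Measure.restrict_empty]

instance : IsFiniteMeasure (sphereM d 1) := by
  cases d with
  | zero => rw [sphereM_zero_dim one_ne_zero]; infer_instance
  | succ n =>
    refine ⟨?_⟩
    rw [sphereM, Measure.restrict_apply_univ, Nat.cast_add_one, add_sub_cancel_right]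
    exact hausdorffMeasure_unitSphere_lt_top (by simp)

lemma ae_norm_eq_sphereM : ∀ᵐ z ∂sphereM d r, ‖z‖ = r := by
  filter_upwards [ae_restrict_mem isClosed_sphere.measurableSet] with z hz
  exact mem_sphere_zero_iff_norm.mp hz

lemma measurePreserving_sphereM (U : Ed d ≃ₗᵢ[ℝ] Ed d) :
    MeasurePreserving U (sphereM d r) (sphereM d r) := by
  have h := (U.toIsometryEquiv.measurePreserving_hausdorffMeasure ((d : ℝ) - 1)).restrict_preimage
    (isClosed_sphere (x := (0 : Ed d)) (ε := r)).measurableSet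
  have hpre : U.toIsometryEquiv ⁻¹' sphere (0 : Ed d) r = sphere 0 r := by ext; simp
  rwa [hpre] at h

lemma integral_comp_sphereM (U : Ed d ≃ₗᵢ[ℝ] Ed d) (f : Ed d → G) :
    ∫ z, f (U z) ∂sphereM d r = ∫ z, f z ∂sphereM d r :=
  (measurePreserving_sphereM U).integral_comp U.toHomeomorph.measurableEmbedding f

lemma measurableEmbedding_smul_Ed (hr : r ≠ 0) : MeasurableEmbedding fun x : Ed d => r • x :=
  (Homeomorph.smulOfNeZero r hr).measurableEmbedding

lemma sphereM_eq_smul_map (hr : 0 < r) :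
    sphereM d r = ENNReal.ofReal (r ^ (d - 1)) • (sphereM d 1).map (r • ·) := by
  rcases d.eq_zero_or_pos with rfl | hd
  · simp [sphereM_zero_dim hr.ne', sphereM_zero_dim one_ne_zero]
  have hme := measurableEmbedding_smul_Ed (d := d) hr.ne'
  ext s hs
  have hset : s ∩ sphere 0 r = r • ((r • ·) ⁻¹' s ∩ sphere (0 : Ed d) 1) := by
    rw [smul_set_inter₀ hr.ne', smul_sphere' hr.ne', smul_zero, mul_one,
      Real.norm_of_nonneg hr.le, preimage_smul₀ hr.ne', smul_inv_smul₀ hr.ne']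
  have hcast : (d : ℝ) - 1 = ((d - 1 : ℕ) : ℝ) := (Nat.cast_pred hd).symm
  rw [Measure.smul_apply, hme.map_apply, sphereM, sphereM, Measure.restrict_apply hs,
    Measure.restrict_apply (hme.measurable hs), hset, hcast,
    Measure.hausdorffMeasure_smul₀ (Nat.cast_nonneg _) hr.ne', NNReal.rpow_natCast,
    ← Real.toNNReal_eq_nnnorm_of_nonneg hr.le, ← Real.toNNReal_pow hr.le]
  rfl

lemma integral_sphereM (hr : 0 < r) (f : Ed d → G) :
    ∫ z, f z ∂sphereM d r = r ^ (d - 1) • ∫ z, f (r • z) ∂sphereM d 1 := by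
  rw [sphereM_eq_smul_map hr, integral_smul_measure,
    (measurableEmbedding_smul_Ed hr.ne').integral_map, ENNReal.toReal_ofReal (by positivity)]

lemma isFiniteMeasure_sphereM (hr : 0 < r) : IsFiniteMeasure (sphereM d r) := by
  rw [sphereM_eq_smul_map hr]
  exact Measure.smul_finite _ ENNReal.ofReal_ne_top

lemma exists_linearIsometryEquiv_map_eq {x y : Ed d} (h : ‖x‖ = ‖y‖) :
    ∃ U : Ed d ≃ₗᵢ[ℝ] Ed d, U x = y :=
  ⟨(ℝ ∙ (x - y))ᗮ.reflection, Submodule.reflection_sub h⟩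

end SphereMeasure

section Bessel

/-- An adiabatic invariant of the equation `φ'' + (n / t) φ' + φ = 0` satisfied by the spherical
means of the cosine: along solutions it is constant up to a factor `1 + O(1 / t)`. -/
def besselEnergy (n : ℝ) (φ φ' : ℝ → ℝ) (t : ℝ) : ℝ :=
  t ^ n * (φ t ^ 2 + φ' t ^ 2 + n * φ t * φ' t / t)

variable {n t : ℝ} {φ φ' φ'' : ℝ → ℝ}

lemma rpow_mul_sq_add_sq_le_besselEnergy (hn : 0 ≤ n) (ht : 0 < t) (hnt : n ≤ t) :
    t ^ n * (φ t ^ 2 + φ' t ^ 2) ≤ 2 * besselEnergy n φ φ' t := by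
  have hcross : -(φ t ^ 2 + φ' t ^ 2) ≤ 2 * (n / t * (φ t * φ' t)) := by
    have hnt1 : n / t ≤ 1 := (div_le_one ht).mpr hnt
    have hnt0 : 0 ≤ n / t := by positivity
    nlinarith [sq_nonneg (φ t + φ' t), sq_nonneg (φ t), sq_nonneg (φ' t)]
  have hE : 2 * besselEnergy n φ φ' t =
      t ^ n * (2 * (φ t ^ 2 + φ' t ^ 2) + 2 * (n / t * (φ t * φ' t))) := by
    rw [besselEnergy]; ring
  rw [hE]
  exact mul_le_mul_of_nonneg_left (by linarith) (Real.rpow_nonneg ht.le n)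

lemma hasDerivAt_besselEnergy (ht : 0 < t) (h1 : HasDerivAt φ (φ' t) t)
    (h2 : HasDerivAt φ' (φ'' t) t) (hode : t * (φ t + φ'' t) = -n * φ' t) :
    HasDerivAt (besselEnergy n φ φ') (-(n * t ^ n * φ t * φ' t / t ^ 2)) t := by
  have hpow := Real.hasDerivAt_rpow_const (x := t) (p := n) (.inl ht.ne')
  have hsum := ((h1.fun_pow 2).fun_add (h2.fun_pow 2)).fun_add
    (((h1.const_mul n).fun_mul h2).fun_div (hasDerivAt_id t) ht.ne')
  refine (hpow.fun_mul hsum).congr_deriv ?_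
  have hφ'' : φ'' t = -n * φ' t / t - φ t := by field_simp; linarith
  rw [hφ'', Real.rpow_sub_one ht.ne']
  simp only [id]
  field_simp
  ring

lemma antitoneOn_besselEnergy_mul_exp (hn : 0 ≤ n) (h1 : ∀ t, HasDerivAt φ (φ' t) t)
    (h2 : ∀ t, HasDerivAt φ' (φ'' t) t) (hode : ∀ t, t * (φ t + φ'' t) = -n * φ' t) :
    AntitoneOn (fun t => besselEnergy n φ φ' t * Real.exp (n / t)) (Ici (n + 1)) := by
  have hderiv : ∀ t, 0 < t → HasDerivAt (fun t => besselEnergy n φ φ' t * Real.exp (n / t))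
      (-(n * t ^ n * φ t * φ' t / t ^ 2) * Real.exp (n / t) +
        besselEnergy n φ φ' t * (Real.exp (n / t) * (n * -(t ^ 2)⁻¹))) t := fun t ht =>
    (hasDerivAt_besselEnergy ht (h1 t) (h2 t) (hode t)).mul
      ((hasDerivAt_inv ht.ne').const_mul n).exp
  refine antitoneOn_of_deriv_nonpos (convex_Ici _) (fun t ht => ?_) (fun t ht => ?_)
    fun t ht => ?_
  · have : 0 < t := by linarith [mem_Ici.mp ht]
    exact (hderiv t this).continuousAt.continuousWithinAt
  all_goals
    rw [interior_Ici, mem_Ioi] at ht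
    have ht0 : 0 < t := by linarith
  · exact (hderiv t ht0).differentiableAt.differentiableWithinAt
  · have hE := rpow_mul_sq_add_sq_le_besselEnergy (φ := φ) (φ' := φ') hn ht0 (by linarith)
    have hprod : -(t ^ n * (φ t * φ' t)) ≤ besselEnergy n φ φ' t := by
      have := mul_nonneg (Real.rpow_nonneg ht0.le n) (sq_nonneg (φ t + φ' t))
      linarith
    have hfactor : -(n * t ^ n * φ t * φ' t / t ^ 2) * Real.exp (n / t) +
        besselEnergy n φ φ' t * (Real.exp (n / t) * (n * -(t ^ 2)⁻¹)) =
        n / t ^ 2 * Real.exp (n / t) *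
          (-(t ^ n * (φ t * φ' t)) - besselEnergy n φ φ' t) := by
      field_simp
      ring
    rw [(hderiv t ht0).deriv, hfactor]
    exact mul_nonpos_of_nonneg_of_nonpos (by positivity) (by linarith)

lemma exists_abs_mul_rpow_le_of_bessel {B : ℝ} (hn : 0 ≤ n) (h1 : ∀ t, HasDerivAt φ (φ' t) t)
    (h2 : ∀ t, HasDerivAt φ' (φ'' t) t) (hode : ∀ t, t * (φ t + φ'' t) = -n * φ' t)
    (hB : ∀ t, |φ t| ≤ B) :
    ∃ K, ∀ t, 0 ≤ t → |φ t| * t ^ (n / 2) ≤ K := by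
  set A := besselEnergy n φ φ' (n + 1) * Real.exp (n / (n + 1))
  have hlarge : ∀ t, n + 1 ≤ t → |φ t| * t ^ (n / 2) ≤ √(2 * A) := fun t ht => by
    have ht0 : 0 < t := by linarith
    have hE := rpow_mul_sq_add_sq_le_besselEnergy (φ := φ) (φ' := φ') hn ht0 (by linarith)
    have hE0 : 0 ≤ besselEnergy n φ φ' t := by
      have : 0 ≤ t ^ n * (φ t ^ 2 + φ' t ^ 2) := by positivity
      linarith
    have hmono : besselEnergy n φ φ' t * Real.exp (n / t) ≤ A :=
      antitoneOn_besselEnergy_mul_exp hn h1 h2 hode self_mem_Ici ht ht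
    have hexp : 1 ≤ Real.exp (n / t) := Real.one_le_exp (by positivity)
    refine Real.le_sqrt_of_sq_le ?_
    rw [mul_pow, sq_abs, ← Real.rpow_mul_natCast ht0.le, Nat.cast_ofNat,
      div_mul_cancel₀ _ two_ne_zero]
    nlinarith [mul_nonneg (Real.rpow_nonneg ht0.le n) (sq_nonneg (φ' t))]
  refine ⟨max √(2 * A) (B * (n + 1) ^ (n / 2)), fun t ht => ?_⟩
  rcases le_total (n + 1) t with h | h
  · exact le_max_of_le_left (hlarge t h)
  · have hB0 : 0 ≤ B := (abs_nonneg _).trans (hB 0)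
    exact le_max_of_le_right (by gcongr; exact hB t)

end Bessel

section SphereTransform

variable {d : ℕ}

lemma hasDerivAt_integral_sphereM {F F' : ℝ → Ed d → ℝ} (hF : ∀ t, Continuous (F t))
    (hF' : Continuous ↿F') (hderiv : ∀ z t, HasDerivAt (F · z) (F' t z) t) (t : ℝ) :
    HasDerivAt (fun t => ∫ z, F t z ∂sphereM d 1) (∫ z, F' t z ∂sphereM d 1) t := by
  obtain ⟨C, hC⟩ := (isCompact_sphere (0 : Ed d) 1).exists_bound_of_continuousOn
    (hF t).continuousOn
  obtain ⟨C', hC'⟩ := ((isCompact_closedBall t 1).prod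
    (isCompact_sphere (0 : Ed d) 1)).exists_bound_of_continuousOn hF'.continuousOn
  have hint : Integrable (F t) (sphereM d 1) := by
    refine .of_bound (hF t).aestronglyMeasurable C ?_
    filter_upwards [ae_norm_eq_sphereM] with z hz using hC z (mem_sphere_zero_iff_norm.mpr hz)
  have hbound : ∀ᵐ z ∂sphereM d 1, ∀ s ∈ closedBall t 1, ‖F' s z‖ ≤ C' := by
    filter_upwards [ae_norm_eq_sphereM] with z hz s hs
    exact hC' (s, z) ⟨hs, mem_sphere_zero_iff_norm.mpr hz⟩
  exact (hasDerivAt_integral_of_dominated_loc_of_deriv_le (closedBall_mem_nhds t one_pos)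
    (.of_forall fun s => (hF s).aestronglyMeasurable) hint
    (hF'.comp (Continuous.prodMk_right t)).aestronglyMeasurable hbound (integrable_const _)
    (.of_forall fun z s _ => hderiv z s)).2

lemma integrable_sphereM {f : Ed d → ℝ} (hf : Continuous f) : Integrable f (sphereM d 1) := by
  obtain ⟨C, hC⟩ := (isCompact_sphere (0 : Ed d) 1).exists_bound_of_continuousOn hf.continuousOn
  refine .of_bound hf.aestronglyMeasurable C ?_
  filter_upwards [ae_norm_eq_sphereM] with z hz using hC z (mem_sphere_zero_iff_norm.mpr hz)

lemma exists_linearIsometryEquiv_exp {A : Ed d →L[ℝ] Ed d} (hA : A ∈ skewAdjoint _) :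
    ∃ U : Ed d ≃ₗᵢ[ℝ] Ed d, ∀ z, U z = NormedSpace.exp A z := by
  let := NormedAlgebra.restrictScalars ℚ ℝ (Ed d →L[ℝ] Ed d)
  exact ⟨Unitary.linearIsometryEquiv ⟨_, NormedSpace.exp_mem_unitary_of_mem_skewAdjoint hA⟩,
    fun _ => rfl⟩

lemma integral_fderiv_skewAdjoint_sphereM {f : Ed d → ℝ} (hf : ContDiff ℝ 1 f)
    {A : Ed d →L[ℝ] Ed d} (hA : A ∈ skewAdjoint _) :
    ∫ z, fderiv ℝ f z (A z) ∂sphereM d 1 = 0 := by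
  let := NormedAlgebra.restrictScalars ℚ ℝ (Ed d →L[ℝ] Ed d)
  have hexp : Continuous fun θ : ℝ => NormedSpace.exp (θ • A) :=
    NormedSpace.exp_continuous.comp (continuous_id.smul continuous_const)
  have hderiv : ∀ z θ, HasDerivAt (fun θ : ℝ => f (NormedSpace.exp (θ • A) z))
      (fderiv ℝ f (NormedSpace.exp (θ • A) z) (NormedSpace.exp (θ • A) (A z))) θ := by
    intro z θ
    have := (hasDerivAt_exp_smul_const (𝕂 := ℝ) A θ).clm_apply (hasDerivAt_const θ z)
    simp only [map_zero, add_zero] at this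
    exact (hf.differentiable one_ne_zero _).hasFDerivAt.comp_hasDerivAt θ this
  have hcont : Continuous ↿fun (θ : ℝ) (z : Ed d) =>
      fderiv ℝ f (NormedSpace.exp (θ • A) z) (NormedSpace.exp (θ • A) (A z)) :=
    ((hf.continuous_fderiv one_ne_zero).comp ((hexp.comp continuous_fst).clm_apply
      continuous_snd)).clm_apply ((hexp.comp continuous_fst).clm_apply
        (A.continuous.comp continuous_snd))
  have hrot : ∀ θ : ℝ, ∫ z, f (NormedSpace.exp (θ • A) z) ∂sphereM d 1 =
      ∫ z, f z ∂sphereM d 1 := by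
    intro θ
    obtain ⟨U, hU⟩ := exists_linearIsometryEquiv_exp (skewAdjoint.smul_mem θ hA)
    simp only [← hU]
    exact integral_comp_sphereM U f
  have key := hasDerivAt_integral_sphereM (F := fun θ z => f (NormedSpace.exp (θ • A) z))
    (fun θ => hf.continuous.comp (NormedSpace.exp (θ • A)).continuous) hcont hderiv 0
  simp only [hrot] at key
  have hexp0 : NormedSpace.exp ((0 : ℝ) • A) = 1 := by
    rw [zero_smul ℝ A, NormedSpace.exp_zero]
  simpa [hexp0] using key.unique (hasDerivAt_const _ _)

lemma integral_coord_mul_sin_sphereM {i j : Fin d} (hij : i ≠ j) (t : ℝ) :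
    ∫ z : Ed d, z i * Real.sin (t * z i) ∂sphereM d 1 =
      t * ∫ z : Ed d, z j ^ 2 * Real.cos (t * z i) ∂sphereM d 1 := by
  let e : Fin d → Ed d := fun k => EuclideanSpace.single k 1
  let A : Ed d →L[ℝ] Ed d :=
    InnerProductSpace.rankOne ℝ (e j) (e i) - InnerProductSpace.rankOne ℝ (e i) (e j)
  have hA : A ∈ skewAdjoint _ := by
    simp [skewAdjoint.mem_iff, A, ContinuousLinearMap.star_eq_adjoint]
  have hcoord : ∀ k (z : Ed d),
      HasFDerivAt (fun z : Ed d => z k) (EuclideanSpace.proj k : Ed d →L[ℝ] ℝ) z := fun k z =>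
    (EuclideanSpace.proj k : Ed d →L[ℝ] ℝ).hasFDerivAt
  have hfderiv : ∀ z : Ed d, fderiv ℝ (fun z : Ed d => z j * Real.sin (t * z i)) z (A z) =
      z i * Real.sin (t * z i) - t * (z j ^ 2 * Real.cos (t * z i)) := by
    intro z
    rw [((hcoord j z).fun_mul ((hcoord i z).const_mul t).sin).fderiv]
    simp [A, e, EuclideanSpace.inner_single_left, hij, hij.symm]
    ring
  have key := integral_fderiv_skewAdjoint_sphereM
    (f := fun z : Ed d => z j * Real.sin (t * z i)) (by fun_prop) hA
  simp only [hfderiv] at key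
  rwa [integral_sub (integrable_sphereM (by fun_prop))
    ((integrable_sphereM (by fun_prop)).const_mul t), integral_const_mul, sub_eq_zero] at key

lemma integral_cos_coord_bessel (i : Fin d) (t : ℝ) :
    t * (∫ z : Ed d, Real.cos (t * z i) ∂sphereM d 1 +
        ∫ z : Ed d, -(z i ^ 2 * Real.cos (t * z i)) ∂sphereM d 1) =
      -((d : ℝ) - 1) * ∫ z : Ed d, -(z i * Real.sin (t * z i)) ∂sphereM d 1 := by
  have hsum : ∫ z : Ed d, Real.cos (t * z i) ∂sphereM d 1 =
      ∑ j, ∫ z : Ed d, z j ^ 2 * Real.cos (t * z i) ∂sphereM d 1 := by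
    rw [← integral_finsetSum _ fun j _ => integrable_sphereM (by fun_prop)]
    refine integral_congr_ae ?_
    filter_upwards [ae_norm_eq_sphereM] with z hz
    rw [← Finset.sum_mul, ← EuclideanSpace.real_norm_sq_eq, hz, one_pow, one_mul]
  have herase : t * ∑ j ∈ Finset.univ.erase i, ∫ z : Ed d, z j ^ 2 * Real.cos (t * z i) ∂sphereM d 1
      = ((d : ℝ) - 1) * ∫ z : Ed d, z i * Real.sin (t * z i) ∂sphereM d 1 := by
    rw [Finset.mul_sum, Finset.sum_congr rfl fun j hj =>
      (integral_coord_mul_sin_sphereM (Finset.ne_of_mem_erase hj).symm t).symm, Finset.sum_const,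
      Finset.card_erase_of_mem (Finset.mem_univ i), Finset.card_univ, Fintype.card_fin,
      nsmul_eq_mul, Nat.cast_pred i.pos]
  rw [← Finset.add_sum_erase _ _ (Finset.mem_univ i)] at hsum
  rw [integral_neg, integral_neg, hsum]
  linear_combination herase

/-- The real Fourier transform of the surface measure of the unit sphere, without the factor
`2π` in the phase. -/
def sphereTransform (d : ℕ) (ξ : Ed d) : ℝ := ∫ z, Real.cos ⟪z, ξ⟫ ∂sphereM d 1

lemma abs_sphereTransform_le (ξ : Ed d) : |sphereTransform d ξ| ≤ (sphereM d 1).real univ := by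
  simpa [sphereTransform] using norm_integral_le_of_norm_le_const (μ := sphereM d 1) (C := 1)
    (f := fun z => Real.cos ⟪z, ξ⟫)
    (.of_forall fun z => Real.abs_cos_le_one _)

lemma continuous_sphereTransform : Continuous (sphereTransform d) :=
  continuous_of_dominated (bound := fun _ => 1) (fun ξ => by fun_prop)
    (fun ξ => .of_forall fun z => Real.abs_cos_le_one _) (integrable_const _)
    (.of_forall fun z => by fun_prop)

lemma sphereTransform_eq_of_norm_eq {ξ η : Ed d} (h : ‖ξ‖ = ‖η‖) :
    sphereTransform d ξ = sphereTransform d η := by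
  obtain ⟨U, rfl⟩ := exists_linearIsometryEquiv_map_eq h
  simp only [sphereTransform]
  rw [← integral_comp_sphereM U fun z => Real.cos ⟪z, U ξ⟫]
  simp only [LinearIsometryEquiv.inner_map_map]

lemma integral_exp_inner_sphereM (ξ : Ed d) :
    ∫ z, Complex.exp ((⟪z, ξ⟫ : ℝ) * Complex.I) ∂sphereM d 1 = sphereTransform d ξ := by
  have hint : ∀ ξ : Ed d,
      Integrable (fun z => Complex.exp ((⟪z, ξ⟫ : ℝ) * Complex.I)) (sphereM d 1) := fun ξ =>
    .of_bound (by fun_prop) 1 (.of_forall fun z => (Complex.norm_exp_ofReal_mul_I _).le)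
  have hsymm := integral_comp_sphereM (r := 1) (LinearIsometryEquiv.neg ℝ) fun z : Ed d =>
    Complex.exp ((⟪z, ξ⟫ : ℝ) * Complex.I)
  simp only [LinearIsometryEquiv.coe_neg, inner_neg_left] at hsymm
  have hadd := integral_add (hint ξ) (by simpa only [inner_neg_right] using hint (-ξ))
  rw [hsymm] at hadd
  rw [sphereTransform, ← integral_complex_ofReal, ← mul_right_inj' (two_ne_zero (α := ℂ)),
    two_mul, ← hadd, ← integral_const_mul]
  simp only [Complex.ofReal_neg, Complex.ofReal_cos, Complex.two_cos]

lemma exists_abs_sphereTransform_mul_rpow_le (d : ℕ) :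
    ∃ K, ∀ ξ, |sphereTransform d ξ| * ‖ξ‖ ^ (((d : ℝ) - 1) / 2) ≤ K := by
  rcases d.eq_zero_or_pos with rfl | hd
  · exact ⟨0, fun ξ => by simp [sphereTransform, sphereM_zero_dim one_ne_zero]⟩
  let i : Fin d := ⟨0, hd⟩
  have hcoord : ∀ t (z : Ed d), ⟪z, t • EuclideanSpace.single i 1⟫ = t * z i := fun t z => by
    simp [inner_smul_right, EuclideanSpace.inner_single_right]
  have hn : (0 : ℝ) ≤ d - 1 := sub_nonneg.mpr (by exact_mod_cast hd)
  obtain ⟨K, hK⟩ := exists_abs_mul_rpow_le_of_bessel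
    (φ := fun t => ∫ z : Ed d, Real.cos (t * z i) ∂sphereM d 1)
    (φ' := fun t => ∫ z : Ed d, -(z i * Real.sin (t * z i)) ∂sphereM d 1)
    (φ'' := fun t => ∫ z : Ed d, -(z i ^ 2 * Real.cos (t * z i)) ∂sphereM d 1)
    (B := (sphereM d 1).real univ) hn
    (hasDerivAt_integral_sphereM (fun t => by fun_prop) (by fun_prop) fun z t =>
      (((hasDerivAt_id t).mul_const (z i)).cos).congr_deriv (by simp only [id]; ring))
    (hasDerivAt_integral_sphereM (fun t => by fun_prop) (by fun_prop) fun z t =>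
      ((((hasDerivAt_id t).mul_const (z i)).sin.const_mul (z i)).neg).congr_deriv
        (by simp only [id]; ring))
    (integral_cos_coord_bessel i) fun t => by
      simpa only [sphereTransform, hcoord] using
        abs_sphereTransform_le (t • EuclideanSpace.single i (1 : ℝ))
  refine ⟨K, fun ξ => ?_⟩
  rw [sphereTransform_eq_of_norm_eq (η := ‖ξ‖ • EuclideanSpace.single i 1) (by simp [norm_smul])]
  simpa only [sphereTransform, hcoord] using hK ‖ξ‖ (norm_nonneg ξ)

end SphereTransform

section FourierPrelim

variable {V : Type*} [NormedAddCommGroup V] [InnerProductSpace ℝ V]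

/-- The character `x ↦ e^{-2πi⟪x, ξ⟫}` that appears in the Fourier integral. -/
def planeWave (x ξ : V) : ℂ := Complex.exp ((-2 * Real.pi * ⟪x, ξ⟫ : ℝ) * Complex.I)

lemma norm_planeWave (x ξ : V) : ‖planeWave x ξ‖ = 1 := Complex.norm_exp_ofReal_mul_I _

lemma planeWave_add (x y ξ : V) : planeWave (x + y) ξ = planeWave x ξ * planeWave y ξ := by
  rw [planeWave, planeWave, planeWave, ← Complex.exp_add, inner_add_left]
  congr 1
  push_cast
  ring

lemma conj_planeWave (x ξ : V) : conj (planeWave x ξ) = planeWave (-x) ξ := by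
  rw [planeWave, planeWave, ← Complex.exp_conj, inner_neg_left, map_mul, Complex.conj_I,
    Complex.conj_ofReal]
  congr 1
  push_cast
  ring

@[fun_prop]
lemma continuous_planeWave : Continuous fun q : V × V => planeWave q.1 q.2 := by
  unfold planeWave
  fun_prop

variable [MeasurableSpace V] [BorelSpace V] [FiniteDimensional ℝ V]

lemma fourier_eq_integral_planeWave (f : V → ℂ) (ξ : V) :
    𝓕 f ξ = ∫ v, planeWave v ξ * f v := by
  rw [Real.fourier_eq']
  rfl

lemma fourier_comp_sub_right (f : V → ℂ) (y ξ : V) :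
    𝓕 (fun x => f (x - y)) ξ = planeWave y ξ * 𝓕 f ξ := by
  rw [fourier_eq_integral_planeWave, fourier_eq_integral_planeWave, ← integral_const_mul,
    ← integral_add_right_eq_self _ y]
  simp only [planeWave_add, add_sub_cancel_right]
  congr with x
  ring

lemma integrable_planeWave_mul {f : V → ℂ} (hf : Integrable f) (ξ : V) :
    Integrable fun x => planeWave x ξ * f x :=
  hf.bdd_mul (c := 1) (Continuous.aestronglyMeasurable (by fun_prop))
    (.of_forall fun x => (norm_planeWave x ξ).le)

lemma fourier_finset_sum_mul {ι : Type*} (s : Finset ι) (c : ι → ℂ) {g : ι → V → ℂ}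
    (hg : ∀ i ∈ s, Integrable (g i)) (ξ : V) :
    𝓕 (fun x => ∑ i ∈ s, c i * g i x) ξ = ∑ i ∈ s, c i * 𝓕 (g i) ξ := by
  simp only [fourier_eq_integral_planeWave, Finset.mul_sum, ← integral_const_mul]
  rw [← integral_finsetSum s fun i hi => (integrable_planeWave_mul (hg i hi) ξ).const_mul (c i)]
  simp only [mul_left_comm]

lemma parseval {f g : V → ℂ} (hf : Integrable f) (hg : Integrable g) (hgc : Continuous g)
    (hg' : Integrable (𝓕 g)) :
    ∫ x, conj (f x) * g x = ∫ ξ, conj (𝓕 f ξ) * 𝓕 g ξ := by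
  have h := VectorFourier.integral_sesq_fourierIntegral_eq_neg_flip (innerSL ℂ (E := ℂ))
    (L := innerₗ V) (μ := volume) (ν := volume) Real.continuous_fourierChar continuous_inner hf hg'
  have hinv : VectorFourier.fourierIntegral Real.fourierChar volume (-(innerₗ V).flip) (𝓕 g) = g :=
    (by rw [flip_innerₗ]; rfl :
      VectorFourier.fourierIntegral Real.fourierChar volume (-(innerₗ V).flip) (𝓕 g) =
        𝓕⁻ (𝓕 g)).trans (hgc.fourierInv_fourier_eq hg hg')
  simp only [hinv, innerSL_apply_apply, RCLike.inner_apply'] at h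
  exact h.symm

lemma plancherel {f : V → ℂ} (hf : Integrable f) (hfc : Continuous f) (hf' : Integrable (𝓕 f)) :
    ∫ x, ‖f x‖ ^ 2 = ∫ ξ, ‖𝓕 f ξ‖ ^ 2 := by
  have h := parseval hf hf hfc hf'
  simp only [Complex.conj_mul', ← Complex.ofReal_pow, integral_complex_ofReal] at h
  exact_mod_cast h

end FourierPrelim

lemma norm_iteratedFDeriv_le_mul_pow {E F : Type*} [NormedAddCommGroup E] [NormedSpace ℝ E]
    [NormedAddCommGroup F] [NormedSpace ℝ F] {f : E → F} {n : ℕ} (hf : ContDiff ℝ n f) {C : ℝ}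
    (hC : ∀ x, ‖iteratedFDeriv ℝ n f x‖ ≤ C) (h0 : ∀ k < n, iteratedFDeriv ℝ k f 0 = 0)
    {j : ℕ} (hj : j ≤ n) (x : E) : ‖iteratedFDeriv ℝ (n - j) f x‖ ≤ C * ‖x‖ ^ j := by
  have hC0 : 0 ≤ C := (norm_nonneg _).trans (hC 0)
  induction j generalizing x with
  | zero => simpa using hC x
  | succ j ih =>
    have hlt : n - (j + 1) < n := by omega
    have hsucc : n - (j + 1) + 1 = n - j := by omega
    have hfderiv : ∀ y ∈ closedBall (0 : E) ‖x‖,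
        ‖fderiv ℝ (iteratedFDeriv ℝ (n - (j + 1)) f) y‖ ≤ C * ‖x‖ ^ j := by
      intro y hy
      rw [norm_fderiv_iteratedFDeriv, hsucc]
      have hyx : ‖y‖ ≤ ‖x‖ := by simpa using hy
      exact (ih (by omega) y).trans (by gcongr)
    have hmv := (convex_closedBall (0 : E) ‖x‖).norm_image_sub_le_of_norm_fderiv_le
      (fun y _ => hf.differentiable_iteratedFDeriv (by exact_mod_cast hlt) y) hfderiv
      (mem_closedBall_self (norm_nonneg x)) (by simp : x ∈ closedBall (0 : E) ‖x‖)
    rwa [h0 _ hlt, sub_zero, sub_zero, mul_assoc, ← pow_succ] at hmv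

lemma norm_le_mul_pow_of_iteratedFDeriv_eq_zero {E F : Type*} [NormedAddCommGroup E]
    [NormedSpace ℝ E] [NormedAddCommGroup F] [NormedSpace ℝ F] {f : E → F} {n : ℕ}
    (hf : ContDiff ℝ n f) {C : ℝ} (hC : ∀ x, ‖iteratedFDeriv ℝ n f x‖ ≤ C)
    (h0 : ∀ k < n, iteratedFDeriv ℝ k f 0 = 0) (x : E) : ‖f x‖ ≤ C * ‖x‖ ^ n := by
  have h := norm_iteratedFDeriv_le_mul_pow hf hC h0 le_rfl x
  rwa [Nat.sub_self, norm_iteratedFDeriv_zero] at h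

lemma exists_schwartzMap_eq_fourier {V : Type*} [NormedAddCommGroup V]
    [InnerProductSpace ℝ V] [MeasurableSpace V] [BorelSpace V] [FiniteDimensional ℝ V] {f : V → ℂ}
    (hf : HasCompactSupport f) (hf' : ContDiff ℝ (⊤ : ℕ∞) f) :
    ∃ T : SchwartzMap V ℂ, (T : V → ℂ) = 𝓕 f :=
  ⟨𝓕 (hf.toSchwartzMap hf'), SchwartzMap.fourier_coe _⟩

lemma pow_sub_one_eq_rpow_sq {d : ℕ} (hd : 1 ≤ d) {r : ℝ} (hr : 0 ≤ r) :
    r ^ (d - 1) = (r ^ (((d : ℝ) - 1) / 2)) ^ 2 := by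
  rw [← Real.rpow_mul_natCast hr, ← Real.rpow_natCast, Nat.cast_sub hd]
  congr 1
  push_cast
  ring

/-- The Fourier transform of the surface measure of the sphere of radius `r`, in Mathlib's
normalization of the Fourier transform. -/
def sphereSymbol (d : ℕ) (r : ℝ) (ξ : Ed d) : ℝ :=
  r ^ (d - 1) * sphereTransform d ((2 * Real.pi * r) • ξ)

section Sphere

variable {d : ℕ}

lemma continuous_sphereSymbol (r : ℝ) : Continuous (sphereSymbol d r) := by
  have := continuous_sphereTransform (d := d)
  unfold sphereSymbol
  fun_prop

lemma sphereSymbol_eq_of_norm_eq (r : ℝ) {ξ η : Ed d} (h : ‖ξ‖ = ‖η‖) :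
    sphereSymbol d r ξ = sphereSymbol d r η := by
  rw [sphereSymbol, sphereSymbol, sphereTransform_eq_of_norm_eq]
  rw [norm_smul, norm_smul, h]

lemma integral_planeWave_smul_sphereM_one (ρ : ℝ) (ξ : Ed d) :
    ∫ z, planeWave (ρ • z) ξ ∂sphereM d 1 = sphereTransform d ((2 * Real.pi * ρ) • ξ) := by
  rw [sphereTransform_eq_of_norm_eq (η := (-2 * Real.pi * ρ) • ξ) (by simp [norm_smul]),
    ← integral_exp_inner_sphereM]
  refine integral_congr_ae (.of_forall fun z => ?_)
  simp only [planeWave, real_inner_smul_left, real_inner_smul_right]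
  ring_nf

lemma integral_planeWave_sphereM {r : ℝ} (hr : 0 < r) (ξ : Ed d) :
    ∫ z, planeWave z ξ ∂sphereM d r = sphereSymbol d r ξ := by
  rw [integral_sphereM hr, integral_planeWave_smul_sphereM_one, Complex.real_smul, sphereSymbol,
    Complex.ofReal_mul]

lemma integral_planeWave_mul_eq_of_norm_eq {Q : Ed d → ℂ}
    (hrad : ∀ ξ η : Ed d, ‖ξ‖ = ‖η‖ → Q ξ = Q η) {v w : Ed d} (h : ‖v‖ = ‖w‖) :
    ∫ ξ, planeWave v ξ * Q ξ = ∫ ξ, planeWave w ξ * Q ξ := by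
  obtain ⟨U, rfl⟩ := exists_linearIsometryEquiv_map_eq h
  rw [← U.measurePreserving.integral_comp U.toHomeomorph.measurableEmbedding
    fun ξ => planeWave (U v) ξ * Q ξ]
  refine integral_congr_ae (.of_forall fun ξ => ?_)
  simp only [planeWave, LinearIsometryEquiv.inner_map_map, hrad (U ξ) ξ (U.norm_map ξ)]

-- Average over all `v` of a given length: by radiality of `Q` the left integral does not change.
lemma measure_sphereM_mul_integral_planeWave_mul {Q : Ed d → ℂ} (hQ : Integrable Q)
    (hrad : ∀ ξ η : Ed d, ‖ξ‖ = ‖η‖ → Q ξ = Q η) (v : Ed d) :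
    ((sphereM d 1).real univ : ℂ) * ∫ ξ, planeWave v ξ * Q ξ =
      ∫ ξ, (sphereTransform d ((2 * Real.pi * ‖v‖) • ξ) : ℂ) * Q ξ := by
  have hconst : ∫ z, (∫ ξ, planeWave (‖v‖ • z) ξ * Q ξ) ∂sphereM d 1 =
      ((sphereM d 1).real univ : ℂ) * ∫ ξ, planeWave v ξ * Q ξ := by
    rw [integral_congr_ae (g := fun _ => ∫ ξ, planeWave v ξ * Q ξ), integral_const,
      Complex.real_smul]
    filter_upwards [ae_norm_eq_sphereM] with z hz
    exact integral_planeWave_mul_eq_of_norm_eq hrad (by simp [norm_smul, hz])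
  rw [← hconst, integral_integral_swap]
  · simp only [integral_mul_const, integral_planeWave_smul_sphereM_one]
  · exact (hQ.comp_snd (sphereM d 1)).bdd_mul (c := 1)
      (Continuous.aestronglyMeasurable (by fun_prop)) (.of_forall fun q => (norm_planeWave _ _).le)

end Sphere

namespace Admissible

variable {d : ℕ} {ψ₀ : Ed d → ℂ}

lemma contDiff (hψ : Admissible d ψ₀) : ContDiff ℝ (⊤ : ℕ∞) ψ₀ := hψ.1

lemma norm_le_of_ne_zero (hψ : Admissible d ψ₀) {x : Ed d} (hx : ψ₀ x ≠ 0) :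
    ‖x‖ ≤ 1 / 10 :=
  hψ.2.1 x hx

lemma hasCompactSupport (hψ : Admissible d ψ₀) : HasCompactSupport ψ₀ :=
  .of_support_subset_isCompact (isCompact_closedBall 0 (1 / 10)) fun x hx => by
    simpa using hψ.norm_le_of_ne_zero hx

lemma continuous (hψ : Admissible d ψ₀) : Continuous ψ₀ := hψ.contDiff.continuous

lemma integrable (hψ : Admissible d ψ₀) : Integrable ψ₀ :=
  hψ.continuous.integrable_of_hasCompactSupport hψ.hasCompactSupport

lemma exists_schwartzMap_fourier (hψ : Admissible d ψ₀) :
    ∃ T : SchwartzMap (Ed d) ℂ, (T : Ed d → ℂ) = 𝓕 ψ₀ :=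
  exists_schwartzMap_eq_fourier hψ.hasCompactSupport hψ.contDiff

lemma continuous_fourier (hψ : Admissible d ψ₀) : Continuous (𝓕 ψ₀) := by
  obtain ⟨T, hT⟩ := hψ.exists_schwartzMap_fourier
  exact hT ▸ T.continuous

lemma memLp_fourier (hψ : Admissible d ψ₀) (p : ℝ≥0∞) : MemLp (𝓕 ψ₀) p := by
  obtain ⟨T, hT⟩ := hψ.exists_schwartzMap_fourier
  exact hT ▸ T.memLp p volume

lemma integrable_fourier (hψ : Admissible d ψ₀) :
    Integrable (𝓕 ψ₀) :=
  memLp_one_iff_integrable.mp (hψ.memLp_fourier 1)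

lemma fourier_eq_of_norm_eq (hψ : Admissible d ψ₀) {ξ η : Ed d} (h : ‖ξ‖ = ‖η‖) :
    𝓕 ψ₀ ξ = 𝓕 ψ₀ η := by
  obtain ⟨U, rfl⟩ := exists_linearIsometryEquiv_map_eq h
  rw [← Real.fourier_comp_linearIsometry U]
  exact congrFun (congrArg 𝓕 (funext fun x => hψ.2.2.1 _ _ (U.norm_map x).symm)) ξ

lemma exists_norm_fourier_le_rpow (hψ : Admissible d ψ₀) {s : ℝ} (hs0 : 0 ≤ s) (hs : s ≤ 20 * d) :
    ∃ C, 0 ≤ C ∧ ∀ ξ, ‖𝓕 ψ₀ ξ‖ ≤ C * ‖ξ‖ ^ s := by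
  obtain ⟨T, hT⟩ := hψ.exists_schwartzMap_fourier
  obtain ⟨C₀, hC₀pos, hC₀⟩ := T.decay 0 0
  obtain ⟨C₁, _, hC₁⟩ := T.decay 0 (20 * d)
  have hbound : ∀ ξ, ‖𝓕 ψ₀ ξ‖ ≤ C₀ := by rw [← hT]; simpa using hC₀
  have htaylor : ∀ ξ, ‖𝓕 ψ₀ ξ‖ ≤ C₁ * ‖ξ‖ ^ (20 * d) :=
    norm_le_mul_pow_of_iteratedFDeriv_eq_zero (hT ▸ T.smooth (20 * d : ℕ))
      (by rw [← hT]; simpa using hC₁) hψ.2.2.2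
  refine ⟨max C₀ C₁, le_max_of_le_left hC₀pos.le, fun ξ => ?_⟩
  rcases le_total ‖ξ‖ 1 with h | h
  · refine (htaylor ξ).trans ?_
    rw [← Real.rpow_natCast]
    gcongr ?_ * ?_
    · exact le_max_right _ _
    · exact Real.rpow_le_rpow_of_exponent_ge' (norm_nonneg ξ) h hs0 (by exact_mod_cast hs)
  · exact (hbound ξ).trans ((le_max_left _ _).trans
      (le_mul_of_one_le_right (le_max_of_le_left hC₀pos.le) (Real.one_le_rpow h hs0)))

end Admissible

lemma psiOf_eq_convolution {d : ℕ} (ψ₀ : Ed d → ℂ) :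
    psiOf d ψ₀ = convolution ψ₀ ψ₀ (ContinuousLinearMap.mul ℂ ℂ) volume := rfl

namespace Admissible

variable {d : ℕ} {ψ₀ : Ed d → ℂ}

lemma continuous_psiOf (hψ : Admissible d ψ₀) : Continuous (psiOf d ψ₀) :=
  hψ.hasCompactSupport.continuous_convolution_right (ContinuousLinearMap.mul ℂ ℂ)
    hψ.continuous.locallyIntegrable hψ.continuous

lemma norm_le_of_psiOf_ne_zero (hψ : Admissible d ψ₀) {x : Ed d} (hx : psiOf d ψ₀ x ≠ 0) :
    ‖x‖ ≤ 1 / 5 := by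
  rw [psiOf_eq_convolution] at hx
  obtain ⟨u, hu, v, hv, rfl⟩ := support_convolution_subset _ hx
  linarith [norm_add_le u v, hψ.norm_le_of_ne_zero hu, hψ.norm_le_of_ne_zero hv]

lemma hasCompactSupport_psiOf (hψ : Admissible d ψ₀) : HasCompactSupport (psiOf d ψ₀) :=
  .of_support_subset_isCompact (isCompact_closedBall 0 (1 / 5)) fun x hx => by
    simpa using hψ.norm_le_of_psiOf_ne_zero hx

lemma integrable_psiOf (hψ : Admissible d ψ₀) : Integrable (psiOf d ψ₀) :=
  hψ.continuous_psiOf.integrable_of_hasCompactSupport hψ.hasCompactSupport_psiOf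

lemma fourier_psiOf (hψ : Admissible d ψ₀) (ξ : Ed d) : 𝓕 (psiOf d ψ₀) ξ = 𝓕 ψ₀ ξ ^ 2 := by
  rw [psiOf_eq_convolution, Real.fourier_mul_convolution_eq hψ.integrable hψ.integrable, sq]

lemma abs_norm_sub_sub_le_of_Fyr_ne_zero (hψ : Admissible d ψ₀) {y x : Ed d} {r : ℝ}
    (hx : Fyr d ψ₀ y r x ≠ 0) :
    |‖x - y‖ - r| ≤ 1 / 5 := by
  contrapose! hx
  refine integral_eq_zero_of_ae ?_
  filter_upwards [ae_norm_eq_sphereM] with z hz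
  by_contra hne
  have hz' := (abs_norm_sub_norm_le (x - y) z).trans (hψ.norm_le_of_psiOf_ne_zero hne)
  rw [hz] at hz'
  exact hx.not_ge hz'

lemma continuous_Fyr (hψ : Admissible d ψ₀) (y : Ed d) {r : ℝ} (hr : 0 < r) :
    Continuous (Fyr d ψ₀ y r) := by
  have := isFiniteMeasure_sphereM (d := d) hr
  have hcont := hψ.continuous_psiOf
  obtain ⟨B, hB⟩ := hψ.hasCompactSupport_psiOf.exists_bound_of_continuous hcont
  exact continuous_of_dominated (bound := fun _ => B) (fun x => by fun_prop)
    (fun x => .of_forall fun z => hB _) (integrable_const _) (.of_forall fun z => by fun_prop)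

lemma hasCompactSupport_Fyr (hψ : Admissible d ψ₀) (y : Ed d) (r : ℝ) :
    HasCompactSupport (Fyr d ψ₀ y r) :=
  .of_support_subset_isCompact (isCompact_closedBall y (r + 1 / 5)) fun x hx => by
    have := (abs_le.mp (hψ.abs_norm_sub_sub_le_of_Fyr_ne_zero hx)).2
    rw [mem_closedBall, dist_eq_norm]
    linarith

lemma memLp_Fyr (hψ : Admissible d ψ₀) (y : Ed d) {r : ℝ} (hr : 0 < r) (q : ℝ≥0∞) :
    MemLp (Fyr d ψ₀ y r) q :=
  (hψ.continuous_Fyr y hr).memLp_of_hasCompactSupport (hψ.hasCompactSupport_Fyr y r)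

lemma integrable_Fyr (hψ : Admissible d ψ₀) (y : Ed d) {r : ℝ} (hr : 0 < r) :
    Integrable (Fyr d ψ₀ y r) :=
  memLp_one_iff_integrable.mp (hψ.memLp_Fyr y hr 1)

lemma fourier_Fyr (hψ : Admissible d ψ₀) (y : Ed d) {r : ℝ} (hr : 0 < r) (ξ : Ed d) :
    𝓕 (Fyr d ψ₀ y r) ξ = planeWave y ξ * (sphereSymbol d r ξ * 𝓕 ψ₀ ξ ^ 2) := by
  have := isFiniteMeasure_sphereM (d := d) hr
  have hcont := hψ.continuous_psiOf
  have hnorm : ∀ x z : Ed d,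
      ‖planeWave x ξ * psiOf d ψ₀ (x - y - z)‖ = ‖psiOf d ψ₀ (x - (y + z))‖ := fun x z => by
    rw [norm_mul, norm_planeWave, one_mul, sub_sub]
  have hint : Integrable (fun q : Ed d × Ed d => planeWave q.1 ξ * psiOf d ψ₀ (q.1 - y - q.2))
      (volume.prod (sphereM d r)) := by
    rw [integrable_prod_iff' (Continuous.aestronglyMeasurable (by fun_prop))]
    refine ⟨.of_forall fun z => ?_, ?_⟩
    · simp only [sub_sub]
      exact integrable_planeWave_mul (hψ.integrable_psiOf.comp_sub_right (y + z)) ξ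
    · simp only [hnorm, integral_sub_right_eq_self fun x => ‖psiOf d ψ₀ x‖]
      exact integrable_const _
  have htranslate : ∀ z : Ed d, ∫ x, planeWave x ξ * psiOf d ψ₀ (x - y - z) =
      planeWave y ξ * 𝓕 ψ₀ ξ ^ 2 * planeWave z ξ := fun z => by
    simp only [sub_sub]
    rw [← fourier_eq_integral_planeWave fun x => psiOf d ψ₀ (x - (y + z)), fourier_comp_sub_right,
      hψ.fourier_psiOf, planeWave_add]
    ring
  rw [fourier_eq_integral_planeWave]
  simp only [Fyr, ← integral_const_mul]
  rw [integral_integral_swap hint]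
  simp only [htranslate]
  rw [integral_const_mul, integral_planeWave_sphereM hr]
  ring

end Admissible

lemma one_add_rpow_le_two_rpow_mul {t m : ℝ} (ht : 0 ≤ t) (hm : 0 ≤ m) :
    (1 + t) ^ m ≤ 2 ^ m * (1 + t ^ m) := by
  have hmax : 1 + t ≤ 2 * max 1 t := by linarith [le_max_left 1 t, le_max_right 1 t]
  calc (1 + t) ^ m ≤ (2 * max 1 t) ^ m := by gcongr
    _ = 2 ^ m * max 1 t ^ m := Real.mul_rpow zero_le_two (by positivity)
    _ ≤ 2 ^ m * (1 + t ^ m) := by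
      gcongr
      have := Real.rpow_nonneg ht m
      rcases max_choice 1 t with h | h <;> rw [h] <;> simp [this]

lemma norm_sum_sq_eq_sum_norm_sq {ι : Type*} {s : Finset ι} {u : ι → ℂ}
    (hu : ∀ i ∈ s, ∀ j ∈ s, u i ≠ 0 → u j ≠ 0 → i = j) :
    ‖∑ i ∈ s, u i‖ ^ 2 = ∑ i ∈ s, ‖u i‖ ^ 2 := by
  by_cases h : ∃ i ∈ s, u i ≠ 0
  · obtain ⟨i, hi, hne⟩ := h
    have hzero : ∀ j ∈ s, j ≠ i → u j = 0 := fun j hj hji =>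
      by_contra fun hj' => hji (hu j hj i hi hj' hne)
    rw [Finset.sum_eq_single_of_mem i hi hzero, Finset.sum_eq_single_of_mem i hi
      fun j hj hji => by rw [hzero j hj hji, norm_zero, zero_pow two_ne_zero]]
  · push Not at h
    simp +contextual [Finset.sum_eq_zero, h]

lemma integral_conj_mul_self {α : Type*} [MeasurableSpace α] {μ : Measure α} (f : α → ℂ) :
    ∫ x, conj (f x) * f x ∂μ = ((∫ x, ‖f x‖ ^ 2 ∂μ : ℝ) : ℂ) := by
  rw [← integral_complex_ofReal]
  simp only [Complex.conj_mul', Complex.ofReal_pow]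

namespace Admissible

variable {d : ℕ} {ψ₀ : Ed d → ℂ}

lemma exists_abs_sphereTransform_mul_norm_fourier_le (hψ : Admissible d ψ₀) (hd : 1 ≤ d) :
    ∃ K, 0 ≤ K ∧ ∀ ρ, 0 ≤ ρ → ∀ ξ,
      |sphereTransform d ((2 * Real.pi * ρ) • ξ)| * ‖𝓕 ψ₀ ξ‖ * ρ ^ (((d : ℝ) - 1) / 2) ≤ K := by
  have hd' : (1 : ℝ) ≤ d := by exact_mod_cast hd
  set m := ((d : ℝ) - 1) / 2 with hm
  obtain ⟨K, hK⟩ := exists_abs_sphereTransform_mul_rpow_le d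
  obtain ⟨C, hC0, hC⟩ := hψ.exists_norm_fourier_le_rpow (s := m) (by linarith) (by linarith)
  have hK0 : 0 ≤ K := le_trans (by positivity) (hK 0)
  refine ⟨C * K / (2 * Real.pi) ^ m, by positivity, fun ρ hρ ξ => ?_⟩
  have hnorm : ‖(2 * Real.pi * ρ) • ξ‖ ^ m = (2 * Real.pi) ^ m * (ρ ^ m * ‖ξ‖ ^ m) := by
    rw [norm_smul, Real.norm_of_nonneg (by positivity), mul_assoc,
      Real.mul_rpow (by positivity) (by positivity), Real.mul_rpow hρ (norm_nonneg ξ)]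
  rw [le_div_iff₀ (by positivity)]
  calc |sphereTransform d ((2 * Real.pi * ρ) • ξ)| * ‖𝓕 ψ₀ ξ‖ * ρ ^ m * (2 * Real.pi) ^ m
      ≤ |sphereTransform d ((2 * Real.pi * ρ) • ξ)| * (C * ‖ξ‖ ^ m) * ρ ^ m
          * (2 * Real.pi) ^ m := by
        gcongr
        exact hC ξ
    _ = C * (|sphereTransform d ((2 * Real.pi * ρ) • ξ)| * ‖(2 * Real.pi * ρ) • ξ‖ ^ m) := by
        rw [hnorm]; ring
    _ ≤ C * K := by gcongr; exact hK _

lemma exists_abs_sphereSymbol_mul_norm_fourier_le (hψ : Admissible d ψ₀) (hd : 1 ≤ d) :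
    ∃ K, 0 ≤ K ∧ ∀ r, 0 ≤ r → ∀ ξ,
      |sphereSymbol d r ξ| * ‖𝓕 ψ₀ ξ‖ ≤ K * r ^ (((d : ℝ) - 1) / 2) := by
  obtain ⟨K, hK0, hK⟩ := hψ.exists_abs_sphereTransform_mul_norm_fourier_le hd
  refine ⟨K, hK0, fun r hr ξ => ?_⟩
  calc |sphereSymbol d r ξ| * ‖𝓕 ψ₀ ξ‖
      = |sphereTransform d ((2 * Real.pi * r) • ξ)| * ‖𝓕 ψ₀ ξ‖ * r ^ (((d : ℝ) - 1) / 2)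
          * r ^ (((d : ℝ) - 1) / 2) := by
        rw [sphereSymbol, abs_mul, abs_of_nonneg (by positivity), pow_sub_one_eq_rpow_sq hd hr]
        ring
    _ ≤ K * r ^ (((d : ℝ) - 1) / 2) := by gcongr; exact hK r hr ξ

lemma integrable_fourier_Fyr (hψ : Admissible d ψ₀) (hd : 1 ≤ d) (y : Ed d) {r : ℝ} (hr : 0 < r) :
    Integrable (𝓕 (Fyr d ψ₀ y r)) := by
  obtain ⟨K, -, hK⟩ := hψ.exists_abs_sphereSymbol_mul_norm_fourier_le hd
  have hsymbol := continuous_sphereSymbol (d := d) r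
  have hfourier := hψ.continuous_fourier
  rw [show 𝓕 (Fyr d ψ₀ y r) = _ from funext (hψ.fourier_Fyr y hr)]
  refine (hψ.integrable_fourier.norm.const_mul (K * r ^ (((d : ℝ) - 1) / 2))).mono'
    (Continuous.aestronglyMeasurable (by fun_prop)) (.of_forall fun ξ => ?_)
  rw [norm_mul, norm_planeWave, one_mul, norm_mul, norm_pow, sq, ← mul_assoc, Complex.norm_real,
    Real.norm_eq_abs]
  exact mul_le_mul_of_nonneg_right (hK r hr.le ξ) (norm_nonneg _)

lemma integral_conj_Fyr_mul_Fyr (hψ : Admissible d ψ₀) (hd : 1 ≤ d) (y y' : Ed d) {r r' : ℝ}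
    (hr : 0 < r) (hr' : 0 < r') :
    ∫ x, conj (Fyr d ψ₀ y r x) * Fyr d ψ₀ y' r' x =
      ∫ ξ, planeWave (y' - y) ξ *
        ((sphereSymbol d r ξ * sphereSymbol d r' ξ * ‖𝓕 ψ₀ ξ‖ ^ 4 : ℝ) : ℂ) := by
  rw [parseval (hψ.integrable_Fyr y hr) (hψ.integrable_Fyr y' hr') (hψ.continuous_Fyr y' hr')
    (hψ.integrable_fourier_Fyr hd y' hr')]
  congr 1 with ξ
  have habs : conj (𝓕 ψ₀ ξ) ^ 2 * 𝓕 ψ₀ ξ ^ 2 = ‖𝓕 ψ₀ ξ‖ ^ 4 := by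
    rw [← mul_pow, Complex.conj_mul']
    ring
  rw [hψ.fourier_Fyr y hr, hψ.fourier_Fyr y' hr', sub_eq_add_neg, planeWave_add, ← conj_planeWave]
  simp only [map_mul, map_pow, Complex.conj_ofReal, Complex.ofReal_mul, Complex.ofReal_pow, ← habs]
  ring

lemma exists_norm_integral_planeWave_mul_le (hψ : Admissible d ψ₀) (hd : 1 ≤ d) :
    ∃ K, 0 ≤ K ∧ ∀ (Q : Ed d → ℂ) (A : ℝ), 0 ≤ A → Continuous Q →
      (∀ ξ η, ‖ξ‖ = ‖η‖ → Q ξ = Q η) → (∀ ξ, ‖Q ξ‖ ≤ A * ‖𝓕 ψ₀ ξ‖ ^ 2) → ∀ v,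
        (sphereM d 1).real univ * ‖∫ ξ, planeWave v ξ * Q ξ‖ * (1 + ‖v‖) ^ (((d : ℝ) - 1) / 2) ≤
          K * A := by
  have hd' : (1 : ℝ) ≤ d := by exact_mod_cast hd
  obtain ⟨L, hL0, hL⟩ := hψ.exists_abs_sphereTransform_mul_norm_fourier_le hd
  set m := ((d : ℝ) - 1) / 2 with hm
  set S := (sphereM d 1).real univ
  have hsq : Integrable fun ξ => ‖𝓕 ψ₀ ξ‖ ^ 2 :=
    (hψ.memLp_fourier 2).integrable_norm_pow two_ne_zero
  refine ⟨2 ^ m * (S * (∫ ξ, ‖𝓕 ψ₀ ξ‖ ^ 2) + L * ∫ ξ, ‖𝓕 ψ₀ ξ‖), by positivity,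
    fun Q A hA hQ hrad hle v => ?_⟩
  set J := ∫ ξ, planeWave v ξ * Q ξ
  have htrivial : ‖J‖ ≤ A * ∫ ξ, ‖𝓕 ψ₀ ξ‖ ^ 2 := by
    rw [← integral_const_mul]
    refine norm_integral_le_of_norm_le (hsq.const_mul A) (.of_forall fun ξ => ?_)
    rw [norm_mul, norm_planeWave, one_mul]
    exact hle ξ
  have haveraged : S * ‖J‖ * ‖v‖ ^ m ≤ L * A * ∫ ξ, ‖𝓕 ψ₀ ξ‖ := by
    have hQi : Integrable Q :=
      (hsq.const_mul A).mono' hQ.aestronglyMeasurable (.of_forall hle)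
    have hSJ : S * ‖J‖ = ‖∫ ξ, (sphereTransform d ((2 * Real.pi * ‖v‖) • ξ) : ℂ) * Q ξ‖ := by
      rw [← measure_sphereM_mul_integral_planeWave_mul hQi hrad v, norm_mul, Complex.norm_real,
        Real.norm_of_nonneg measureReal_nonneg]
    rw [hSJ, mul_comm, ← Real.norm_of_nonneg (Real.rpow_nonneg (norm_nonneg v) m), ← norm_smul,
      ← integral_smul, ← integral_const_mul]
    refine norm_integral_le_of_norm_le (hψ.integrable_fourier.norm.const_mul (L * A))
      (.of_forall fun ξ => ?_)
    rw [norm_smul, norm_mul, Complex.norm_real, Real.norm_eq_abs (sphereTransform _ _),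
      Real.norm_of_nonneg (Real.rpow_nonneg (norm_nonneg v) m)]
    calc ‖v‖ ^ m * (|sphereTransform d ((2 * Real.pi * ‖v‖) • ξ)| * ‖Q ξ‖)
        ≤ ‖v‖ ^ m * (|sphereTransform d ((2 * Real.pi * ‖v‖) • ξ)| * (A * ‖𝓕 ψ₀ ξ‖ ^ 2)) := by
          gcongr
          exact hle ξ
      _ = |sphereTransform d ((2 * Real.pi * ‖v‖) • ξ)| * ‖𝓕 ψ₀ ξ‖ * ‖v‖ ^ m
            * (A * ‖𝓕 ψ₀ ξ‖) := by ring
      _ ≤ L * (A * ‖𝓕 ψ₀ ξ‖) := by gcongr; exact hL _ (norm_nonneg v) ξ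
      _ = L * A * ‖𝓕 ψ₀ ξ‖ := by ring
  calc S * ‖J‖ * (1 + ‖v‖) ^ m ≤ S * ‖J‖ * (2 ^ m * (1 + ‖v‖ ^ m)) := by
        gcongr
        exact one_add_rpow_le_two_rpow_mul (norm_nonneg v) (by linarith)
    _ = 2 ^ m * (S * ‖J‖ + S * ‖J‖ * ‖v‖ ^ m) := by ring
    _ ≤ 2 ^ m * (S * (A * ∫ ξ, ‖𝓕 ψ₀ ξ‖ ^ 2) + L * A * ∫ ξ, ‖𝓕 ψ₀ ξ‖) := by gcongr
    _ = 2 ^ m * (S * (∫ ξ, ‖𝓕 ψ₀ ξ‖ ^ 2) + L * ∫ ξ, ‖𝓕 ψ₀ ξ‖) * A := by ring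

lemma exists_norm_integral_conj_Fyr_mul_Fyr_le (hψ : Admissible d ψ₀) (hd : 1 ≤ d) :
    ∃ K, 0 ≤ K ∧ ∀ (y y' : Ed d) (r r' : ℝ), 0 < r → 0 < r' →
      ‖∫ x, conj (Fyr d ψ₀ y r x) * Fyr d ψ₀ y' r' x‖ * (1 + dist y y') ^ (((d : ℝ) - 1) / 2) ≤
        K * (r * r') ^ (((d : ℝ) - 1) / 2) := by
  obtain ⟨K₁, hK₁, hsymbol⟩ := hψ.exists_abs_sphereSymbol_mul_norm_fourier_le hd
  obtain ⟨K₂, hK₂, hdecay⟩ := hψ.exists_norm_integral_planeWave_mul_le hd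
  set m := ((d : ℝ) - 1) / 2
  set S := (sphereM d 1).real univ
  refine ⟨K₂ * (K₁ * K₁) / S, by positivity, fun y y' r r' hr hr' => ?_⟩
  rw [hψ.integral_conj_Fyr_mul_Fyr hd y y' hr hr', dist_comm, dist_eq_norm]
  rcases (measureReal_nonneg : 0 ≤ S).eq_or_lt with hS | hS
  · have hzero : ∀ ξ, sphereTransform d ξ = 0 := fun ξ =>
      abs_nonpos_iff.mp ((abs_sphereTransform_le ξ).trans_eq hS.symm)
    simpa [sphereSymbol, hzero] using by positivity
  have hcont := continuous_sphereSymbol (d := d) r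
  have hcont' := continuous_sphereSymbol (d := d) r'
  have hfourier := hψ.continuous_fourier
  have hbound := hdecay
    (fun ξ => ((sphereSymbol d r ξ * sphereSymbol d r' ξ * ‖𝓕 ψ₀ ξ‖ ^ 4 : ℝ) : ℂ))
    (K₁ * r ^ m * (K₁ * r' ^ m)) (by positivity) (by fun_prop)
    (fun ξ η h => by rw [sphereSymbol_eq_of_norm_eq r h, sphereSymbol_eq_of_norm_eq r' h,
      hψ.fourier_eq_of_norm_eq h])
    (fun ξ => by
      rw [Complex.norm_real, norm_mul, norm_mul, norm_pow, norm_norm, Real.norm_eq_abs,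
        Real.norm_eq_abs]
      calc |sphereSymbol d r ξ| * |sphereSymbol d r' ξ| * ‖𝓕 ψ₀ ξ‖ ^ 4
          = (|sphereSymbol d r ξ| * ‖𝓕 ψ₀ ξ‖) * (|sphereSymbol d r' ξ| * ‖𝓕 ψ₀ ξ‖)
              * ‖𝓕 ψ₀ ξ‖ ^ 2 := by ring
        _ ≤ K₁ * r ^ m * (K₁ * r' ^ m) * ‖𝓕 ψ₀ ξ‖ ^ 2 := by
            gcongr ?_ * ?_ * _
            exacts [hsymbol r hr.le ξ, hsymbol r' hr'.le ξ])
    (y' - y)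
  rw [div_mul_eq_mul_div, le_div_iff₀ hS, Real.mul_rpow hr.le hr'.le]
  linarith

lemma abs_sub_le_and_dist_le_of_integral_conj_Fyr_mul_Fyr_ne_zero (hψ : Admissible d ψ₀)
    {y y' : Ed d} {r r' : ℝ} (h : ∫ x, conj (Fyr d ψ₀ y r x) * Fyr d ψ₀ y' r' x ≠ 0) :
    |r - r'| ≤ dist y y' + 2 / 5 ∧ dist y y' ≤ r + r' + 2 / 5 := by
  obtain ⟨x, hx⟩ : ∃ x, conj (Fyr d ψ₀ y r x) * Fyr d ψ₀ y' r' x ≠ 0 := by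
    contrapose! h
    simp only [h, integral_zero]
  have h₁ := hψ.abs_norm_sub_sub_le_of_Fyr_ne_zero
    ((map_ne_zero_iff _ (RingHom.injective _)).mp (left_ne_zero_of_mul hx))
  have h₂ := hψ.abs_norm_sub_sub_le_of_Fyr_ne_zero (right_ne_zero_of_mul hx)
  rw [← dist_eq_norm, abs_le] at h₁ h₂
  refine ⟨abs_le.mpr ⟨?_, ?_⟩, ?_⟩ <;>
    linarith [dist_triangle_left y y' x, dist_triangle x y y', dist_triangle x y' y,
      dist_comm y y']

lemma integral_norm_sq_sum_translates (hψ : Admissible d ψ₀) {s : Finset (Ed d)}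
    (hs : ∀ y ∈ s, ∀ y' ∈ s, y ≠ y' → 1 ≤ dist y y') (c : Ed d → ℂ) :
    ∫ x, ‖∑ y ∈ s, c y * ψ₀ (x - y)‖ ^ 2 = (∫ x, ‖ψ₀ x‖ ^ 2) * ∑ y ∈ s, ‖c y‖ ^ 2 := by
  have hsq : Integrable fun x => ‖ψ₀ x‖ ^ 2 :=
    (hψ.continuous.memLp_of_hasCompactSupport hψ.hasCompactSupport).integrable_norm_pow two_ne_zero
  have hdisjoint : ∀ x, ∀ y ∈ s, ∀ y' ∈ s, c y * ψ₀ (x - y) ≠ 0 → c y' * ψ₀ (x - y') ≠ 0 →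
      y = y' := fun x y hy y' hy' hne hne' => by
    by_contra hyy'
    have h := hψ.norm_le_of_ne_zero (right_ne_zero_of_mul hne)
    have h' := hψ.norm_le_of_ne_zero (right_ne_zero_of_mul hne')
    rw [← dist_eq_norm] at h h'
    linarith [dist_triangle_left y y' x, hs y hy y' hy' hyy']
  calc ∫ x, ‖∑ y ∈ s, c y * ψ₀ (x - y)‖ ^ 2
      = ∫ x, ∑ y ∈ s, ‖c y‖ ^ 2 * ‖ψ₀ (x - y)‖ ^ 2 := by
        simp only [norm_sum_sq_eq_sum_norm_sq (hdisjoint _), norm_mul, mul_pow]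
    _ = ∑ y ∈ s, ‖c y‖ ^ 2 * ∫ x, ‖ψ₀ x‖ ^ 2 := by
        rw [integral_finsetSum _ fun y _ => (hsq.comp_sub_right y).const_mul _]
        simp only [integral_const_mul, integral_sub_right_eq_self fun x => ‖ψ₀ x‖ ^ 2]
    _ = (∫ x, ‖ψ₀ x‖ ^ 2) * ∑ y ∈ s, ‖c y‖ ^ 2 := by rw [← Finset.sum_mul, mul_comm]

lemma memLp_fourier_sum_translates (hψ : Admissible d ψ₀) (s : Finset (Ed d)) (c : Ed d → ℂ)
    (p : ℝ≥0∞) : MemLp (𝓕 fun x => ∑ y ∈ s, c y * ψ₀ (x - y)) p := by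
  rw [show 𝓕 (fun x => ∑ y ∈ s, c y * ψ₀ (x - y)) = _ from funext
    (fourier_finset_sum_mul s c fun y _ => hψ.integrable.comp_sub_right y)]
  have hfourier := hψ.continuous_fourier
  simp only [fourier_comp_sub_right]
  refine memLp_finsetSum s fun y _ => MemLp.const_mul ?_ (c y)
  exact (hψ.memLp_fourier p).of_le (Continuous.aestronglyMeasurable (by fun_prop))
    (.of_forall fun ξ => by rw [norm_mul, norm_planeWave, one_mul])

lemma fourier_sum_Fyr (hψ : Admissible d ψ₀) (s : Finset (Ed d)) (c : Ed d → ℂ) {r : ℝ}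
    (hr : 0 < r) (ξ : Ed d) :
    𝓕 (fun x => ∑ y ∈ s, c y * Fyr d ψ₀ y r x) ξ =
      sphereSymbol d r ξ * 𝓕 ψ₀ ξ * 𝓕 (fun x => ∑ y ∈ s, c y * ψ₀ (x - y)) ξ := by
  rw [fourier_finset_sum_mul s c fun y _ => hψ.integrable_Fyr y hr,
    fourier_finset_sum_mul s c fun y _ => hψ.integrable.comp_sub_right y, Finset.mul_sum]
  refine Finset.sum_congr rfl fun y _ => ?_
  rw [hψ.fourier_Fyr y hr, fourier_comp_sub_right]
  ring

-- For a single radius the multiplier `sphereSymbol d r * 𝓕 ψ₀` reduces the sum to separated, hence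
-- orthogonal, translates of `ψ₀`.
lemma exists_integral_norm_sq_sum_Fyr_le (hψ : Admissible d ψ₀) (hd : 1 ≤ d) :
    ∃ K, 0 ≤ K ∧ ∀ r, 0 < r → ∀ s : Finset (Ed d),
      (∀ y ∈ s, ∀ y' ∈ s, y ≠ y' → 1 ≤ dist y y') → ∀ c : Ed d → ℂ,
        ∫ x, ‖∑ y ∈ s, c y * Fyr d ψ₀ y r x‖ ^ 2 ≤ K * r ^ (d - 1) * ∑ y ∈ s, ‖c y‖ ^ 2 := by
  obtain ⟨K, -, hK⟩ := hψ.exists_abs_sphereSymbol_mul_norm_fourier_le hd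
  refine ⟨K ^ 2 * ∫ x, ‖ψ₀ x‖ ^ 2, by positivity, fun r hr s hs c => ?_⟩
  set F : Ed d → ℂ := fun x => ∑ y ∈ s, c y * Fyr d ψ₀ y r x
  set g : Ed d → ℂ := fun x => ∑ y ∈ s, c y * ψ₀ (x - y)
  have hFint : Integrable F :=
    integrable_finsetSum _ fun y _ => (hψ.integrable_Fyr y hr).const_mul _
  have hFcont : Continuous F :=
    continuous_finsetSum _ fun y _ => (hψ.continuous_Fyr y hr).const_mul _
  have hFfourier : Integrable (𝓕 F) := by
    rw [show 𝓕 F = _ from funext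
      (fourier_finset_sum_mul s c fun y _ => hψ.integrable_Fyr y hr)]
    exact integrable_finsetSum _ fun y _ => (hψ.integrable_fourier_Fyr hd y hr).const_mul _
  have hgint : Integrable g :=
    integrable_finsetSum _ fun y _ => (hψ.integrable.comp_sub_right y).const_mul _
  have hgcont : Continuous g := by
    have := hψ.continuous
    fun_prop
  have hgfourier := hψ.memLp_fourier_sum_translates s c
  have hpointwise : ∀ ξ, ‖𝓕 F ξ‖ ^ 2 ≤ K ^ 2 * r ^ (d - 1) * ‖𝓕 g ξ‖ ^ 2 := fun ξ => by
    rw [hψ.fourier_sum_Fyr s c hr, pow_sub_one_eq_rpow_sq hd hr.le, ← mul_pow, ← mul_pow,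
      norm_mul, norm_mul, Complex.norm_real, Real.norm_eq_abs]
    gcongr ?_ ^ 2
    exact mul_le_mul_of_nonneg_right (hK r hr.le ξ) (norm_nonneg _)
  calc ∫ x, ‖F x‖ ^ 2 = ∫ ξ, ‖𝓕 F ξ‖ ^ 2 := plancherel hFint hFcont hFfourier
    _ ≤ ∫ ξ, K ^ 2 * r ^ (d - 1) * ‖𝓕 g ξ‖ ^ 2 :=
        integral_mono_of_nonneg (.of_forall fun ξ => by positivity)
          (((hgfourier 2).integrable_norm_pow two_ne_zero).const_mul _) (.of_forall hpointwise)
    _ = K ^ 2 * r ^ (d - 1) * ∫ x, ‖g x‖ ^ 2 := by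
        rw [integral_const_mul, plancherel hgint hgcont
          (memLp_one_iff_integrable.mp (hgfourier 1))]
    _ = K ^ 2 * (∫ x, ‖ψ₀ x‖ ^ 2) * r ^ (d - 1) * ∑ y ∈ s, ‖c y‖ ^ 2 := by
        rw [hψ.integral_norm_sq_sum_translates hs]
        ring

end Admissible

section AlmostOrthogonality

variable {H : Type*} [NormedAddCommGroup H] [InnerProductSpace ℂ H] {ι κ : Type*}

lemma norm_inner_sum_sum_le (s t : Finset ι) (v : ι → H) :
    ‖inner ℂ (∑ i ∈ s, v i) (∑ j ∈ t, v j)‖ ≤ ∑ i ∈ s, ∑ j ∈ t, ‖inner ℂ (v i) (v j)‖ := by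
  simp_rw [sum_inner, inner_sum]
  exact norm_sum_le_of_le _ fun i _ => norm_sum_le _ _

lemma norm_inner_smul_smul_le {a b : ℂ} (ha : ‖a‖ ≤ 1) (hb : ‖b‖ ≤ 1) (v w : H) :
    ‖inner ℂ (a • v) (b • w)‖ ≤ ‖inner ℂ v w‖ := by
  rw [inner_smul_left, inner_smul_right, ← mul_assoc, norm_mul, norm_mul, RCLike.norm_conj]
  exact mul_le_of_le_one_left (norm_nonneg _) (mul_le_one₀ ha (norm_nonneg _) hb)

lemma sum_filter_near_norm_inner_le (s : Finset ι) (v : ι → H) {near : ι → ι → Prop}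
    [DecidableRel near] (hsymm : ∀ i j, near i j → near j i) {M : ℝ}
    (hM : ∀ i ∈ s, ((s.filter (near i)).card : ℝ) ≤ M) :
    ∑ i ∈ s, ∑ j ∈ s.filter (near i), ‖inner ℂ (v i) (v j)‖ ≤ M * ∑ i ∈ s, ‖v i‖ ^ 2 := by
  have amgm (i j : ι) : ‖inner ℂ (v i) (v j)‖ ≤ ‖v i‖ ^ 2 / 2 + ‖v j‖ ^ 2 / 2 := by
    nlinarith [norm_inner_le_norm (𝕜 := ℂ) (v i) (v j), sq_nonneg (‖v i‖ - ‖v j‖)]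
  have hswap : ∑ i ∈ s, ∑ j ∈ s.filter (near i), ‖v j‖ ^ 2 / 2 =
      ∑ i ∈ s, ∑ j ∈ s.filter (near i), ‖v i‖ ^ 2 / 2 :=
    Finset.sum_comm' fun i j => by
      simp only [Finset.mem_filter]
      exact ⟨fun h => ⟨⟨h.1, hsymm _ _ h.2.2⟩, h.2.1⟩, fun h => ⟨h.1.1, h.2, hsymm _ _ h.1.2⟩⟩
  calc ∑ i ∈ s, ∑ j ∈ s.filter (near i), ‖inner ℂ (v i) (v j)‖
      ≤ ∑ i ∈ s, ∑ j ∈ s.filter (near i), (‖v i‖ ^ 2 / 2 + ‖v j‖ ^ 2 / 2) :=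
        Finset.sum_le_sum fun i _ => Finset.sum_le_sum fun j _ => amgm i j
    _ = ∑ i ∈ s, (s.filter (near i)).card * ‖v i‖ ^ 2 := by
        simp_rw [Finset.sum_add_distrib]
        rw [hswap, ← Finset.sum_add_distrib]
        refine Finset.sum_congr rfl fun i _ => ?_
        rw [Finset.sum_const, nsmul_eq_mul]
        ring
    _ ≤ M * ∑ i ∈ s, ‖v i‖ ^ 2 := by
        rw [Finset.mul_sum]
        exact Finset.sum_le_sum fun i hi => mul_le_mul_of_nonneg_right (hM i hi) (sq_nonneg _)

lemma norm_sum_sq_le_near_add_far (s : Finset ι) (v : ι → H) {near : ι → ι → Prop}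
    [DecidableRel near] (hsymm : ∀ i j, near i j → near j i) {M : ℝ}
    (hM : ∀ i ∈ s, ((s.filter (near i)).card : ℝ) ≤ M) :
    ‖∑ i ∈ s, v i‖ ^ 2 ≤ M * ∑ i ∈ s, ‖v i‖ ^ 2 +
      ∑ i ∈ s, ∑ j ∈ s with ¬ near i j, ‖inner ℂ (v i) (v j)‖ := by
  have hsq : ‖∑ i ∈ s, v i‖ ^ 2 = ‖inner ℂ (∑ i ∈ s, v i) (∑ i ∈ s, v i)‖ := by
    rw [inner_self_eq_norm_sq_to_K]
    simp
  calc ‖∑ i ∈ s, v i‖ ^ 2 ≤ ∑ i ∈ s, ∑ j ∈ s, ‖inner ℂ (v i) (v j)‖ :=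
        hsq ▸ norm_inner_sum_sum_le s s v
    _ = ∑ i ∈ s, ∑ j ∈ s.filter (near i), ‖inner ℂ (v i) (v j)‖ +
          ∑ i ∈ s, ∑ j ∈ s with ¬ near i j, ‖inner ℂ (v i) (v j)‖ := by
        rw [← Finset.sum_add_distrib]
        exact Finset.sum_congr rfl fun i _ => (Finset.sum_filter_add_sum_filter_not ..).symm
    _ ≤ _ := by
        gcongr
        exact sum_filter_near_norm_inner_le s v hsymm hM

lemma norm_sum_sq_le_fiberwise [DecidableEq κ] (s : Finset ι) (π : ι → κ) (v : ι → H)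
    {near : κ → κ → Prop} [DecidableRel near] (hsymm : ∀ k l, near k l → near l k) {M : ℝ}
    (hM₀ : 0 ≤ M) (hM : ∀ k ∈ s.image π, (((s.image π).filter (near k)).card : ℝ) ≤ M)
    {N : ι → ℝ} (hN : ∀ k ∈ s.image π,
      ‖∑ i ∈ s with π i = k, v i‖ ^ 2 ≤ ∑ i ∈ s with π i = k, N i) :
    ‖∑ i ∈ s, v i‖ ^ 2 ≤ M * ∑ i ∈ s, N i +
      ∑ i ∈ s, ∑ j ∈ s with ¬ near (π i) (π j), ‖inner ℂ (v i) (v j)‖ := by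
  have hmaps : ∀ i ∈ s, π i ∈ s.image π := fun i hi => Finset.mem_image_of_mem _ hi
  have hfar (k : κ) (g : ι → ℝ) : ∑ l ∈ s.image π with ¬ near k l, ∑ j ∈ s with π j = l, g j =
      ∑ j ∈ s with ¬ near k (π j), g j := by
    rw [Finset.sum_fiberwise_eq_sum_filter]
    refine Finset.sum_congr (Finset.filter_congr fun j hj => ?_) fun _ _ => rfl
    simp only [Finset.mem_filter, hmaps j hj, true_and]
  rw [← Finset.sum_fiberwise_of_maps_to hmaps, ← Finset.sum_fiberwise_of_maps_to hmaps (f := N)]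
  refine (norm_sum_sq_le_near_add_far (s.image π) _ hsymm hM).trans ?_
  gcongr with k hk
  · exact hN k hk
  · rw [← Finset.sum_fiberwise_of_maps_to hmaps]
    gcongr with k _
    calc _ ≤ ∑ l ∈ s.image π with ¬ near k l, ∑ i ∈ s with π i = k, ∑ j ∈ s with π j = l,
          ‖inner ℂ (v i) (v j)‖ := Finset.sum_le_sum fun l _ => norm_inner_sum_sum_le _ _ v
      _ = ∑ i ∈ s with π i = k, ∑ j ∈ s with ¬ near (π i) (π j), ‖inner ℂ (v i) (v j)‖ := by
          rw [Finset.sum_comm]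
          refine Finset.sum_congr rfl fun i hi => ?_
          rw [hfar, (Finset.mem_filter.mp hi).2]

end AlmostOrthogonality

section Counting

/-- The dyadic scale of a radius `r ≥ 1`: the `k : ℕ` with `2 ^ k ≤ r < 2 ^ (k + 1)`. -/
def dyadicScale (r : ℝ) : ℕ := Nat.log 2 ⌊r⌋₊

lemma two_pow_dyadicScale_le {r : ℝ} (hr : 1 ≤ r) : (2 : ℝ) ^ dyadicScale r ≤ r :=
  calc (2 : ℝ) ^ dyadicScale r ≤ (⌊r⌋₊ : ℝ) := by
        exact_mod_cast Nat.pow_log_le_self 2 (Nat.floor_pos.mpr hr).ne'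
    _ ≤ r := Nat.floor_le (by linarith)

lemma lt_two_mul_two_pow_dyadicScale (r : ℝ) : r < 2 * 2 ^ dyadicScale r :=
  calc r < ⌊r⌋₊ + 1 := Nat.lt_floor_add_one _
    _ ≤ 2 ^ (dyadicScale r + 1) := by
        exact_mod_cast Nat.lt_pow_succ_log_self one_lt_two ⌊r⌋₊
    _ = 2 * 2 ^ dyadicScale r := pow_succ' _ _

lemma sum_two_pow_rpow_neg_half_le (s : Finset ℕ) :
    ∑ l ∈ s, ((2 : ℝ) ^ l) ^ (-(1 / 2) : ℝ) ≤ 4 := by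
  set q : ℝ := 2 ^ (-(1 / 2) : ℝ) with hq
  have hq₀ : 0 ≤ q := by positivity
  have hq_sq : q ^ 2 = 1 / 2 := by
    rw [hq, Real.rpow_pow_comm zero_le_two, ← Real.rpow_natCast, ← Real.rpow_mul zero_le_two]
    norm_num
  have hq_lt : q < 1 := by nlinarith
  calc ∑ l ∈ s, ((2 : ℝ) ^ l) ^ (-(1 / 2) : ℝ) = ∑ l ∈ s, q ^ l :=
        Finset.sum_congr rfl fun l _ => (Real.rpow_pow_comm zero_le_two _ _).symm
    _ ≤ ∑' l, q ^ l := (summable_geometric_of_lt_one hq₀ hq_lt).sum_le_tsum s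
        fun l _ => by positivity
    _ = (1 - q)⁻¹ := tsum_geometric_of_lt_one hq₀ hq_lt
    _ ≤ 4 := inv_le_of_inv_le₀ (by norm_num) (by nlinarith)

lemma sum_rpow_neg_le_of_card_le {ι : Type*} {S : Finset ι} {D : ι → ℝ} {U ρ m : ℝ}
    (hρ : 0 < ρ) (hm : 0 ≤ m) (hD : ∀ t ∈ S, ρ ≤ D t) (hcard : (S.card : ℝ) ≤ U * (2 * ρ)) :
    ∑ t ∈ S, D t ^ (-m) ≤ 2 * U * ρ ^ (1 - m) :=
  calc ∑ t ∈ S, D t ^ (-m) ≤ ∑ _t ∈ S, ρ ^ (-m) :=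
        Finset.sum_le_sum fun t ht =>
          Real.rpow_le_rpow_of_nonpos hρ (hD t ht) (neg_nonpos.mpr hm)
    _ = S.card * ρ ^ (-m) := by rw [Finset.sum_const, nsmul_eq_mul]
    _ ≤ U * (2 * ρ) * ρ ^ (-m) := by gcongr
    _ = 2 * U * (ρ * ρ ^ (-m)) := by ring
    _ = 2 * U * ρ ^ (1 - m) := by rw [sub_eq_add_neg, Real.rpow_add hρ, Real.rpow_one]

lemma sum_rpow_neg_le_of_card_filter_le {ι : Type*} {S : Finset ι} {D : ι → ℝ} {U L R m : ℝ}
    (hL : 1 ≤ L) (hm : 3 / 2 ≤ m) (hU : 0 ≤ U)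
    (hcard : ∀ ρ, 1 ≤ ρ → ρ ≤ R → ((S.filter (D · ≤ ρ)).card : ℝ) ≤ U * ρ)
    (hD : ∀ t ∈ S, L ≤ D t ∧ 2 * D t ≤ R) :
    ∑ t ∈ S, D t ^ (-m) ≤ 8 * U * L ^ (1 - m) := by
  have hL₀ : 0 < L := by linarith
  set shell : ι → ℕ := fun t => dyadicScale (D t / L)
  have hshell_le : ∀ t ∈ S, 2 ^ shell t * L ≤ D t := fun t ht =>
    (le_div_iff₀ hL₀).mp (two_pow_dyadicScale_le ((one_le_div hL₀).mpr (hD t ht).1))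
  have hle_shell (t : ι) : D t ≤ 2 * (2 ^ shell t * L) := by
    rw [← mul_assoc, ← div_le_iff₀ hL₀]
    exact (lt_two_mul_two_pow_dyadicScale _).le
  have hsum_shell : ∀ l ∈ S.image shell, ∑ t ∈ S with shell t = l, D t ^ (-m) ≤
      2 * U * L ^ (1 - m) * ((2 : ℝ) ^ l) ^ (-(1 / 2) : ℝ) := by
    simp only [Finset.mem_image, forall_exists_index, and_imp]
    rintro _ t₀ ht₀ rfl
    have hpow : (1 : ℝ) ≤ 2 ^ shell t₀ := one_le_pow₀ one_le_two
    have hshell_card : ((S.filter (shell · = shell t₀)).card : ℝ) ≤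
        U * (2 * (2 ^ shell t₀ * L)) := by
      refine le_trans ?_ (hcard _ (by nlinarith) (by linarith [hshell_le t₀ ht₀, hD t₀ ht₀]))
      gcongr with t
      rintro ht
      rw [← ht]
      exact hle_shell t
    calc ∑ t ∈ S with shell t = shell t₀, D t ^ (-m)
        ≤ 2 * U * (2 ^ shell t₀ * L) ^ (1 - m) := by
          refine sum_rpow_neg_le_of_card_le (by positivity) (by linarith) (fun t ht => ?_)
            hshell_card
          obtain ⟨htS, ht⟩ := Finset.mem_filter.mp ht
          exact ht ▸ hshell_le t htS
      _ = 2 * U * L ^ (1 - m) * ((2 : ℝ) ^ shell t₀) ^ (1 - m) := by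
          rw [Real.mul_rpow (by positivity) hL₀.le]
          ring
      _ ≤ _ := by
          gcongr
          linarith
  rw [← Finset.sum_fiberwise_of_maps_to fun t ht => Finset.mem_image_of_mem shell ht]
  calc _ ≤ ∑ l ∈ S.image shell, 2 * U * L ^ (1 - m) * ((2 : ℝ) ^ l) ^ (-(1 / 2) : ℝ) :=
        Finset.sum_le_sum hsum_shell
    _ ≤ 2 * U * L ^ (1 - m) * 4 := by
        rw [← Finset.mul_sum]
        gcongr
        exact sum_two_pow_rpow_neg_half_le _
    _ = 8 * U * L ^ (1 - m) := by ring

lemma card_filter_abs_sub_le {S : Finset ℝ} (hS : ∀ r ∈ S, ∀ r' ∈ S, r ≠ r' → 1 ≤ |r - r'|)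
    (r : ℝ) {L : ℝ} (hL : 0 ≤ L) : ((S.filter (|r - ·| ≤ L)).card : ℝ) ≤ 2 * L + 1 := by
  set bin : ℝ → ℕ := fun r' => ⌊r' - (r - L)⌋₊
  have hbin {r' : ℝ} (hr' : r' ∈ S.filter (|r - ·| ≤ L)) :
      r' ∈ S ∧ (bin r' : ℝ) ≤ r' - (r - L) ∧ r' - (r - L) < bin r' + 1 ∧ bin r' ≤ ⌊2 * L⌋₊ := by
    obtain ⟨hS', habs⟩ := Finset.mem_filter.mp hr'
    have habs := abs_le.mp habs
    exact ⟨hS', Nat.floor_le (by linarith), Nat.lt_floor_add_one _,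
      Nat.floor_le_floor (by linarith)⟩
  have hcard : (S.filter (|r - ·| ≤ L)).card ≤ (Finset.range (⌊2 * L⌋₊ + 1)).card := by
    refine Finset.card_le_card_of_injOn bin (fun r' hr' => ?_) fun a ha b hb hab => ?_
    · simpa [Nat.lt_succ_iff] using (hbin hr').2.2.2
    · obtain ⟨haS, ha₁, ha₂, -⟩ := hbin ha
      obtain ⟨hbS, hb₁, hb₂, -⟩ := hbin hb
      rw [hab] at ha₁ ha₂
      by_contra hne
      exact (hS a haS b hbS hne).not_gt (abs_lt.mpr ⟨by linarith, by linarith⟩)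
  rw [Finset.card_range] at hcard
  calc ((S.filter (|r - ·| ≤ L)).card : ℝ) ≤ ⌊2 * L⌋₊ + 1 := by exact_mod_cast hcard
    _ ≤ 2 * L + 1 := by
        gcongr
        exact Nat.floor_le (by linarith)

end Counting

section Annulus

variable {E : Type*} [NormedAddCommGroup E] [NormedSpace ℝ E] [FiniteDimensional ℝ E]
  [MeasurableSpace E] [BorelSpace E] (μ : Measure E) [μ.IsAddHaarMeasure]

lemma measureReal_annulus_le [Nontrivial E] (y : E) {r s : ℝ} (hs : 0 ≤ s) (hsr : s ≤ r) :
    μ.real (closedBall y (r + s) \ ball y (r - s)) ≤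
      finrank ℝ E * (r + s) ^ (finrank ℝ E - 1) * (2 * s) * μ.real (ball 0 1) := by
  have hsub : 0 ≤ r - s := by linarith
  have hadd : 0 ≤ r + s := by linarith
  rw [measureReal_sdiff (ball_subset_closedBall.trans (closedBall_subset_closedBall (by linarith)))
      measurableSet_ball measure_closedBall_lt_top.ne, Measure.addHaar_real_closedBall _ _ hadd,
    ← Measure.addHaar_real_closedBall_eq_addHaar_real_ball μ y (r - s),
    Measure.addHaar_real_closedBall _ _ hsub, ← sub_mul]
  gcongr
  have hpow := abs_pow_sub_pow_le (r + s) (r - s) (finrank ℝ E)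
  rw [abs_of_nonneg hsub, abs_of_nonneg hadd, max_eq_left (by linarith),
    abs_of_nonneg (by linarith : 0 ≤ r + s - (r - s))] at hpow
  calc _ ≤ _ := (le_abs_self _).trans hpow
    _ = _ := by ring

lemma sum_measureReal_closedBall_le {ι : Type*} (T : Finset ι) (y : ι → E) {ρ M : ℝ} {S : Set E}
    (hS : MeasurableSet S) (hS_fin : μ S ≠ ∞) (hsub : ∀ i ∈ T, closedBall (y i) ρ ⊆ S)
    (hM : ∀ x, ((T.filter fun i => dist x (y i) ≤ ρ).card : ℝ) ≤ M) :
    ∑ i ∈ T, μ.real (closedBall (y i) ρ) ≤ M * μ.real S := by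
  have hint {B : Set E} (hB : MeasurableSet B) (hB_fin : μ B ≠ ∞) :
      Integrable (B.indicator (1 : E → ℝ)) μ :=
    (integrable_indicator_iff hB).mpr (integrableOn_const hB_fin)
  have hball (i : ι) := hint (measurableSet_closedBall (x := y i) (ε := ρ))
    measure_closedBall_lt_top.ne
  calc ∑ i ∈ T, μ.real (closedBall (y i) ρ)
      = ∫ x, ∑ i ∈ T, (closedBall (y i) ρ).indicator (1 : E → ℝ) x ∂μ := by
        rw [integral_finsetSum _ fun i _ => hball i]
        simp only [integral_indicator_one measurableSet_closedBall]
    _ ≤ ∫ x, M * S.indicator (1 : E → ℝ) x ∂μ := by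
        refine integral_mono (integrable_finsetSum _ fun i _ => hball i)
          ((hint hS hS_fin).const_mul M) fun x => ?_
        by_cases hx : x ∈ S
        · classical
          simpa only [indicator_apply, mem_closedBall, hx, if_true, Pi.one_apply, mul_one,
            Finset.sum_boole] using hM x
        · have hx_notMem : ∀ i ∈ T, x ∉ closedBall (y i) ρ := fun i hi h => hx (hsub i hi h)
          simp [hx, Finset.sum_eq_zero fun i hi => indicator_of_notMem (hx_notMem i hi) _]
    _ = M * μ.real S := by rw [integral_const_mul, integral_indicator_one hS]

lemma card_mul_pow_le_of_abs_dist_sub_le [Nontrivial E] {ι : Type*} (T : Finset ι)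
    (y : ι → E) (y₀ : E) {r w M : ℝ} (hw : 0 < w) (hM₀ : 0 ≤ M) (hr : 4 * w ≤ r)
    (hT : ∀ i ∈ T, |dist (y i) y₀ - r| ≤ 3 * w)
    (hM : ∀ x, ((T.filter fun i => dist x (y i) ≤ w / 2).card : ℝ) ≤ M) :
    T.card * (w / 2) ^ finrank ℝ E ≤
      M * (finrank ℝ E * (2 * r) ^ (finrank ℝ E - 1) * (8 * w)) := by
  set μ : Measure E := Measure.addHaar
  set n := finrank ℝ E
  have hunit : 0 < μ.real (ball 0 1) :=
    ENNReal.toReal_pos (measure_ball_pos _ _ one_pos).ne' measure_ball_lt_top.ne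
  set S := closedBall y₀ (r + 4 * w) \ ball y₀ (r - 4 * w)
  have hsub : ∀ i ∈ T, closedBall (y i) (w / 2) ⊆ S := fun i hi x hx => by
    have habs := abs_le.mp (hT i hi)
    have hle := dist_triangle_left x y₀ (y i)
    have hge := dist_triangle (y i) x y₀
    rw [mem_closedBall] at hx
    rw [dist_comm] at hx
    exact ⟨by rw [mem_closedBall]; linarith, by rw [mem_ball, not_lt]; linarith⟩
  have hvol : T.card * (w / 2) ^ n * μ.real (ball 0 1) ≤ M * μ.real S := by
    refine le_trans (le_of_eq ?_) (sum_measureReal_closedBall_le μ T y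
      (measurableSet_closedBall.diff measurableSet_ball)
      (measure_ne_top_of_subset sdiff_subset measure_closedBall_lt_top.ne) hsub hM)
    simp_rw [Measure.addHaar_real_closedBall μ _ (by positivity : 0 ≤ w / 2)]
    rw [Finset.sum_const, nsmul_eq_mul, mul_assoc]
  refine le_of_mul_le_mul_right ?_ hunit
  calc _ ≤ M * μ.real S := hvol
    _ ≤ M * (n * (r + 4 * w) ^ (n - 1) * (2 * (4 * w)) * μ.real (ball 0 1)) := by
        gcongr
        exact measureReal_annulus_le μ y₀ (by positivity) hr
    _ ≤ M * (n * (2 * r) ^ (n - 1) * (2 * (4 * w)) * μ.real (ball 0 1)) := by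
        have : 0 ≤ r + 4 * w := by linarith
        gcongr
        linarith
    _ = M * (n * (2 * r) ^ (n - 1) * (8 * w)) * μ.real (ball 0 1) := by ring

end Annulus

section Configuration

variable {d : ℕ} {A B : Finset (Ed d × ℝ)} {U : ℝ}

/-- A finite set of pairs (center, radius) contained in a product `𝒴 × ℛ` of `1`-separated sets
with radii at least `1`. -/
structure IsSeparatedConfig (A : Finset (Ed d × ℝ)) : Prop where
  one_le_radius : ∀ e ∈ A, 1 ≤ e.2
  one_le_dist : ∀ e ∈ A, ∀ e' ∈ A, e.1 ≠ e'.1 → 1 ≤ dist e.1 e'.1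
  one_le_abs_sub : ∀ e ∈ A, ∀ e' ∈ A, e.2 ≠ e'.2 → 1 ≤ |e.2 - e'.2|

lemma IsSeparatedConfig.mono (hA : IsSeparatedConfig A) (h : B ⊆ A) : IsSeparatedConfig B :=
  ⟨fun e he => hA.one_le_radius e (h he),
    fun e he e' he' => hA.one_le_dist e (h he) e' (h he'),
    fun e he e' he' => hA.one_le_abs_sub e (h he) e' (h he')⟩

/-- The points of `A` at the dyadic scale of `e` that lie in the ball of radius `ρ` about `e`. -/
def sameScaleBall (A : Finset (Ed d × ℝ)) (e : Ed d × ℝ) (ρ : ℝ) : Finset (Ed d × ℝ) :=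
  A.filter fun e' => dyadicScale e'.2 = dyadicScale e.2 ∧ dist e e' ≤ ρ

/-- The points of `A` at any one dyadic scale `2 ^ k` are at most `U`-dense: balls of radius
`1 ≤ ρ ≤ 16 * 2 ^ k` centered at such a point contain at most `U * ρ` of them. -/
def DensityLE (A : Finset (Ed d × ℝ)) (U : ℝ) : Prop :=
  ∀ e ∈ A, ∀ ρ, 1 ≤ ρ → ρ ≤ 16 * 2 ^ dyadicScale e.2 → ((sameScaleBall A e ρ).card : ℝ) ≤ U * ρ

lemma sameScaleBall_mono (h : B ⊆ A) (e : Ed d × ℝ) (ρ : ℝ) :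
    sameScaleBall B e ρ ⊆ sameScaleBall A e ρ :=
  Finset.filter_subset_filter _ h

lemma DensityLE.mono (hA : DensityLE A U) (h : B ⊆ A) : DensityLE B U := fun e he ρ hρ hρ' =>
  le_trans (mod_cast Finset.card_le_card (sameScaleBall_mono h e ρ)) (hA e (h he) ρ hρ hρ')

end Configuration

/-- The `L²` information on the family `e ↦ F_e` that the argument uses: decay of inner products
in the distance of the centers, orthogonality unless the two spheres come close to each other, and
the square function estimate at a fixed radius. -/
structure IsSphericalFamily {d : ℕ} {H : Type*} [NormedAddCommGroup H] [InnerProductSpace ℂ H]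
    (f : Ed d × ℝ → H) (K : ℝ) : Prop where
  nonneg : 0 ≤ K
  norm_inner_mul_le : ∀ e e', 1 ≤ e.2 → 1 ≤ e'.2 →
    ‖inner ℂ (f e) (f e')‖ * (1 + dist e.1 e'.1) ^ (((d : ℝ) - 1) / 2) ≤
      K * (e.2 * e'.2) ^ (((d : ℝ) - 1) / 2)
  of_inner_ne_zero : ∀ e e', 1 ≤ e.2 → 1 ≤ e'.2 → inner ℂ (f e) (f e') ≠ 0 →
    |e.2 - e'.2| ≤ dist e.1 e'.1 + 2 / 5 ∧ dist e.1 e'.1 ≤ e.2 + e'.2 + 2 / 5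
  norm_sum_sq_le : ∀ r, 1 ≤ r → ∀ s : Finset (Ed d),
    (∀ y ∈ s, ∀ y' ∈ s, y ≠ y' → 1 ≤ dist y y') → ∀ c : Ed d → ℂ,
      ‖∑ y ∈ s, c y • f (y, r)‖ ^ 2 ≤ K * r ^ (d - 1) * ∑ y ∈ s, ‖c y‖ ^ 2

section L2Family

variable {d : ℕ} {ψ₀ : Ed d → ℂ}

open Classical in
/-- `F_{y,r}` as an element of `L²`, with junk value `0` where it is not square integrable (this
can only happen for `r ≤ 0`). -/
def FyrL2 (ψ₀ : Ed d → ℂ) (e : Ed d × ℝ) : Lp ℂ 2 (volume : Measure (Ed d)) :=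
  if h : MemLp (Fyr d ψ₀ e.1 e.2) 2 then h.toLp else 0

namespace Admissible

lemma coeFn_FyrL2 (hψ : Admissible d ψ₀) {e : Ed d × ℝ} (he : 0 < e.2) :
    FyrL2 ψ₀ e =ᵐ[volume] Fyr d ψ₀ e.1 e.2 := by
  rw [FyrL2, dif_pos (hψ.memLp_Fyr e.1 he 2)]
  exact MemLp.coeFn_toLp _

lemma inner_FyrL2 (hψ : Admissible d ψ₀) {e e' : Ed d × ℝ} (he : 0 < e.2) (he' : 0 < e'.2) :
    inner ℂ (FyrL2 ψ₀ e) (FyrL2 ψ₀ e') =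
      ∫ x, conj (Fyr d ψ₀ e.1 e.2 x) * Fyr d ψ₀ e'.1 e'.2 x := by
  rw [L2.inner_def]
  refine integral_congr_ae ?_
  filter_upwards [hψ.coeFn_FyrL2 he, hψ.coeFn_FyrL2 he'] with x hx hx'
  rw [hx, hx', RCLike.inner_apply, mul_comm]

lemma coeFn_sum_smul_FyrL2 (hψ : Admissible d ψ₀) {ι : Type*} {s : Finset ι} (e : ι → Ed d × ℝ)
    (hs : ∀ i ∈ s, 0 < (e i).2) (c : ι → ℂ) :
    (∑ i ∈ s, c i • FyrL2 ψ₀ (e i) : Lp ℂ 2 (volume : Measure (Ed d))) =ᵐ[volume]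
      fun x => ∑ i ∈ s, c i * Fyr d ψ₀ (e i).1 (e i).2 x := by
  have hterm : ∀ᵐ x, ∀ i ∈ s, (c i • FyrL2 ψ₀ (e i) : Lp ℂ 2 (volume : Measure (Ed d))) x =
      c i * Fyr d ψ₀ (e i).1 (e i).2 x := by
    refine (ae_ball_iff s.countable_toSet).mpr fun i hi => ?_
    filter_upwards [Lp.coeFn_smul (c i) (FyrL2 ψ₀ (e i)), hψ.coeFn_FyrL2 (hs i hi)] with x h h'
    rw [h, Pi.smul_apply, h', smul_eq_mul]
  filter_upwards [Lp.coeFn_finsetSum s fun i => c i • FyrL2 ψ₀ (e i), hterm] with x hsum hx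
  rw [hsum, Finset.sum_apply]
  exact Finset.sum_congr rfl hx

lemma norm_sum_smul_FyrL2_sq (hψ : Admissible d ψ₀) {ι : Type*} {s : Finset ι} (e : ι → Ed d × ℝ)
    (hs : ∀ i ∈ s, 0 < (e i).2) (c : ι → ℂ) :
    ‖∑ i ∈ s, c i • FyrL2 ψ₀ (e i)‖ ^ 2 =
      ∫ x, ‖∑ i ∈ s, c i * Fyr d ψ₀ (e i).1 (e i).2 x‖ ^ 2 := by
  refine Complex.ofReal_injective ?_
  rw [← integral_conj_mul_self, Complex.ofReal_pow]
  refine (inner_self_eq_norm_sq_to_K (𝕜 := ℂ) (∑ i ∈ s, c i • FyrL2 ψ₀ (e i))).symm.trans ?_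
  rw [L2.inner_def]
  refine integral_congr_ae ?_
  filter_upwards [hψ.coeFn_sum_smul_FyrL2 e hs c] with x hx
  rw [hx, RCLike.inner_apply, mul_comm]

lemma eLpNorm_sum_mul_Fyr (hψ : Admissible d ψ₀) {A : Finset (Ed d × ℝ)} (hA : ∀ e ∈ A, 0 < e.2)
    (c : Ed d × ℝ → ℂ) :
    eLpNorm (fun x => ∑ e ∈ A, c e * Fyr d ψ₀ e.1 e.2 x) 2 volume =
      ENNReal.ofReal ‖∑ e ∈ A, c e • FyrL2 ψ₀ e‖ := by
  rw [← eLpNorm_congr_ae (hψ.coeFn_sum_smul_FyrL2 (fun e => e) hA c), Lp.norm_def,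
    ENNReal.ofReal_toReal (Lp.eLpNorm_ne_top _)]

lemma exists_isSphericalFamily_FyrL2 (hψ : Admissible d ψ₀) (hd : 1 ≤ d) :
    ∃ K, IsSphericalFamily (FyrL2 ψ₀) K := by
  obtain ⟨K₁, hK₁₀, hK₁⟩ := hψ.exists_norm_integral_conj_Fyr_mul_Fyr_le hd
  obtain ⟨K₂, -, hK₂⟩ := hψ.exists_integral_norm_sq_sum_Fyr_le hd
  have hpos {r : ℝ} (hr : 1 ≤ r) : 0 < r := by linarith
  refine ⟨max K₁ K₂, le_max_of_le_left hK₁₀, fun e e' he he' => ?_, fun e e' he he' h => ?_,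
    fun r hr s hs c => ?_⟩
  · have := hpos he
    have := hpos he'
    rw [hψ.inner_FyrL2 (hpos he) (hpos he')]
    refine (hK₁ e.1 e'.1 e.2 e'.2 (hpos he) (hpos he')).trans ?_
    gcongr
    exact le_max_left _ _
  · rw [hψ.inner_FyrL2 (hpos he) (hpos he')] at h
    exact hψ.abs_sub_le_and_dist_le_of_integral_conj_Fyr_mul_Fyr_ne_zero h
  · have := hpos hr
    rw [hψ.norm_sum_smul_FyrL2_sq (fun y => (y, r)) fun _ _ => hpos hr]
    refine (hK₂ r (hpos hr) s hs c).trans ?_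
    gcongr
    exact le_max_right _ _

end Admissible

end L2Family

section SingleScale

variable {d : ℕ} {H : Type*} [NormedAddCommGroup H] [InnerProductSpace ℂ H]
  {f : Ed d × ℝ → H} {K : ℝ} {A : Finset (Ed d × ℝ)} {k : ℕ} {U : ℝ} {e e' : Ed d × ℝ}

lemma IsSphericalFamily.norm_sum_sq_le_of_snd_eq (hf : IsSphericalFamily f K)
    (hA : IsSeparatedConfig A) {r : ℝ} (hr : ∀ e ∈ A, e.2 = r) {c : Ed d × ℝ → ℂ}
    (hc : ∀ e, ‖c e‖ ≤ 1) : ‖∑ e ∈ A, c e • f e‖ ^ 2 ≤ ∑ e ∈ A, K * e.2 ^ (d - 1) := by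
  obtain rfl | ⟨e₀, he₀⟩ := A.eq_empty_or_nonempty
  · simp
  classical
  have hr₁ : 1 ≤ r := hr e₀ he₀ ▸ hA.one_le_radius e₀ he₀
  have heq : ∀ e ∈ A, (e.1, r) = e := fun e he => Prod.ext rfl (hr e he).symm
  have hinj : Set.InjOn Prod.fst (A : Set (Ed d × ℝ)) := fun a ha b hb h => by
    rw [← heq a ha, ← heq b hb, h]
  have hK := hf.nonneg
  have hfixed := hf.norm_sum_sq_le r hr₁ (A.image Prod.fst) (by
    simp only [Finset.mem_image]
    rintro _ ⟨e, he, rfl⟩ _ ⟨e', he', rfl⟩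
    exact hA.one_le_dist e he e' he') fun y => c (y, r)
  rw [Finset.sum_image hinj, Finset.sum_image hinj] at hfixed
  calc ‖∑ e ∈ A, c e • f e‖ ^ 2 = ‖∑ e ∈ A, c (e.1, r) • f (e.1, r)‖ ^ 2 := by
        congr 2
        exact Finset.sum_congr rfl fun e he => by rw [heq e he]
    _ ≤ K * r ^ (d - 1) * ∑ e ∈ A, ‖c (e.1, r)‖ ^ 2 := hfixed
    _ ≤ K * r ^ (d - 1) * ∑ e ∈ A, 1 := by
        gcongr
        exact pow_le_one₀ (norm_nonneg _) (hc _)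
    _ = ∑ e ∈ A, K * e.2 ^ (d - 1) := by
        rw [Finset.mul_sum]
        exact Finset.sum_congr rfl fun e he => by rw [hr e he, mul_one]

lemma IsSphericalFamily.norm_inner_le_dist_rpow (hf : IsSphericalFamily f K) (hd : 1 ≤ d)
    (he : 1 ≤ e.2) (he' : 1 ≤ e'.2) (hle : e'.2 ≤ 2 * e.2) (hdist : 0 < dist e e')
    (hne : inner ℂ (f e) (f e') ≠ 0) :
    ‖inner ℂ (f e) (f e')‖ ≤ K * 2 ^ (((d : ℝ) - 1) / 2) * e.2 ^ (d - 1) *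
      dist e e' ^ (-(((d : ℝ) - 1) / 2)) := by
  have hK := hf.nonneg
  have hm : 0 ≤ ((d : ℝ) - 1) / 2 := by
    have : (1 : ℝ) ≤ d := mod_cast hd
    linarith
  obtain ⟨hrad, -⟩ := hf.of_inner_ne_zero e e' he he' hne
  have hdist_le : dist e e' ≤ 1 + dist e.1 e'.1 :=
    max_le (by linarith) (by rw [Real.dist_eq]; linarith)
  rw [Real.rpow_neg hdist.le, ← div_eq_mul_inv, le_div_iff₀ (by positivity)]
  calc ‖inner ℂ (f e) (f e')‖ * dist e e' ^ (((d : ℝ) - 1) / 2)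
      ≤ ‖inner ℂ (f e) (f e')‖ * (1 + dist e.1 e'.1) ^ (((d : ℝ) - 1) / 2) := by gcongr
    _ ≤ K * (e.2 * e'.2) ^ (((d : ℝ) - 1) / 2) := hf.norm_inner_mul_le e e' he he'
    _ ≤ K * (2 * (e.2 * e.2)) ^ (((d : ℝ) - 1) / 2) := by
        gcongr K * ?_ ^ _
        nlinarith
    _ = K * 2 ^ (((d : ℝ) - 1) / 2) * e.2 ^ (d - 1) := by
        rw [pow_sub_one_eq_rpow_sq hd (by linarith), Real.mul_rpow zero_le_two (by positivity),
          Real.mul_rpow (by linarith) (by linarith)]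
        ring

lemma IsSphericalFamily.sum_far_radius_norm_inner_le (hf : IsSphericalFamily f K) (hd : 4 ≤ d)
    (hA : IsSeparatedConfig A) (hk : ∀ e ∈ A, dyadicScale e.2 = k) (hU : 0 ≤ U)
    (hdens : DensityLE A U) {L : ℝ} (hL : 1 ≤ L) (he : e ∈ A) :
    ∑ e' ∈ A with ¬ |e.2 - e'.2| ≤ L, ‖inner ℂ (f e) (f e')‖ ≤
      8 * K * 2 ^ (((d : ℝ) - 1) / 2) * U * L ^ (1 - ((d : ℝ) - 1) / 2) * e.2 ^ (d - 1) := by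
  have hK := hf.nonneg
  have he₁ := hA.one_le_radius e he
  set m : ℝ := ((d : ℝ) - 1) / 2 with hm
  have hm_ge : 3 / 2 ≤ m := by
    have : (4 : ℝ) ≤ d := mod_cast hd
    linarith
  have hscale : ∀ e ∈ A, 2 ^ k ≤ e.2 ∧ e.2 < 2 * 2 ^ k := fun e he =>
    hk e he ▸ ⟨two_pow_dyadicScale_le (hA.one_le_radius e he), lt_two_mul_two_pow_dyadicScale _⟩
  set S := {e' ∈ A | ¬ |e.2 - e'.2| ≤ L ∧ inner ℂ (f e) (f e') ≠ 0} with hS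
  have hS_far : ∀ e' ∈ S, L ≤ dist e e' ∧ 2 * dist e e' ≤ 16 * 2 ^ k := fun e' he' => by
    obtain ⟨he'A, hfar, hne⟩ := Finset.mem_filter.mp he'
    obtain ⟨hrad, hcen⟩ := hf.of_inner_ne_zero e e' he₁ (hA.one_le_radius e' he'A) hne
    have hk₁ : (1 : ℝ) ≤ 2 ^ k := one_le_pow₀ one_le_two
    have := hscale e he
    have := hscale e' he'A
    have hdist : dist e e' ≤ 8 * 2 ^ k :=
      max_le (by linarith) (by rw [Real.dist_eq]; linarith)
    exact ⟨(not_le.mp hfar).le.trans (le_max_right _ _), by linarith⟩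
  have hS_card : ∀ ρ, 1 ≤ ρ → ρ ≤ 16 * 2 ^ k →
      ((S.filter (dist e · ≤ ρ)).card : ℝ) ≤ U * ρ := fun ρ hρ hρ' => by
    refine le_trans (mod_cast Finset.card_le_card fun e' he' => ?_)
      (hdens e he ρ hρ (hk e he ▸ hρ'))
    obtain ⟨he'S, hdist⟩ := Finset.mem_filter.mp he'
    have he'A := Finset.filter_subset _ _ he'S
    exact Finset.mem_filter.mpr ⟨he'A, (hk e' he'A).trans (hk e he).symm, hdist⟩
  calc ∑ e' ∈ A with ¬ |e.2 - e'.2| ≤ L, ‖inner ℂ (f e) (f e')‖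
      = ∑ e' ∈ S, ‖inner ℂ (f e) (f e')‖ := by
        rw [hS, ← Finset.filter_filter]
        exact (Finset.sum_filter_of_ne fun _ _ => norm_ne_zero_iff.mp).symm
    _ ≤ ∑ e' ∈ S, K * 2 ^ m * e.2 ^ (d - 1) * dist e e' ^ (-m) :=
        Finset.sum_le_sum fun e' he' => by
          obtain ⟨he'A, -, hne⟩ := Finset.mem_filter.mp he'
          exact hf.norm_inner_le_dist_rpow (by omega) he₁ (hA.one_le_radius e' he'A)
            (by linarith [hscale e he, hscale e' he'A]) (by linarith [hS_far e' he']) hne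
    _ ≤ K * 2 ^ m * e.2 ^ (d - 1) * (8 * U * L ^ (1 - m)) := by
        rw [← Finset.mul_sum]
        gcongr
        exact sum_rpow_neg_le_of_card_filter_le hL hm_ge hU hS_card hS_far
    _ = 8 * K * 2 ^ m * U * L ^ (1 - m) * e.2 ^ (d - 1) := by ring

lemma two_rpow_div_rpow_one_sub_mul_two_pow {m : ℝ} (hm : m ≠ 0) (ν : ℕ) :
    ((2 : ℝ) ^ ((ν : ℝ) / m)) ^ (1 - m) * 2 ^ ν = 2 ^ ((ν : ℝ) / m) := by
  rw [← Real.rpow_mul zero_le_two, ← Real.rpow_natCast, ← Real.rpow_add zero_lt_two]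
  congr 1
  field_simp
  ring

lemma IsSphericalFamily.exists_norm_sum_sq_le_of_dyadicScale_eq (hf : IsSphericalFamily f K)
    (hd : 4 ≤ d) : ∃ C, 0 ≤ C ∧ ∀ A : Finset (Ed d × ℝ), IsSeparatedConfig A →
      ∀ k, (∀ e ∈ A, dyadicScale e.2 = k) → ∀ ν : ℕ, DensityLE A (2 ^ (ν + 1)) →
      ∀ c : Ed d × ℝ → ℂ, (∀ e, ‖c e‖ ≤ 1) →
        ‖∑ e ∈ A, c e • f e‖ ^ 2 ≤
          C * 2 ^ ((ν : ℝ) / (((d : ℝ) - 1) / 2)) * ∑ e ∈ A, e.2 ^ (d - 1) := by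
  have hK := hf.nonneg
  set m : ℝ := ((d : ℝ) - 1) / 2 with hm
  have hm₀ : 0 < m := by
    have : (4 : ℝ) ≤ d := mod_cast hd
    linarith
  refine ⟨K * (3 + 16 * 2 ^ m), by positivity, fun A hA k hk ν hdens c hc => ?_⟩
  set L : ℝ := 2 ^ ((ν : ℝ) / m)
  have hL₁ : 1 ≤ L := Real.one_le_rpow one_le_two (by positivity)
  have hradii : ∀ r ∈ A.image Prod.snd, ∀ r' ∈ A.image Prod.snd, r ≠ r' → 1 ≤ |r - r'| := by
    simp only [Finset.mem_image]
    rintro _ ⟨e, he, rfl⟩ _ ⟨e', he', rfl⟩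
    exact hA.one_le_abs_sub e he e' he'
  have hfar : ∀ e ∈ A, ∑ e' ∈ A with ¬ |e.2 - e'.2| ≤ L, ‖inner ℂ (c e • f e) (c e' • f e')‖ ≤
      K * (16 * 2 ^ m) * L * e.2 ^ (d - 1) := fun e he =>
    calc _ ≤ ∑ e' ∈ A with ¬ |e.2 - e'.2| ≤ L, ‖inner ℂ (f e) (f e')‖ :=
          Finset.sum_le_sum fun e' _ => norm_inner_smul_smul_le (hc e) (hc e') _ _
      _ ≤ 8 * K * 2 ^ m * 2 ^ (ν + 1) * L ^ (1 - m) * e.2 ^ (d - 1) :=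
          hf.sum_far_radius_norm_inner_le hd hA hk (by positivity) hdens hL₁ he
      _ = K * (16 * 2 ^ m) * (L ^ (1 - m) * 2 ^ ν) * e.2 ^ (d - 1) := by ring
      _ = _ := by rw [two_rpow_div_rpow_one_sub_mul_two_pow hm₀.ne']
  calc ‖∑ e ∈ A, c e • f e‖ ^ 2
      ≤ 3 * L * ∑ e ∈ A, K * e.2 ^ (d - 1) + ∑ e ∈ A, ∑ e' ∈ A with ¬ |e.2 - e'.2| ≤ L,
          ‖inner ℂ (c e • f e) (c e' • f e')‖ := by
        refine norm_sum_sq_le_fiberwise A Prod.snd _ (near := fun r r' => |r - r'| ≤ L)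
          (fun r r' h => by rwa [abs_sub_comm]) (by positivity) (fun r _ => ?_) fun r _ => ?_
        · linarith [card_filter_abs_sub_le hradii r (by linarith : 0 ≤ L)]
        · exact hf.norm_sum_sq_le_of_snd_eq (hA.mono (Finset.filter_subset _ _))
            (fun e he => (Finset.mem_filter.mp he).2) hc
    _ ≤ 3 * L * ∑ e ∈ A, K * e.2 ^ (d - 1) + ∑ e ∈ A, K * (16 * 2 ^ m) * L * e.2 ^ (d - 1) := by
        gcongr with e he
        exact hfar e he
    _ = K * (3 + 16 * 2 ^ m) * L * ∑ e ∈ A, e.2 ^ (d - 1) := by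
        rw [← Finset.mul_sum, ← Finset.mul_sum]
        ring

end SingleScale

section CrossScale

variable {d : ℕ} {H : Type*} [NormedAddCommGroup H] [InnerProductSpace ℂ H]
  {f : Ed d × ℝ → H} {K : ℝ} {A : Finset (Ed d × ℝ)} {k ν : ℕ} {U : ℝ} {e e' : Ed d × ℝ}

lemma IsSphericalFamily.norm_inner_le_of_four_mul_le (hf : IsSphericalFamily f K) (hd : 1 ≤ d)
    {w : ℝ} (he : 4 * w ≤ e.2) (he' : 1 ≤ e'.2) (hw : e'.2 ≤ 2 * w) :
    ‖inner ℂ (f e) (f e')‖ ≤ K * 4 ^ (((d : ℝ) - 1) / 2) * w ^ (((d : ℝ) - 1) / 2) := by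
  have hK := hf.nonneg
  set m : ℝ := ((d : ℝ) - 1) / 2
  have hm : 0 ≤ m := by
    have : (1 : ℝ) ≤ d := mod_cast hd
    simp only [m]
    linarith
  have hw₀ : 0 < w := by linarith
  have he₀ : 0 < e.2 := by linarith
  by_cases hne : inner ℂ (f e) (f e') = 0
  · rw [hne, norm_zero]
    positivity
  have hrad := (hf.of_inner_ne_zero e e' (by linarith) he' hne).1
  have hdist : e.2 / 2 ≤ 1 + dist e.1 e'.1 := by linarith [le_abs_self (e.2 - e'.2)]
  refine le_of_mul_le_mul_right ?_ (by positivity : 0 < (e.2 / 2) ^ m)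
  calc ‖inner ℂ (f e) (f e')‖ * (e.2 / 2) ^ m
      ≤ ‖inner ℂ (f e) (f e')‖ * (1 + dist e.1 e'.1) ^ m := by gcongr
    _ ≤ K * (e.2 * e'.2) ^ m := hf.norm_inner_mul_le e e' (by linarith) he'
    _ ≤ K * (4 * w * (e.2 / 2)) ^ m := by
        gcongr K * ?_ ^ _
        nlinarith
    _ = K * 4 ^ m * w ^ m * (e.2 / 2) ^ m := by
        rw [Real.mul_rpow (by positivity) (by positivity), Real.mul_rpow (by positivity) hw₀.le]
        ring

/- The centers in question lie in an annulus of radius `e.2` and width comparable to `2 ^ k`. -/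
lemma IsSphericalFamily.card_filter_inner_ne_zero_mul_pow_le (hf : IsSphericalFamily f K)
    (hd : 1 ≤ d) (hA : IsSeparatedConfig A) (hU : 0 ≤ U) (hdens : DensityLE A U) (he : 1 ≤ e.2)
    (hk : k + 2 ≤ dyadicScale e.2) :
    ((A.filter fun e' => dyadicScale e'.2 = k ∧ inner ℂ (f e) (f e') ≠ 0).card : ℝ) *
      (2 ^ k / 2) ^ d ≤ U * 2 ^ k * (d * (2 * e.2) ^ (d - 1) * (8 * 2 ^ k)) := by
  have : NeZero d := ⟨by omega⟩
  have hw₁ : (1 : ℝ) ≤ 2 ^ k := one_le_pow₀ one_le_two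
  have hwe : 4 * 2 ^ k ≤ e.2 :=
    calc (4 : ℝ) * 2 ^ k = 2 ^ (k + 2) := by ring
      _ ≤ 2 ^ dyadicScale e.2 := pow_le_pow_right₀ one_le_two hk
      _ ≤ e.2 := two_pow_dyadicScale_le he
  set T := A.filter fun e' => dyadicScale e'.2 = k ∧ inner ℂ (f e) (f e') ≠ 0
  have hT : ∀ e' ∈ T, e' ∈ A ∧ dyadicScale e'.2 = k ∧ 2 ^ k ≤ e'.2 ∧ e'.2 < 2 * 2 ^ k ∧
      |dist e'.1 e.1 - e.2| ≤ 3 * 2 ^ k := fun e' he' => by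
    obtain ⟨he'A, rfl, hne⟩ := Finset.mem_filter.mp he'
    have hlow := two_pow_dyadicScale_le (hA.one_le_radius e' he'A)
    have hup := lt_two_mul_two_pow_dyadicScale e'.2
    obtain ⟨hrad, hcen⟩ := hf.of_inner_ne_zero e e' he (hA.one_le_radius e' he'A) hne
    rw [dist_comm] at hrad hcen
    exact ⟨he'A, rfl, hlow, hup, abs_le.mpr ⟨by linarith [le_abs_self (e.2 - e'.2)], by linarith⟩⟩
  have hball : ∀ x, ((T.filter fun e' => dist x e'.1 ≤ 2 ^ k / 2).card : ℝ) ≤ U * 2 ^ k := by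
    intro x
    obtain hempty | ⟨e₀, he₀⟩ := (T.filter fun e' => dist x e'.1 ≤ 2 ^ k / 2).eq_empty_or_nonempty
    · rw [hempty, Finset.card_empty, Nat.cast_zero]
      positivity
    obtain ⟨he₀T, hx₀⟩ := Finset.mem_filter.mp he₀
    obtain ⟨he₀A, hk₀, hlow₀, hup₀, -⟩ := hT e₀ he₀T
    refine (Nat.cast_le.mpr (Finset.card_le_card fun e' he' => ?_)).trans
      (hdens e₀ he₀A (2 ^ k) hw₁ (by rw [hk₀]; linarith))
    obtain ⟨he'T, hx⟩ := Finset.mem_filter.mp he'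
    obtain ⟨he'A, hk', hlow, hup, -⟩ := hT e' he'T
    refine Finset.mem_filter.mpr ⟨he'A, hk'.trans hk₀.symm, max_le ?_ ?_⟩
    · linarith [dist_triangle_left e₀.1 e'.1 x]
    · exact abs_le.mpr ⟨by linarith, by linarith⟩
  have hcard := card_mul_pow_le_of_abs_dist_sub_le T Prod.fst e.1 (by linarith) (by positivity)
    hwe (fun e' he' => (hT e' he').2.2.2.2) hball
  rwa [finrank_euclideanSpace_fin] at hcard

lemma sq_mul_rpow_le_pow_mul_rpow {w : ℝ} (hd : 4 ≤ d) (hw : 1 ≤ w) :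
    w ^ 2 * w ^ (((d : ℝ) - 1) / 2) ≤ w ^ d * w ^ (-(1 / 2) : ℝ) := by
  have hw₀ : 0 < w := by linarith
  have hd' : (4 : ℝ) ≤ d := mod_cast hd
  rw [← Real.rpow_natCast, ← Real.rpow_natCast, ← Real.rpow_add hw₀, ← Real.rpow_add hw₀]
  refine Real.rpow_le_rpow_of_exponent_le hw ?_
  push_cast
  linarith

lemma mul_rpow_le_of_mul_half_pow_le {n w r : ℝ} (hd : 4 ≤ d) (hw : 1 ≤ w) (hr : 0 ≤ r)
    (hU : 0 ≤ U) (h : n * (w / 2) ^ d ≤ U * w * (d * (2 * r) ^ (d - 1) * (8 * w))) :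
    n * w ^ (((d : ℝ) - 1) / 2) ≤
      U * (d * 2 ^ (d - 1) * 8 * 2 ^ d) * r ^ (d - 1) * w ^ (-(1 / 2) : ℝ) := by
  set m : ℝ := ((d : ℝ) - 1) / 2
  refine le_of_mul_le_mul_right ?_ (by positivity : 0 < w ^ d)
  calc n * w ^ m * w ^ d = n * (w / 2) ^ d * (2 ^ d * w ^ m) := by
        rw [div_pow]
        field_simp
    _ ≤ U * w * (d * (2 * r) ^ (d - 1) * (8 * w)) * (2 ^ d * w ^ m) := by gcongr
    _ = U * (d * 2 ^ (d - 1) * 8 * 2 ^ d) * r ^ (d - 1) * (w ^ 2 * w ^ m) := by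
        rw [mul_pow]
        ring
    _ ≤ U * (d * 2 ^ (d - 1) * 8 * 2 ^ d) * r ^ (d - 1) * (w ^ d * w ^ (-(1 / 2) : ℝ)) := by
        gcongr _ * ?_
        exact sq_mul_rpow_le_pow_mul_rpow hd hw
    _ = _ := by ring

lemma IsSphericalFamily.exists_sum_norm_inner_le_of_add_two_le (hf : IsSphericalFamily f K)
    (hd : 4 ≤ d) : ∃ C, 0 ≤ C ∧ ∀ A : Finset (Ed d × ℝ), IsSeparatedConfig A → ∀ U, 0 ≤ U →
      DensityLE A U → ∀ e : Ed d × ℝ, 1 ≤ e.2 → ∀ k, k + 2 ≤ dyadicScale e.2 →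
        ∑ e' ∈ A with dyadicScale e'.2 = k, ‖inner ℂ (f e) (f e')‖ ≤
          C * U * e.2 ^ (d - 1) * ((2 : ℝ) ^ k) ^ (-(1 / 2) : ℝ) := by
  have hK := hf.nonneg
  set m : ℝ := ((d : ℝ) - 1) / 2
  refine ⟨K * 4 ^ m * (d * 2 ^ (d - 1) * 8 * 2 ^ d), by positivity,
    fun A hA U hU hdens e he k hk => ?_⟩
  have he₀ : 0 < e.2 := by linarith
  set w : ℝ := 2 ^ k with hw
  have hw₁ : 1 ≤ w := one_le_pow₀ one_le_two
  have hwe : 4 * w ≤ e.2 :=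
    calc 4 * w = 2 ^ (k + 2) := by rw [hw]; ring
      _ ≤ 2 ^ dyadicScale e.2 := pow_le_pow_right₀ one_le_two hk
      _ ≤ e.2 := two_pow_dyadicScale_le he
  set T := A.filter fun e' => dyadicScale e'.2 = k ∧ inner ℂ (f e) (f e') ≠ 0 with hT
  have hcard := mul_rpow_le_of_mul_half_pow_le hd hw₁ he₀.le hU
    (hf.card_filter_inner_ne_zero_mul_pow_le (by omega) hA hU hdens he hk)
  calc ∑ e' ∈ A with dyadicScale e'.2 = k, ‖inner ℂ (f e) (f e')‖
      = ∑ e' ∈ T, ‖inner ℂ (f e) (f e')‖ := by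
        rw [hT, ← Finset.filter_filter]
        exact (Finset.sum_filter_of_ne fun _ _ => norm_ne_zero_iff.mp).symm
    _ ≤ ∑ e' ∈ T, K * 4 ^ m * w ^ m := Finset.sum_le_sum fun e' he' => by
        obtain ⟨he'A, rfl, -⟩ := Finset.mem_filter.mp he'
        exact hf.norm_inner_le_of_four_mul_le (by omega) hwe (hA.one_le_radius e' he'A)
          (lt_two_mul_two_pow_dyadicScale _).le
    _ = K * 4 ^ m * (T.card * w ^ m) := by
        rw [Finset.sum_const, nsmul_eq_mul]
        ring
    _ ≤ _ := by
        grw [hcard]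
        apply le_of_eq
        ring

lemma two_pow_two_mul_add_rpow_neg_half (ν l : ℕ) :
    ((2 : ℝ) ^ (2 * ν + l)) ^ (-(1 / 2) : ℝ) * 2 ^ ν = ((2 : ℝ) ^ l) ^ (-(1 / 2) : ℝ) := by
  rw [pow_add, Real.mul_rpow (by positivity) (by positivity), pow_mul', mul_right_comm,
    ← Real.rpow_natCast _ 2, ← Real.rpow_mul (by positivity), Nat.cast_ofNat,
    show (2 : ℝ) * (-(1 / 2)) = -1 by norm_num, Real.rpow_neg_one,
    inv_mul_cancel₀ (by positivity), one_mul]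

lemma IsSphericalFamily.exists_sum_norm_inner_le_of_two_mul_le (hf : IsSphericalFamily f K)
    (hd : 4 ≤ d) : ∃ C, 0 ≤ C ∧ ∀ A : Finset (Ed d × ℝ), IsSeparatedConfig A → ∀ ν : ℕ,
      DensityLE A (2 ^ (ν + 1)) → (∀ e ∈ A, 2 * ν ≤ dyadicScale e.2) →
      ∀ e : Ed d × ℝ, 1 ≤ e.2 →
        ∑ e' ∈ A with dyadicScale e'.2 + 2 ≤ dyadicScale e.2, ‖inner ℂ (f e) (f e')‖ ≤
          C * e.2 ^ (d - 1) := by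
  obtain ⟨C, hC₀, hC⟩ := hf.exists_sum_norm_inner_le_of_add_two_le hd
  refine ⟨8 * C, by positivity, fun A hA ν hdens hlow e he => ?_⟩
  set n := dyadicScale e.2
  set B := {e' ∈ A | dyadicScale e'.2 + 2 ≤ n}
  have hmaps : ∀ e' ∈ B, dyadicScale e'.2 - 2 * ν ∈ Finset.range (n - 1 - 2 * ν) := by
    intro e' he'
    obtain ⟨he'A, hle⟩ := Finset.mem_filter.mp he'
    have := hlow e' he'A
    rw [Finset.mem_range]
    omega
  rw [← Finset.sum_fiberwise_of_maps_to hmaps]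
  calc ∑ l ∈ Finset.range (n - 1 - 2 * ν),
        ∑ e' ∈ B with dyadicScale e'.2 - 2 * ν = l, ‖inner ℂ (f e) (f e')‖
      ≤ ∑ l ∈ Finset.range (n - 1 - 2 * ν),
          C * 2 ^ (ν + 1) * e.2 ^ (d - 1) * ((2 : ℝ) ^ (2 * ν + l)) ^ (-(1 / 2) : ℝ) := by
        refine Finset.sum_le_sum fun l hl => ?_
        have := Finset.mem_range.mp hl
        refine le_trans ?_ (hC A hA _ (by positivity) hdens e he (2 * ν + l) (by omega))
        refine Finset.sum_le_sum_of_subset_of_nonneg (fun e' he' => ?_) fun _ _ _ => norm_nonneg _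
        simp only [B, Finset.mem_filter] at he' ⊢
        have := hlow e' he'.1.1
        exact ⟨he'.1.1, by omega⟩
    _ = 2 * C * e.2 ^ (d - 1) *
          ∑ l ∈ Finset.range (n - 1 - 2 * ν), ((2 : ℝ) ^ l) ^ (-(1 / 2) : ℝ) := by
        rw [Finset.mul_sum]
        refine Finset.sum_congr rfl fun l _ => ?_
        rw [← two_pow_two_mul_add_rpow_neg_half ν l]
        ring
    _ ≤ 2 * C * e.2 ^ (d - 1) * 4 := by
        gcongr
        exact sum_two_pow_rpow_neg_half_le _
    _ = 8 * C * e.2 ^ (d - 1) := by ring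

/- The low scales `< 2 * ν` are combined by Cauchy-Schwarz, at the cost of a factor `2 * ν`. -/
lemma IsSphericalFamily.exists_norm_sum_sq_le_of_dyadicScale_lt (hf : IsSphericalFamily f K)
    (hd : 4 ≤ d) : ∃ C, 0 ≤ C ∧ ∀ A : Finset (Ed d × ℝ), IsSeparatedConfig A →
      ∀ ν : ℕ, DensityLE A (2 ^ (ν + 1)) → ∀ n : ℕ, (∀ e ∈ A, dyadicScale e.2 < n) →
      ∀ c : Ed d × ℝ → ℂ, (∀ e, ‖c e‖ ≤ 1) → ‖∑ e ∈ A, c e • f e‖ ^ 2 ≤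
        C * n * 2 ^ ((ν : ℝ) / (((d : ℝ) - 1) / 2)) * ∑ e ∈ A, e.2 ^ (d - 1) := by
  obtain ⟨C, hC₀, hC⟩ := hf.exists_norm_sum_sq_le_of_dyadicScale_eq hd
  refine ⟨C, hC₀, fun A hA ν hdens n hn c hc => ?_⟩
  have hsum := norm_sum_sq_le_fiberwise A (fun e => dyadicScale e.2) (fun e => c e • f e)
    (near := fun _ _ => True) (fun _ _ _ => trivial) n.cast_nonneg (fun k _ => ?_)
    (N := fun e => C * 2 ^ ((ν : ℝ) / (((d : ℝ) - 1) / 2)) * e.2 ^ (d - 1)) fun k _ => ?_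
  · simp only [not_true_eq_false, Finset.filter_false, Finset.sum_empty, Finset.sum_const_zero,
      add_zero, ← Finset.mul_sum] at hsum
    linarith
  · rw [Finset.filter_true]
    refine mod_cast (Finset.card_le_card fun l hl => ?_).trans_eq (Finset.card_range n)
    obtain ⟨e, he, rfl⟩ := Finset.mem_image.mp hl
    exact Finset.mem_range.mpr (hn e he)
  · have hsub := Finset.filter_subset (fun e : Ed d × ℝ => dyadicScale e.2 = k) A
    rw [← Finset.mul_sum]
    exact hC _ (hA.mono hsub) k (fun e he => (Finset.mem_filter.mp he).2) ν (hdens.mono hsub) c hc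

lemma sum_sum_filter_not_near_le {ι : Type*} (s : Finset ι) (κ : ι → ℕ) (v : ι → H) :
    ∑ i ∈ s, ∑ j ∈ s with ¬ (κ i ≤ κ j + 1 ∧ κ j ≤ κ i + 1), ‖inner ℂ (v i) (v j)‖ ≤
      2 * ∑ i ∈ s, ∑ j ∈ s with κ j + 2 ≤ κ i, ‖inner ℂ (v i) (v j)‖ := by
  classical
  have hswap : ∑ i ∈ s, ∑ j ∈ s with κ i + 2 ≤ κ j, ‖inner ℂ (v i) (v j)‖ =
      ∑ i ∈ s, ∑ j ∈ s with κ j + 2 ≤ κ i, ‖inner ℂ (v i) (v j)‖ := by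
    simp_rw [Finset.sum_filter]
    rw [Finset.sum_comm]
    simp_rw [norm_inner_symm]
  rw [two_mul]
  nth_rewrite 2 [← hswap]
  rw [← Finset.sum_add_distrib]
  refine Finset.sum_le_sum fun i _ => ?_
  rw [← Finset.sum_union (Finset.disjoint_filter.mpr fun j _ _ => by omega), ← Finset.filter_or]
  exact Finset.sum_le_sum_of_subset_of_nonneg
    (Finset.monotone_filter_right _ fun j _ => by omega) fun _ _ _ => norm_nonneg _

/- On scales `≥ 2 * ν` the decay `2 ^ (-k / 2)` of the interaction with a smaller scale `2 ^ k`
beats the density `2 ^ ν`. -/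
lemma IsSphericalFamily.exists_norm_sum_sq_le_of_two_mul_le_dyadicScale
    (hf : IsSphericalFamily f K) (hd : 4 ≤ d) : ∃ C, 0 ≤ C ∧ ∀ A : Finset (Ed d × ℝ),
      IsSeparatedConfig A → ∀ ν : ℕ, DensityLE A (2 ^ (ν + 1)) →
      (∀ e ∈ A, 2 * ν ≤ dyadicScale e.2) →
      ∀ c : Ed d × ℝ → ℂ, (∀ e, ‖c e‖ ≤ 1) → ‖∑ e ∈ A, c e • f e‖ ^ 2 ≤
        C * 2 ^ ((ν : ℝ) / (((d : ℝ) - 1) / 2)) * ∑ e ∈ A, e.2 ^ (d - 1) := by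
  obtain ⟨C₁, hC₁₀, hC₁⟩ := hf.exists_norm_sum_sq_le_of_dyadicScale_eq hd
  obtain ⟨C₂, hC₂₀, hC₂⟩ := hf.exists_sum_norm_inner_le_of_two_mul_le hd
  refine ⟨3 * C₁ + 2 * C₂, by positivity, fun A hA ν hdens hlow c hc => ?_⟩
  set X : ℝ := 2 ^ ((ν : ℝ) / (((d : ℝ) - 1) / 2))
  have hX : 1 ≤ X := Real.one_le_rpow one_le_two <| by
    have : (4 : ℝ) ≤ d := mod_cast hd
    have : 0 ≤ ((d : ℝ) - 1) / 2 := by linarith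
    positivity
  have hsum := norm_sum_sq_le_fiberwise A (fun e => dyadicScale e.2) (fun e => c e • f e)
    (near := fun i j => i ≤ j + 1 ∧ j ≤ i + 1) (fun _ _ => And.symm) zero_le_three (fun k _ => ?_)
    (N := fun e => C₁ * X * e.2 ^ (d - 1)) fun k _ => ?_
  · have hfar := sum_sum_filter_not_near_le A (fun e => dyadicScale e.2) fun e => c e • f e
    have hsmall : ∑ e ∈ A, ∑ e' ∈ A with dyadicScale e'.2 + 2 ≤ dyadicScale e.2,
        ‖inner ℂ (c e • f e) (c e' • f e')‖ ≤ ∑ e ∈ A, C₂ * e.2 ^ (d - 1) :=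
      Finset.sum_le_sum fun e he =>
        (Finset.sum_le_sum fun e' _ => norm_inner_smul_smul_le (hc e) (hc e') _ _).trans
          (hC₂ A hA ν hdens hlow e (hA.one_le_radius e he))
    have hS : 0 ≤ ∑ e ∈ A, e.2 ^ (d - 1) := Finset.sum_nonneg fun e he =>
      pow_nonneg (by linarith [hA.one_le_radius e he]) _
    rw [← Finset.mul_sum] at hsum hsmall
    nlinarith [mul_nonneg (mul_nonneg hC₂₀ hS) (sub_nonneg.mpr hX)]
  · refine mod_cast (Finset.card_le_card (t := Finset.Icc (k - 1) (k + 1)) fun l hl => ?_).trans ?_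
    · have := (Finset.mem_filter.mp hl).2
      rw [Finset.mem_Icc]
      omega
    · rw [Nat.card_Icc]
      omega
  · have hsub := Finset.filter_subset (fun e : Ed d × ℝ => dyadicScale e.2 = k) A
    rw [← Finset.mul_sum]
    exact hC₁ _ (hA.mono hsub) k (fun e he => (Finset.mem_filter.mp he).2) ν (hdens.mono hsub) c hc

lemma IsSphericalFamily.exists_norm_sum_sq_le (hf : IsSphericalFamily f K) (hd : 4 ≤ d) :
    ∃ C, 0 ≤ C ∧ ∀ A : Finset (Ed d × ℝ), IsSeparatedConfig A → ∀ ν : ℕ,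
      DensityLE A (2 ^ (ν + 1)) → ∀ c : Ed d × ℝ → ℂ, (∀ e, ‖c e‖ ≤ 1) →
        ‖∑ e ∈ A, c e • f e‖ ^ 2 ≤
          C * (1 + ν) * 2 ^ ((ν : ℝ) / (((d : ℝ) - 1) / 2)) * ∑ e ∈ A, e.2 ^ (d - 1) := by
  obtain ⟨C₁, hC₁₀, hC₁⟩ := hf.exists_norm_sum_sq_le_of_dyadicScale_lt hd
  obtain ⟨C₂, hC₂₀, hC₂⟩ := hf.exists_norm_sum_sq_le_of_two_mul_le_dyadicScale hd
  refine ⟨4 * C₁ + 2 * C₂, by positivity, fun A hA ν hdens c hc => ?_⟩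
  have hsub (P : Ed d × ℝ → Prop) [DecidablePred P] := Finset.filter_subset P A
  have hlow := hC₁ {e ∈ A | dyadicScale e.2 < 2 * ν} (hA.mono (hsub _)) ν (hdens.mono (hsub _))
    (2 * ν) (fun e he => (Finset.mem_filter.mp he).2) c hc
  have hhigh := hC₂ {e ∈ A | ¬ dyadicScale e.2 < 2 * ν} (hA.mono (hsub _)) ν
    (hdens.mono (hsub _)) (fun e he => not_lt.mp (Finset.mem_filter.mp he).2) c hc
  rw [← Finset.sum_filter_add_sum_filter_not A (fun e => dyadicScale e.2 < 2 * ν)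
    fun e => c e • f e, ← Finset.sum_filter_add_sum_filter_not A (fun e => dyadicScale e.2 < 2 * ν)
    fun e => e.2 ^ (d - 1)]
  set v := ∑ e ∈ A with dyadicScale e.2 < 2 * ν, c e • f e
  set v' := ∑ e ∈ A with ¬ dyadicScale e.2 < 2 * ν, c e • f e
  have hnonneg (P : Ed d × ℝ → Prop) [DecidablePred P] :
      0 ≤ ∑ e ∈ A with P e, e.2 ^ (d - 1) := Finset.sum_nonneg fun e he =>
    pow_nonneg (by linarith [hA.one_le_radius e (hsub _ he)]) _
  have hS := hnonneg fun e => dyadicScale e.2 < 2 * ν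
  have hS' := hnonneg fun e => ¬ dyadicScale e.2 < 2 * ν
  set S := ∑ e ∈ A with dyadicScale e.2 < 2 * ν, e.2 ^ (d - 1)
  set S' := ∑ e ∈ A with ¬ dyadicScale e.2 < 2 * ν, e.2 ^ (d - 1)
  set X : ℝ := 2 ^ ((ν : ℝ) / (((d : ℝ) - 1) / 2))
  have hparallelogram : ‖v + v'‖ ^ 2 ≤ 2 * (‖v‖ ^ 2 + ‖v'‖ ^ 2) := by
    linarith [parallelogram_law_with_norm ℂ v v', mul_self_nonneg ‖v - v'‖, sq ‖v + v'‖, sq ‖v‖,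
      sq ‖v'‖]
  calc ‖v + v'‖ ^ 2 ≤ 2 * (‖v‖ ^ 2 + ‖v'‖ ^ 2) := hparallelogram
    _ ≤ 2 * (C₁ * (2 * ν : ℕ) * X * S + C₂ * X * S') := by gcongr
    _ = 4 * C₁ * ν * X * S + 2 * C₂ * 1 * X * S' := by
        push_cast
        ring
    _ ≤ (4 * C₁ + 2 * C₂) * (1 + ν) * X * S + (4 * C₁ + 2 * C₂) * (1 + ν) * X * S' := by
        gcongr <;> linarith [ν.cast_nonneg (α := ℝ)]
    _ = _ := by ring

end CrossScale

section ThickSphere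

/-- The closed `s`-neighborhood of the sphere with center `e.1` and radius `e.2`. -/
def thickSphere {X : Type*} [PseudoMetricSpace X] (e : X × ℝ) (s : ℝ) : Set X :=
  {x | |dist x e.1 - e.2| ≤ s}

section PseudoMetricSpace

variable {X : Type*} [PseudoMetricSpace X] {e b : X × ℝ} {s t : ℝ}

lemma thickSphere_subset_closedBall_sdiff_ball :
    thickSphere e s ⊆ closedBall e.1 (e.2 + s) \ ball e.1 (e.2 - s) := fun x hx => by
  have := abs_le.mp (show |dist x e.1 - e.2| ≤ s from hx)
  rw [mem_sdiff, mem_closedBall, mem_ball, not_lt]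
  exact ⟨by linarith, by linarith⟩

lemma thickSphere_subset_thickSphere (h : dist e b ≤ t) :
    thickSphere e s ⊆ thickSphere b (s + 2 * t) := fun x hx => by
  obtain ⟨hcen, hrad⟩ := max_le_iff.mp (Prod.dist_eq (x := e) ▸ h)
  have hrad := abs_le.mp (Real.dist_eq _ _ ▸ hrad)
  have hx := abs_le.mp (show |dist x e.1 - e.2| ≤ s from hx)
  have := dist_triangle x e.1 b.1
  have := dist_triangle_right x e.1 b.1
  have : |dist x b.1 - b.2| ≤ s + 2 * t := abs_le.mpr ⟨by linarith, by linarith⟩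
  exact this

end PseudoMetricSpace

lemma measureReal_thickSphere_le {E : Type*} [NormedAddCommGroup E] [NormedSpace ℝ E]
    [FiniteDimensional ℝ E] [MeasurableSpace E] [BorelSpace E] (μ : Measure E)
    [μ.IsAddHaarMeasure] [Nontrivial E] {e : E × ℝ} {s : ℝ} (he : 0 ≤ e.2) (hs : 0 ≤ s) :
    μ.real (thickSphere e s) ≤
      finrank ℝ E * (e.2 + s) ^ (finrank ℝ E - 1) * (2 * s) * μ.real (ball 0 1) := by
  have hfinite : μ (closedBall e.1 (e.2 + s)) ≠ ∞ := measure_closedBall_lt_top.ne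
  have hsub := thickSphere_subset_closedBall_sdiff_ball (e := e) (s := s)
  obtain hse | hes := le_or_gt s e.2
  · exact (measureReal_mono hsub (measure_ne_top_of_subset sdiff_subset hfinite)).trans
      (measureReal_annulus_le μ e.1 hs hse)
  have hn : 1 ≤ finrank ℝ E := finrank_pos
  have hn' : (1 : ℝ) ≤ finrank ℝ E := mod_cast hn
  calc μ.real (thickSphere e s) ≤ μ.real (closedBall e.1 (e.2 + s)) :=
        measureReal_mono (hsub.trans sdiff_subset) hfinite
    _ = 1 * (e.2 + s) ^ (finrank ℝ E - 1) * (e.2 + s) * μ.real (ball 0 1) := by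
        rw [Measure.addHaar_real_closedBall _ _ (by positivity), one_mul, ← pow_succ,
          Nat.sub_add_cancel hn]
    _ ≤ _ := by
        gcongr
        linarith

end ThickSphere

section DensityDecomposition

variable {d : ℕ} {A B : Finset (Ed d × ℝ)} {U : ℝ} {e : Ed d × ℝ}

/-- Some ball about `e` with radius `1 ≤ ρ ≤ 16 * 2 ^ k` contains at least `U * ρ` of the points of
`A` at the dyadic scale `2 ^ k` of `e`. -/
def DenseAt (A : Finset (Ed d × ℝ)) (U : ℝ) (e : Ed d × ℝ) : Prop :=
  ∃ ρ, 1 ≤ ρ ∧ ρ ≤ 16 * 2 ^ dyadicScale e.2 ∧ U * ρ ≤ (sameScaleBall A e ρ).card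

lemma denseAt_one (he : e ∈ A) : DenseAt A 1 e := by
  have hk : (1 : ℝ) ≤ 2 ^ dyadicScale e.2 := one_le_pow₀ one_le_two
  have hcard : 0 < (sameScaleBall A e 1).card :=
    Finset.card_pos.mpr ⟨e, Finset.mem_filter.mpr ⟨he, rfl, by simp⟩⟩
  exact ⟨1, le_rfl, by linarith, by rw [one_mul]; exact_mod_cast hcard⟩

lemma DenseAt.le_card (h : DenseAt A U e) (hU : 0 ≤ U) : U ≤ A.card := by
  obtain ⟨ρ, hρ, -, hcard⟩ := h
  calc U ≤ U * ρ := le_mul_of_one_le_right hU hρ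
    _ ≤ (sameScaleBall A e ρ).card := hcard
    _ ≤ A.card := Nat.cast_le.mpr (Finset.card_filter_le _ _)

lemma exists_denseAt_not_denseAt (he : e ∈ A) :
    ∃ ν : ℕ, DenseAt A (2 ^ ν) e ∧ ¬ DenseAt A (2 ^ (ν + 1)) e := by
  have hbound : ∃ ν : ℕ, ¬ DenseAt A (2 ^ ν) e := ⟨A.card, fun h =>
    (h.le_card (by positivity)).not_gt (mod_cast Nat.lt_two_pow_self)⟩
  obtain ⟨ν, hν, hν'⟩ := Nat.exists_not_and_succ_of_not_zero_of_exists
    (p := fun ν => ¬ DenseAt A (2 ^ ν) e) (by simpa using denseAt_one he) hbound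
  exact ⟨ν, not_not.mp hν, hν'⟩

lemma DensityLE.of_not_denseAt (hBA : B ⊆ A) (h : ∀ e ∈ B, ¬ DenseAt A U e) : DensityLE B U :=
  fun e he ρ hρ hρ' => by
    by_contra! hlt
    refine h e he ⟨ρ, hρ, hρ', hlt.le.trans ?_⟩
    exact Nat.cast_le.mpr (Finset.card_le_card (sameScaleBall_mono hBA e ρ))

lemma exists_disjoint_denseAt_cover (h : ∀ e ∈ B, DenseAt A U e) :
    ∃ u ⊆ B, ∃ ρ : Ed d × ℝ → ℝ,
      (∀ b ∈ u, 1 ≤ ρ b ∧ ρ b ≤ 16 * 2 ^ dyadicScale b.2 ∧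
        U * ρ b ≤ (sameScaleBall A b (ρ b)).card) ∧
      (u : Set (Ed d × ℝ)).PairwiseDisjoint (fun b => sameScaleBall A b (ρ b)) ∧
      ∀ e ∈ B, ∃ b ∈ u, dist e b ≤ 5 * ρ b := by
  choose! ρ hρ using h
  obtain ⟨R, hR⟩ := (B.finite_toSet.image ρ).bddAbove
  obtain ⟨u, hu, hdisj, hcover⟩ := Vitali.exists_disjoint_subfamily_covering_enlargement_closedBall
    (B : Set (Ed d × ℝ)) id ρ R (fun e he => hR (mem_image_of_mem ρ he)) 5 (by norm_num)
  lift u to Finset (Ed d × ℝ) using B.finite_toSet.subset hu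
  refine ⟨u, Finset.coe_subset.mp hu, ρ, fun b hb => hρ b (hu hb), fun b hb b' hb' hne => ?_,
    fun e he => ?_⟩
  · have hball : ∀ b, ∀ e ∈ sameScaleBall A b (ρ b), e ∈ closedBall b (ρ b) := fun b e he =>
      mem_closedBall'.mpr (Finset.mem_filter.mp he).2.2
    exact Finset.disjoint_left.mpr fun e he he' =>
      Set.disjoint_left.mp (hdisj hb hb' hne) (hball b e he) (hball b' e he')
  · obtain ⟨b, hb, hsub⟩ := hcover e he
    exact ⟨b, hb, hsub (mem_closedBall_self (by linarith [hρ e he]))⟩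

lemma card_sameScaleBall_mul_pow_le (hA : ∀ e ∈ A, 1 ≤ e.2) (b : Ed d × ℝ) (hb : 0 ≤ b.2)
    (ρ : ℝ) (n : ℕ) :
    (sameScaleBall A b ρ).card * b.2 ^ n ≤ 2 ^ n * ∑ e ∈ sameScaleBall A b ρ, e.2 ^ n := by
  rw [Finset.mul_sum, ← nsmul_eq_mul]
  refine Finset.card_nsmul_le_sum _ _ _ fun e he => ?_
  obtain ⟨heA, hscale, -⟩ := Finset.mem_filter.mp he
  rw [← mul_pow]
  refine pow_le_pow_left₀ hb ?_ n
  calc b.2 ≤ 2 * 2 ^ dyadicScale b.2 := (lt_two_mul_two_pow_dyadicScale _).le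
    _ ≤ 2 * e.2 := by
        rw [← hscale]
        gcongr
        exact two_pow_dyadicScale_le (hA e heA)

lemma exists_mul_measureReal_thickSphere_le (hd : 1 ≤ d) :
    ∃ C, 0 ≤ C ∧ ∀ A : Finset (Ed d × ℝ), (∀ e ∈ A, 1 ≤ e.2) → ∀ U, 0 ≤ U → ∀ b, 1 ≤ b.2 →
      ∀ ρ, 0 ≤ ρ → ρ ≤ 16 * 2 ^ dyadicScale b.2 → U * ρ ≤ (sameScaleBall A b ρ).card →
        U * volume.real (thickSphere b (11 * ρ)) ≤
          C * ∑ e ∈ sameScaleBall A b ρ, e.2 ^ (d - 1) := by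
  have : NeZero d := ⟨by omega⟩
  set V := volume.real (ball (0 : Ed d) 1)
  refine ⟨d * 177 ^ (d - 1) * 22 * V * 2 ^ (d - 1), by positivity,
    fun A hA U hU b hb ρ hρ hρb hcard => ?_⟩
  have hvol := measureReal_thickSphere_le volume (e := b) (s := 11 * ρ) (by linarith) (by linarith)
  rw [finrank_euclideanSpace_fin] at hvol
  have hk := two_pow_dyadicScale_le hb
  calc U * volume.real (thickSphere b (11 * ρ))
      ≤ U * (d * (177 * b.2) ^ (d - 1) * (2 * (11 * ρ)) * V) := by
        refine mul_le_mul_of_nonneg_left (hvol.trans ?_) hU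
        gcongr
        linarith
    _ = d * 177 ^ (d - 1) * 22 * V * (U * ρ * b.2 ^ (d - 1)) := by rw [mul_pow]; ring
    _ ≤ d * 177 ^ (d - 1) * 22 * V * (2 ^ (d - 1) * ∑ e ∈ sameScaleBall A b ρ, e.2 ^ (d - 1)) := by
        have hb₀ : 0 ≤ b.2 := by linarith
        refine mul_le_mul_of_nonneg_left (le_trans ?_
          (card_sameScaleBall_mul_pow_le hA b hb₀ ρ (d - 1))) (by positivity)
        gcongr
    _ = _ := by ring

lemma exists_mul_measureReal_cover_le (hd : 1 ≤ d) :
    ∃ C, 0 ≤ C ∧ ∀ A B : Finset (Ed d × ℝ), (∀ e ∈ A, 1 ≤ e.2) → B ⊆ A → ∀ U, 0 ≤ U →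
      (∀ e ∈ B, DenseAt A U e) → ∃ W : Set (Ed d), volume W ≠ ∞ ∧
        (∀ e ∈ B, thickSphere e (1 / 5) ⊆ W) ∧
        U * volume.real W ≤ C * ∑ e ∈ A, e.2 ^ (d - 1) := by
  obtain ⟨C, hC₀, hC⟩ := exists_mul_measureReal_thickSphere_le hd
  refine ⟨C, hC₀, fun A B hA hBA U hU hB => ?_⟩
  classical
  obtain ⟨u, huB, ρ, hρ, hdisj, hcover⟩ := exists_disjoint_denseAt_cover hB
  refine ⟨⋃ b ∈ u, thickSphere b (11 * ρ b), ?_, fun e he x hx => ?_, ?_⟩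
  · exact (measure_biUnion_lt_top u.finite_toSet fun b _ => measure_lt_top_of_subset
      (thickSphere_subset_closedBall_sdiff_ball.trans sdiff_subset)
      measure_closedBall_lt_top.ne).ne
  · obtain ⟨b, hb, hdist⟩ := hcover e he
    have hx' : |dist x b.1 - b.2| ≤ _ := thickSphere_subset_thickSphere hdist hx
    refine mem_biUnion hb (hx'.trans ?_)
    linarith [hρ b hb]
  calc U * volume.real (⋃ b ∈ u, thickSphere b (11 * ρ b))
      ≤ ∑ b ∈ u, U * volume.real (thickSphere b (11 * ρ b)) := by
        rw [← Finset.mul_sum]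
        gcongr
        exact measureReal_biUnion_finset_le _ _
    _ ≤ ∑ b ∈ u, C * ∑ e ∈ sameScaleBall A b (ρ b), e.2 ^ (d - 1) :=
        Finset.sum_le_sum fun b hb => by
          obtain ⟨hρ₁, hρk, hcard⟩ := hρ b hb
          exact hC A hA U hU b (hA b (hBA (huB hb))) _ (by linarith) hρk hcard
    _ = C * ∑ e ∈ u.biUnion fun b => sameScaleBall A b (ρ b), e.2 ^ (d - 1) := by
        rw [← Finset.mul_sum, Finset.sum_biUnion hdisj]
    _ ≤ C * ∑ e ∈ A, e.2 ^ (d - 1) := by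
        refine mul_le_mul_of_nonneg_left (Finset.sum_le_sum_of_subset_of_nonneg ?_ ?_) hC₀
        · exact Finset.biUnion_subset.mpr fun b _ => Finset.filter_subset _ _
        · exact fun e he _ => pow_nonneg (by linarith [hA e he]) _

end DensityDecomposition

section RestrictedEstimate

lemma eLpNorm_le_eLpNorm_mul_rpow_measure_of_support_subset {α F : Type*} [MeasurableSpace α]
    {μ : Measure α} [NormedAddCommGroup F] {f : α → F} (hf : AEStronglyMeasurable f μ) {W : Set α}
    (hW : f.support ⊆ W) {p q : ℝ≥0∞} (hpq : p ≤ q) :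
    eLpNorm f p μ ≤ eLpNorm f q μ * μ W ^ (1 / p.toReal - 1 / q.toReal) := by
  have h := eLpNorm_le_eLpNorm_mul_rpow_measure_univ hpq (hf.restrict (s := W))
  rwa [eLpNorm_restrict_eq_of_support_subset hW, eLpNorm_restrict_eq_of_support_subset hW,
    Measure.restrict_apply_univ] at h

lemma summable_one_add_mul_two_rpow_neg {δ : ℝ} (hδ : 0 < δ) :
    Summable fun ν : ℕ => (1 + (ν : ℝ)) * (2 : ℝ) ^ (-(ν * δ)) := by
  have hr : ‖(2 : ℝ) ^ (-δ)‖ < 1 := by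
    rw [Real.norm_of_nonneg (by positivity)]
    exact Real.rpow_lt_one_of_one_lt_of_neg one_lt_two (by linarith)
  refine ((summable_geometric_of_norm_lt_one hr).add
    (summable_pow_mul_geometric_of_norm_lt_one 1 hr)).congr fun ν => ?_
  rw [← Real.rpow_natCast, ← Real.rpow_mul zero_le_two, pow_one, neg_mul, mul_comm δ]
  ring

lemma eLpNorm_sum_le_tsum_of_fiberwise {α ι F : Type*} [MeasurableSpace α] {μ : Measure α}
    [NormedAddCommGroup F] {s : Finset ι} {g : ι → α → F} {q : ℝ≥0∞} (hq : 1 ≤ q)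
    (hg : ∀ i ∈ s, AEStronglyMeasurable (g i) μ) (ν : ι → ℕ) {a : ℕ → ℝ} (ha₀ : ∀ n, 0 ≤ a n)
    (ha : Summable a)
    (h : ∀ n, eLpNorm (fun x => ∑ i ∈ s with ν i = n, g i x) q μ ≤ .ofReal (a n)) :
    eLpNorm (fun x => ∑ i ∈ s, g i x) q μ ≤ .ofReal (∑' n, a n) :=
  calc eLpNorm (fun x => ∑ i ∈ s, g i x) q μ
      = eLpNorm (∑ n ∈ s.image ν, fun x => ∑ i ∈ s with ν i = n, g i x) q μ := by
        congr 1
        funext x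
        rw [Finset.sum_apply, Finset.sum_fiberwise_of_maps_to fun i => Finset.mem_image_of_mem ν]
    _ ≤ ∑ n ∈ s.image ν, eLpNorm (fun x => ∑ i ∈ s with ν i = n, g i x) q μ :=
        eLpNorm_sum_le (fun n _ => Finset.aestronglyMeasurable_fun_sum _ fun i hi =>
          hg i (Finset.filter_subset _ _ hi)) hq
    _ ≤ .ofReal (∑ n ∈ s.image ν, a n) := by
        rw [ENNReal.ofReal_sum_of_nonneg fun n _ => ha₀ n]
        exact Finset.sum_le_sum fun n _ => h n
    _ ≤ .ofReal (∑' n, a n) := ENNReal.ofReal_le_ofReal (ha.sum_le_tsum _ fun n _ => ha₀ n)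

lemma mul_rpow_le_of_sq_le_of_mul_le {C C' S N V m α : ℝ} {ν : ℕ} (hC : 0 ≤ C) (hC' : 0 ≤ C')
    (hS : 0 ≤ S) (hV : 0 ≤ V) (hα : 0 ≤ α)
    (hNS : N ^ 2 ≤ C * (1 + ν) * 2 ^ ((ν : ℝ) / m) * S) (hVS : 2 ^ ν * V ≤ C' * S) :
    N * V ^ α ≤ √C * C' ^ α * ((1 + ν) * 2 ^ (-(ν * (α - 1 / (2 * m))))) * S ^ (1 / 2 + α) := by
  have hV_le : V ^ α ≤ C' ^ α * S ^ α * 2 ^ (-(ν * α)) :=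
    calc V ^ α ≤ (C' * S * 2 ^ (-(ν : ℝ))) ^ α := by
          gcongr
          rw [Real.rpow_neg zero_le_two, ← div_eq_mul_inv, Real.rpow_natCast,
            le_div_iff₀ (by positivity)]
          linarith
      _ = C' ^ α * S ^ α * 2 ^ (-(ν * α)) := by
          rw [Real.mul_rpow (by positivity) (by positivity), Real.mul_rpow hC' hS,
            ← Real.rpow_mul zero_le_two, neg_mul]
  have hN_le : N ≤ √C * (1 + ν) * 2 ^ (ν / (2 * m)) * S ^ (1 / 2 : ℝ) :=
    calc N ≤ √(C * (1 + ν) * 2 ^ ((ν : ℝ) / m) * S) := Real.le_sqrt_of_sq_le hNS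
      _ = √C * √(1 + ν) * 2 ^ (ν / (2 * m)) * S ^ (1 / 2 : ℝ) := by
          rw [Real.sqrt_mul (by positivity), Real.sqrt_mul (by positivity), Real.sqrt_mul hC,
            Real.sqrt_eq_rpow S, Real.sqrt_eq_rpow (2 ^ _), ← Real.rpow_mul zero_le_two,
            div_mul_div_comm, mul_one, mul_comm m]
      _ ≤ _ := by
          gcongr
          exact (Real.sqrt_le_left (by positivity)).mpr (by nlinarith [Nat.cast_nonneg (α := ℝ) ν])
  calc N * V ^ α ≤ (√C * (1 + ν) * 2 ^ (ν / (2 * m)) * S ^ (1 / 2 : ℝ)) *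
        (C' ^ α * S ^ α * 2 ^ (-(ν * α))) := by gcongr
    _ = √C * C' ^ α * ((1 + ν) * (2 ^ (ν / (2 * m)) * 2 ^ (-(ν * α)))) *
        (S ^ (1 / 2 : ℝ) * S ^ α) := by ring
    _ = _ := by
        rw [← Real.rpow_add_of_nonneg hS (by norm_num) hα, ← Real.rpow_add zero_lt_two]
        congr 5
        ring

variable {d : ℕ} {ψ₀ : Ed d → ℂ}

lemma Admissible.continuous_sum_mul_Fyr (hψ : Admissible d ψ₀) {A : Finset (Ed d × ℝ)}
    (hA : ∀ e ∈ A, 0 < e.2) (c : Ed d × ℝ → ℂ) :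
    Continuous fun x => ∑ e ∈ A, c e * Fyr d ψ₀ e.1 e.2 x :=
  continuous_finsetSum _ fun e he => continuous_const.mul (hψ.continuous_Fyr e.1 (hA e he))

lemma Admissible.support_sum_mul_Fyr_subset (hψ : Admissible d ψ₀) {A : Finset (Ed d × ℝ)}
    {W : Set (Ed d)} (hW : ∀ e ∈ A, thickSphere e (1 / 5) ⊆ W) (c : Ed d × ℝ → ℂ) :
    (fun x => ∑ e ∈ A, c e * Fyr d ψ₀ e.1 e.2 x).support ⊆ W := fun x hx => by
  obtain ⟨e, he, hne⟩ := Finset.exists_ne_zero_of_sum_ne_zero hx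
  refine hW e he (?_ : |dist x e.1 - e.2| ≤ 1 / 5)
  rw [dist_eq_norm]
  exact hψ.abs_norm_sub_sub_le_of_Fyr_ne_zero (right_ne_zero_of_mul hne)

lemma Admissible.exists_eLpNorm_sum_mul_Fyr_le_of_density (hψ : Admissible d ψ₀) (hd : 4 ≤ d)
    {q : ℝ} (hq₁ : 1 ≤ q) (hq₂ : q ≤ 2) : ∃ C, 0 ≤ C ∧ ∀ A B : Finset (Ed d × ℝ),
      IsSeparatedConfig A → B ⊆ A → ∀ ν : ℕ, DensityLE B (2 ^ (ν + 1)) →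
      (∀ e ∈ B, DenseAt A (2 ^ ν) e) → ∀ c : Ed d × ℝ → ℂ, (∀ e, ‖c e‖ ≤ 1) →
        eLpNorm (fun x => ∑ e ∈ B, c e * Fyr d ψ₀ e.1 e.2 x) (.ofReal q) volume ≤
          .ofReal (C * ((1 + ν) * 2 ^ (-(ν * (1 / q - 1 / 2 - 1 / ((d : ℝ) - 1))))) *
            (∑ e ∈ A, e.2 ^ (d - 1)) ^ (1 / q)) := by
  obtain ⟨K, hf⟩ := hψ.exists_isSphericalFamily_FyrL2 (by omega : 1 ≤ d)
  obtain ⟨C, hC₀, hC⟩ := hf.exists_norm_sum_sq_le hd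
  obtain ⟨C', hC'₀, hC'⟩ := exists_mul_measureReal_cover_le (by omega : 1 ≤ d)
  have hα : 0 ≤ 1 / q - 1 / 2 := sub_nonneg.mpr (one_div_le_one_div_of_le (by linarith) hq₂)
  refine ⟨√C * C' ^ (1 / q - 1 / 2), by positivity, fun A B hA hBA ν hdens hdense c hc => ?_⟩
  obtain ⟨W, hW, hBW, hWle⟩ := hC' A B hA.one_le_radius hBA (2 ^ ν) (by positivity) hdense
  have hB := hA.mono hBA
  have hpos : ∀ e ∈ B, 0 < e.2 := fun e he => one_pos.trans_le (hB.one_le_radius e he)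
  have hS {D : Finset (Ed d × ℝ)} (hD : IsSeparatedConfig D) : ∀ e ∈ D, 0 ≤ e.2 ^ (d - 1) :=
    fun e he => pow_nonneg (by linarith [hD.one_le_radius e he]) _
  have hSle : ∑ e ∈ B, e.2 ^ (d - 1) ≤ ∑ e ∈ A, e.2 ^ (d - 1) :=
    Finset.sum_le_sum_of_subset_of_nonneg hBA fun e he _ => hS hA e he
  have hN := (hC B hB ν hdens c hc).trans (mul_le_mul_of_nonneg_left hSle (by positivity))
  have hNV := mul_rpow_le_of_sq_le_of_mul_le hC₀ hC'₀ (Finset.sum_nonneg (hS hA))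
    measureReal_nonneg hα hN hWle
  rw [add_sub_cancel, mul_div_cancel₀ _ (two_ne_zero' ℝ)] at hNV
  refine le_trans ?_ (ENNReal.ofReal_le_ofReal hNV)
  have hHolder := eLpNorm_le_eLpNorm_mul_rpow_measure_of_support_subset (μ := volume)
    (hψ.continuous_sum_mul_Fyr hpos c).aestronglyMeasurable
    (hψ.support_sum_mul_Fyr_subset hBW c) (ENNReal.ofReal_le_ofReal hq₂)
  rwa [ENNReal.toReal_ofReal (by linarith), ENNReal.toReal_ofReal zero_le_two, ENNReal.ofReal_ofNat,
    hψ.eLpNorm_sum_mul_Fyr hpos, ← ENNReal.ofReal_toReal hW,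
    ENNReal.ofReal_rpow_of_nonneg ENNReal.toReal_nonneg hα,
    ← ENNReal.ofReal_mul (norm_nonneg _)] at hHolder

lemma one_div_sub_half_sub_one_div_pos {q D : ℝ} (hq : 0 < q) (hD : 1 < D)
    (h : q < (2 * D - 2) / (D + 1)) : 0 < 1 / q - 1 / 2 - 1 / (D - 1) := by
  have hD₁ : 0 < D - 1 := by linarith
  have hqD : q * (D + 1) < 2 * D - 2 := (lt_div_iff₀ (by linarith)).mp h
  have heq : 1 / q - 1 / 2 - 1 / (D - 1) = (2 * D - 2 - q * (D + 1)) / (2 * q * (D - 1)) := by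
    field_simp
    ring
  rw [heq]
  exact div_pos (by linarith) (by positivity)

lemma Admissible.exists_eLpNorm_sum_mul_Fyr_le_of_norm_le_one (hψ : Admissible d ψ₀) (hd : 4 ≤ d)
    {q : ℝ} (hq₁ : 1 ≤ q) (hq₂ : q < (2 * (d : ℝ) - 2) / (d + 1)) : ∃ C, 0 ≤ C ∧
      ∀ A : Finset (Ed d × ℝ), IsSeparatedConfig A → ∀ c : Ed d × ℝ → ℂ, (∀ e, ‖c e‖ ≤ 1) →
        eLpNorm (fun x => ∑ e ∈ A, c e * Fyr d ψ₀ e.1 e.2 x) (.ofReal q) volume ≤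
          .ofReal (C * (∑ e ∈ A, e.2 ^ (d - 1)) ^ (1 / q)) := by
  have hd' : (4 : ℝ) ≤ d := mod_cast hd
  have hq_le : q ≤ 2 := hq₂.le.trans ((div_le_iff₀ (by linarith)).mpr (by linarith))
  have hδ := one_div_sub_half_sub_one_div_pos (by linarith) (by linarith) hq₂
  set δ := 1 / q - 1 / 2 - 1 / ((d : ℝ) - 1)
  obtain ⟨C, hC₀, hC⟩ := hψ.exists_eLpNorm_sum_mul_Fyr_le_of_density hd hq₁ hq_le
  refine ⟨C * ∑' ν : ℕ, (1 + (ν : ℝ)) * (2 : ℝ) ^ (-(ν * δ)),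
    mul_nonneg hC₀ (tsum_nonneg fun ν => by positivity), fun A hA c hc => ?_⟩
  have hlevel : ∀ e ∈ A, ∃ ν : ℕ, DenseAt A (2 ^ ν) e ∧ ¬ DenseAt A (2 ^ (ν + 1)) e :=
    fun e he => exists_denseAt_not_denseAt he
  choose! ν hdense hnot using hlevel
  have hpos : ∀ e ∈ A, 0 < e.2 := fun e he => one_pos.trans_le (hA.one_le_radius e he)
  have hS : 0 ≤ ∑ e ∈ A, e.2 ^ (d - 1) := Finset.sum_nonneg fun e he => pow_nonneg (hpos e he).le _
  rw [← tsum_mul_left, ← tsum_mul_right]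
  refine eLpNorm_sum_le_tsum_of_fiberwise (ENNReal.one_le_ofReal.mpr hq₁) (fun e he =>
    (continuous_const.mul (hψ.continuous_Fyr e.1 (hpos e he))).aestronglyMeasurable) ν
    (fun n => by positivity)
    (((summable_one_add_mul_two_rpow_neg hδ).mul_left C).mul_right _) fun n => ?_
  have hsub : A.filter (ν · = n) ⊆ A := Finset.filter_subset _ _
  refine hC A _ hA hsub n (.of_not_denseAt hsub fun e he => ?_) (fun e he => ?_) c hc
  all_goals obtain ⟨heA, rfl⟩ := Finset.mem_filter.mp he
  exacts [hnot e heA, hdense e heA]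

end RestrictedEstimate

/-- The two-sided geometric sequence `2 ^ (-c |n|)`, the interaction of two levels at distance `n`
in an interpolation argument. -/
def levelDecay (c : ℝ) (n : ℤ) : ℝ := 2 ^ (-(|(n : ℝ)| * c))

lemma levelDecay_nonneg (c : ℝ) (n : ℤ) : 0 ≤ levelDecay c n := by
  rw [levelDecay]; positivity

lemma levelDecay_neg (c : ℝ) (n : ℤ) : levelDecay c (-n) = levelDecay c n := by
  simp only [levelDecay, Int.cast_neg, abs_neg]

lemma summable_levelDecay {c : ℝ} (hc : 0 < c) : Summable (levelDecay c) := by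
  have hnat : Summable fun n : ℕ => (2 : ℝ) ^ (-((n : ℝ) * c)) :=
    (summable_one_add_mul_two_rpow_neg hc).of_nonneg_of_le (fun n => by positivity) fun n =>
      le_mul_of_one_le_left (by positivity) (le_add_of_nonneg_right n.cast_nonneg)
  refine .of_nat_of_neg (hnat.congr fun n => ?_) (hnat.congr fun n => ?_)
  · simp only [levelDecay, Int.cast_natCast, Nat.abs_cast]
  · simp only [levelDecay, Int.cast_neg, Int.cast_natCast, abs_neg, Nat.abs_cast]

lemma sum_levelDecay_sub_le_tsum {c : ℝ} (hc : 0 < c) (J : Finset ℤ) (j : ℤ) :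
    ∑ k ∈ J, levelDecay c (j - k) ≤ ∑' n, levelDecay c n := by
  rw [← Finset.sum_image (f := levelDecay c) fun x _ y _ (h : j - x = j - y) =>
    sub_right_injective h]
  exact (summable_levelDecay hc).sum_le_tsum _ fun n _ => levelDecay_nonneg c n

lemma sum_sum_levelDecay_mul_add_le {c : ℝ} (hc : 0 < c) (J : Finset ℤ) {a : ℤ → ℝ}
    (ha : ∀ j, 0 ≤ a j) :
    ∑ j ∈ J, ∑ k ∈ J, levelDecay c (j - k) * (a j + a k) ≤
      2 * (∑' n, levelDecay c n) * ∑ j ∈ J, a j := by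
  have hsymm : ∑ j ∈ J, ∑ k ∈ J, levelDecay c (j - k) * a k =
      ∑ j ∈ J, ∑ k ∈ J, levelDecay c (j - k) * a j := by
    rw [Finset.sum_comm]
    refine Finset.sum_congr rfl fun j _ => Finset.sum_congr rfl fun k _ => ?_
    rw [← levelDecay_neg, neg_sub]
  have hschur : ∑ j ∈ J, ∑ k ∈ J, levelDecay c (j - k) * a j ≤
      (∑' n, levelDecay c n) * ∑ j ∈ J, a j := by
    rw [Finset.mul_sum]
    refine Finset.sum_le_sum fun j _ => ?_
    rw [← Finset.sum_mul]
    exact mul_le_mul_of_nonneg_right (sum_levelDecay_sub_le_tsum hc J j) (ha j)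
  simp_rw [mul_add, Finset.sum_add_distrib]
  rw [hsymm]
  linarith

section PairInteraction

variable {p q₀ q₁ : ℝ}

lemma exists_conjugate_exponents_between {a b : ℝ} (ha : 0 < a) (hap : a < p) (hpb : p < b) :
    ∃ q₀ q₁, a < q₀ ∧ q₀ < p ∧ p < q₁ ∧ q₁ < b ∧ p / (2 * q₀) + p / (2 * q₁) = 1 := by
  have hp : 0 < p := ha.trans hap
  have hb_inv : 0 < 1 / b := one_div_pos.mpr (hp.trans hpb)
  have hgap_a : 0 < 1 / a - 1 / p := sub_pos.mpr (one_div_lt_one_div_of_lt ha hap)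
  have hgap_b : 0 < 1 / p - 1 / b := sub_pos.mpr (one_div_lt_one_div_of_lt hp hpb)
  obtain ⟨s, hs, hs_lt⟩ := exists_between (lt_min hgap_a hgap_b)
  obtain ⟨hsa, hsb⟩ := lt_min_iff.mp hs_lt
  have hs_sub : 0 < 1 / p - s := by linarith
  refine ⟨1 / (1 / p + s), 1 / (1 / p - s), ?_, ?_, ?_, ?_, ?_⟩
  · rw [lt_one_div ha (by linarith)]; linarith
  · rw [one_div_lt (by linarith) hp]; linarith
  · rw [lt_one_div hp hs_sub]; linarith
  · rw [one_div_lt hs_sub (hp.trans hpb)]; linarith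
  · have hdiv (t : ℝ) : p / (2 * (1 / t)) = p * t / 2 := by
      rw [mul_one_div, div_div_eq_mul_div]
    rw [hdiv, hdiv]
    field_simp
    ring

lemma mul_rpow_half_le_levelDecay_mul_add {C S T : ℝ} {j k : ℤ} (hC : 0 ≤ C) (hS : 0 ≤ S)
    (hT : 0 ≤ T) (hp : 0 < p) (hq₀ : 0 < q₀) (hq₁ : 0 < q₁)
    (hconj : p / (2 * q₀) + p / (2 * q₁) = 1) (hkj : k ≤ j) :
    (C * 2 ^ (j : ℝ) * S ^ (1 / q₀)) ^ (p / 2) * (C * 2 ^ (k : ℝ) * T ^ (1 / q₁)) ^ (p / 2) ≤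
      C ^ p * (levelDecay (p * (p / (2 * q₀) - 1 / 2)) (j - k) *
        (2 ^ (j * p) * S + 2 ^ (k * p) * T)) := by
  set θ := p / (2 * q₀)
  set η := p / (2 * q₁)
  have hθ₀ : 0 ≤ θ := by positivity
  have hη₀ : 0 ≤ η := by positivity
  have hS' : 0 ≤ 2 ^ (j * p) * S := by positivity
  have hT' : 0 ≤ 2 ^ (k * p) * T := by positivity
  have hroot {S : ℝ} (hS : 0 ≤ S) (x q : ℝ) :
      (C * 2 ^ x * S ^ (1 / q)) ^ (p / 2) = C ^ (p / 2) * 2 ^ (x * p / 2) * S ^ (p / (2 * q)) := by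
    rw [Real.mul_rpow (by positivity) (by positivity), Real.mul_rpow hC (by positivity),
      ← Real.rpow_mul zero_le_two, ← Real.rpow_mul hS, div_mul_div_comm, one_mul, mul_comm q,
      mul_div_assoc]
  have hamgm : (2 ^ (j * p) * S) ^ θ * (2 ^ (k * p) * T) ^ η ≤
      2 ^ (j * p) * S + 2 ^ (k * p) * T :=
    (Real.geom_mean_le_arith_mean2_weighted hθ₀ hη₀ hS' hT' hconj).trans <|
      add_le_add (mul_le_of_le_one_left hS' (by linarith)) (mul_le_of_le_one_left hT' (by linarith))
  have hpow : (2 : ℝ) ^ (j * p / 2) * 2 ^ (k * p / 2) =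
      levelDecay (p * (θ - 1 / 2)) (j - k) * (2 ^ (j * p * θ) * 2 ^ (k * p * η)) := by
    rw [levelDecay, Int.cast_sub, abs_of_nonneg (sub_nonneg.mpr (Int.cast_le.mpr hkj)),
      ← Real.rpow_add two_pos, ← Real.rpow_add two_pos, ← Real.rpow_add two_pos,
      eq_sub_of_add_eq' hconj]
    ring_nf
  calc
    _ = C ^ (p / 2 + p / 2) * ((2 ^ (j * p / 2) * 2 ^ (k * p / 2)) * (S ^ θ * T ^ η)) := by
      rw [hroot hS, hroot hT, Real.rpow_add_of_nonneg hC (by positivity) (by positivity)]; ring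
    _ = C ^ p * (levelDecay (p * (θ - 1 / 2)) (j - k) *
          ((2 ^ (j * p) * S) ^ θ * (2 ^ (k * p) * T) ^ η)) := by
      rw [add_halves, hpow, Real.mul_rpow (by positivity) hS, Real.mul_rpow (by positivity) hT,
        ← Real.rpow_mul zero_le_two, ← Real.rpow_mul zero_le_two]; ring
    _ ≤ _ := by
      gcongr
      exact levelDecay_nonneg _ _

variable {α E : Type*} [MeasurableSpace α] {μ : Measure α} [NormedAddCommGroup E]

lemma lintegral_rpow_half_rpow_le_of_eLpNorm_le {w : α → E} {q Q : ℝ} (hp : 0 < p) (hq : 0 < q)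
    (hQ : 0 ≤ Q) (hw : eLpNorm w (.ofReal q) μ ≤ .ofReal Q) :
    (∫⁻ x, (‖w x‖ₑ ^ (p / 2)) ^ (2 * q / p) ∂μ) ^ (1 / (2 * q / p)) ≤ .ofReal (Q ^ (p / 2)) := by
  rw [eLpNorm_eq_lintegral_rpow_enorm_toReal (ENNReal.ofReal_pos.mpr hq).ne' ENNReal.ofReal_ne_top,
    ENNReal.toReal_ofReal hq.le] at hw
  have hexp : p / 2 * (2 * q / p) = q := by field_simp
  have hexp' : 1 / (2 * q / p) = 1 / q * (p / 2) := by field_simp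
  simp_rw [← ENNReal.rpow_mul, hexp]
  rw [hexp', ENNReal.rpow_mul, ← ENNReal.ofReal_rpow_of_nonneg hQ (by positivity)]
  exact ENNReal.rpow_le_rpow hw (by positivity)

lemma lintegral_enorm_rpow_half_mul_le_of_eLpNorm_le {u v : α → E} (hu : AEStronglyMeasurable u μ)
    (hv : AEStronglyMeasurable v μ) {M N : ℝ} (hp : 0 < p) (hq₀ : 0 < q₀) (hq₁ : 0 < q₁)
    (hconj : p / (2 * q₀) + p / (2 * q₁) = 1) (hM : 0 ≤ M) (hN : 0 ≤ N)
    (huM : eLpNorm u (.ofReal q₀) μ ≤ .ofReal M) (hvN : eLpNorm v (.ofReal q₁) μ ≤ .ofReal N) :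
    ∫⁻ x, ‖u x‖ₑ ^ (p / 2) * ‖v x‖ₑ ^ (p / 2) ∂μ ≤ .ofReal (M ^ (p / 2) * N ^ (p / 2)) := by
  have hholder : Real.HolderConjugate (2 * q₀ / p) (2 * q₁ / p) :=
    { inv_add_inv_eq_inv := by rw [inv_div, inv_div, hconj, inv_one]
      left_pos := by positivity
      right_pos := by positivity }
  refine (ENNReal.lintegral_mul_le_Lp_mul_Lq μ hholder (hu.enorm.pow_const (p / 2))
    (hv.enorm.pow_const (p / 2))).trans ?_
  rw [ENNReal.ofReal_mul (by positivity)]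
  exact mul_le_mul' (lintegral_rpow_half_rpow_le_of_eLpNorm_le hp hq₀ hM huM)
    (lintegral_rpow_half_rpow_le_of_eLpNorm_le hp hq₁ hN hvN)

lemma enorm_sum_rpow_le_sum_sum_mul_rpow_half {ι : Type*} (hp : 0 < p) (hp₂ : p ≤ 2) (J : Finset ι)
    (g : ι → E) :
    ‖∑ j ∈ J, g j‖ₑ ^ p ≤ ∑ j ∈ J, ∑ k ∈ J, ‖g j‖ₑ ^ (p / 2) * ‖g k‖ₑ ^ (p / 2) := by
  have hp_half : 0 < p / 2 := by positivity
  have hhalf : ‖∑ j ∈ J, g j‖ₑ ^ (p / 2) ≤ ∑ j ∈ J, ‖g j‖ₑ ^ (p / 2) :=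
    (ENNReal.rpow_le_rpow (enorm_sum_le _ _) hp_half.le).trans <|
      Finset.le_sum_of_subadditive (· ^ (p / 2)) (ENNReal.zero_rpow_of_pos hp_half).le
        (fun a b => ENNReal.rpow_add_le_add_rpow a b hp_half.le (by linarith)) J _
  calc ‖∑ j ∈ J, g j‖ₑ ^ p = ‖∑ j ∈ J, g j‖ₑ ^ (p / 2) * ‖∑ j ∈ J, g j‖ₑ ^ (p / 2) := by
        rw [← ENNReal.rpow_add_of_nonneg _ _ hp_half.le hp_half.le, add_halves]
    _ ≤ _ := (mul_le_mul' hhalf hhalf).trans_eq (Finset.sum_mul_sum ..)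

variable {C : ℝ} {g : ℤ → α → E} {S : ℤ → ℝ}

lemma lintegral_enorm_rpow_half_mul_le_levelDecay (hp : 0 < p) (hq₀ : 0 < q₀) (hq₁ : 0 < q₁)
    (hconj : p / (2 * q₀) + p / (2 * q₁) = 1) (hC : 0 ≤ C)
    (hg : ∀ j, AEStronglyMeasurable (g j) μ) (hS : ∀ j, 0 ≤ S j)
    (h₀ : ∀ j, eLpNorm (g j) (.ofReal q₀) μ ≤ .ofReal (C * 2 ^ (j : ℝ) * S j ^ (1 / q₀)))
    (h₁ : ∀ j, eLpNorm (g j) (.ofReal q₁) μ ≤ .ofReal (C * 2 ^ (j : ℝ) * S j ^ (1 / q₁)))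
    (j k : ℤ) :
    ∫⁻ x, ‖g j x‖ₑ ^ (p / 2) * ‖g k x‖ₑ ^ (p / 2) ∂μ ≤
      .ofReal (C ^ p * (levelDecay (p * (p / (2 * q₀) - 1 / 2)) (j - k) *
        (2 ^ (j * p) * S j + 2 ^ (k * p) * S k))) := by
  wlog hkj : k ≤ j generalizing j k
  · simpa only [mul_comm (‖g j _‖ₑ ^ (p / 2)), ← levelDecay_neg _ (k - j), neg_sub,
      add_comm (2 ^ (k * p) * S k)] using this k j (le_of_not_ge hkj)
  have hSj := hS j
  have hSk := hS k
  exact (lintegral_enorm_rpow_half_mul_le_of_eLpNorm_le (hg j) (hg k) hp hq₀ hq₁ hconj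
    (by positivity) (by positivity) (h₀ j) (h₁ k)).trans <| ENNReal.ofReal_le_ofReal <|
      mul_rpow_half_le_levelDecay_mul_add hC hSj hSk hp hq₀ hq₁ hconj hkj

lemma lintegral_enorm_sum_rpow_le_of_eLpNorm_le (hp : 0 < p) (hp₂ : p ≤ 2) (hq₀ : 0 < q₀)
    (hq₀p : q₀ < p) (hq₁ : 0 < q₁) (hconj : p / (2 * q₀) + p / (2 * q₁) = 1) (hC : 0 ≤ C)
    (hg : ∀ j, AEStronglyMeasurable (g j) μ) (hS : ∀ j, 0 ≤ S j)
    (h₀ : ∀ j, eLpNorm (g j) (.ofReal q₀) μ ≤ .ofReal (C * 2 ^ (j : ℝ) * S j ^ (1 / q₀)))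
    (h₁ : ∀ j, eLpNorm (g j) (.ofReal q₁) μ ≤ .ofReal (C * 2 ^ (j : ℝ) * S j ^ (1 / q₁)))
    (J : Finset ℤ) :
    ∫⁻ x, ‖∑ j ∈ J, g j x‖ₑ ^ p ∂μ ≤
      .ofReal (C ^ p * (2 * (∑' n, levelDecay (p * (p / (2 * q₀) - 1 / 2)) n)) *
        ∑ j ∈ J, 2 ^ (j * p) * S j) := by
  have hrate : 0 < p * (p / (2 * q₀) - 1 / 2) := by
    refine mul_pos hp (sub_pos.mpr ?_)
    rw [div_lt_div_iff₀ two_pos (by positivity)]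
    linarith
  have ha (j : ℤ) : 0 ≤ 2 ^ (j * p) * S j := mul_nonneg (by positivity) (hS j)
  have hterm (j k : ℤ) : 0 ≤ C ^ p * (levelDecay (p * (p / (2 * q₀) - 1 / 2)) (j - k) *
      (2 ^ (j * p) * S j + 2 ^ (k * p) * S k)) :=
    mul_nonneg (by positivity) (mul_nonneg (levelDecay_nonneg _ _) (add_nonneg (ha j) (ha k)))
  have hmeas (j k : ℤ) : AEMeasurable (fun x => ‖g j x‖ₑ ^ (p / 2) * ‖g k x‖ₑ ^ (p / 2)) μ :=
    ((hg j).enorm.pow_const _).mul ((hg k).enorm.pow_const _)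
  calc
    _ ≤ ∫⁻ x, ∑ j ∈ J, ∑ k ∈ J, ‖g j x‖ₑ ^ (p / 2) * ‖g k x‖ₑ ^ (p / 2) ∂μ :=
      lintegral_mono fun x => enorm_sum_rpow_le_sum_sum_mul_rpow_half hp hp₂ J (g · x)
    _ = ∑ j ∈ J, ∑ k ∈ J, ∫⁻ x, ‖g j x‖ₑ ^ (p / 2) * ‖g k x‖ₑ ^ (p / 2) ∂μ := by
      rw [lintegral_finsetSum' _ fun j _ => Finset.aemeasurable_fun_sum _ fun k _ => hmeas j k]
      exact Finset.sum_congr rfl fun j _ => lintegral_finsetSum' _ fun k _ => hmeas j k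
    _ ≤ ∑ j ∈ J, ∑ k ∈ J, .ofReal (C ^ p * (levelDecay (p * (p / (2 * q₀) - 1 / 2)) (j - k) *
          (2 ^ (j * p) * S j + 2 ^ (k * p) * S k))) := by
      gcongr with j _ k _
      exact lintegral_enorm_rpow_half_mul_le_levelDecay hp hq₀ hq₁ hconj hC hg hS h₀ h₁ j k
    _ = .ofReal (∑ j ∈ J, ∑ k ∈ J, C ^ p * (levelDecay (p * (p / (2 * q₀) - 1 / 2)) (j - k) *
          (2 ^ (j * p) * S j + 2 ^ (k * p) * S k))) := by
      rw [ENNReal.ofReal_sum_of_nonneg fun j _ => Finset.sum_nonneg fun k _ => hterm j k]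
      exact Finset.sum_congr rfl fun j _ =>
        (ENNReal.ofReal_sum_of_nonneg fun k _ => hterm j k).symm
    _ ≤ _ := by
      refine ENNReal.ofReal_le_ofReal ?_
      simp_rw [← Finset.mul_sum]
      rw [mul_assoc]
      exact mul_le_mul_of_nonneg_left (sum_sum_levelDecay_mul_add_le hrate J ha) (by positivity)

end PairInteraction

section RestrictedType

variable {α ι : Type*} [MeasurableSpace α] {μ : Measure α} {F : ι → α → ℂ} {w : ι → ℝ}
  {A : Finset ι} {q C : ℝ}

/-- The weighted restricted `ℓ^q → L^q` inequality, with constant `C` and weights `w`, for the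
family `(F i)` indexed by `A`: coefficients are bounded by `1` on an arbitrary subfamily. -/
def RestrictedStrongType (μ : Measure α) (F : ι → α → ℂ) (w : ι → ℝ) (A : Finset ι) (q C : ℝ) :
    Prop :=
  ∀ B ⊆ A, ∀ c : ι → ℂ, (∀ i, ‖c i‖ ≤ 1) →
    eLpNorm (fun x => ∑ i ∈ B, c i * F i x) (.ofReal q) μ ≤ .ofReal (C * (∑ i ∈ B, w i) ^ (1 / q))

lemma RestrictedStrongType.mono {C' : ℝ} (h : RestrictedStrongType μ F w A q C) (hCC' : C ≤ C')
    (hw : ∀ i ∈ A, 0 ≤ w i) : RestrictedStrongType μ F w A q C' := fun B hB c hc =>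
  (h B hB c hc).trans <| ENNReal.ofReal_le_ofReal <| mul_le_mul_of_nonneg_right hCC' <|
    Real.rpow_nonneg (Finset.sum_nonneg fun i hi => hw i (hB hi)) _

lemma RestrictedStrongType.eLpNorm_sum_le {B : Finset ι} (h : RestrictedStrongType μ F w A q C)
    (hB : B ⊆ A) {γ : ι → ℂ} {t : ℝ} (ht : 0 < t) (hγ : ∀ i ∈ B, ‖γ i‖ ≤ t) :
    eLpNorm (fun x => ∑ i ∈ B, γ i * F i x) (.ofReal q) μ ≤
      .ofReal (t * (C * (∑ i ∈ B, w i) ^ (1 / q))) := by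
  classical
  have htC : (t : ℂ) ≠ 0 := Complex.ofReal_ne_zero.mpr ht.ne'
  let c : ι → ℂ := fun i => if i ∈ B then γ i / t else 0
  have hc_le (i : ι) : ‖c i‖ ≤ 1 := by
    simp only [c]
    split_ifs with hi
    · rw [norm_div, Complex.norm_of_nonneg ht.le]
      exact (div_le_one ht).mpr (hγ i hi)
    · exact norm_zero.trans_le zero_le_one
  have hscale : (fun x => ∑ i ∈ B, γ i * F i x) = (t : ℂ) • fun x => ∑ i ∈ B, c i * F i x := by
    funext x
    rw [Pi.smul_apply, smul_eq_mul, Finset.mul_sum]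
    refine Finset.sum_congr rfl fun i hi => ?_
    simp only [c, if_pos hi]
    rw [← mul_assoc, mul_div_cancel₀ _ htC]
  rw [hscale, eLpNorm_const_smul, ENNReal.ofReal_mul ht.le, ← ofReal_norm,
    Complex.norm_of_nonneg ht.le]
  exact mul_le_mul_right (h B hB c hc_le) _

/-- The indices in `A` whose coefficient has modulus in `[2 ^ j, 2 ^ (j + 1))`. -/
def modulusLevel (A : Finset ι) (γ : ι → ℂ) (j : ℤ) : Finset ι :=
  A.filter fun i => Int.log 2 ‖γ i‖ = j

variable {γ : ι → ℂ} {i : ι} {j : ℤ}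

lemma norm_le_of_mem_modulusLevel (hi : i ∈ modulusLevel A γ j) : ‖γ i‖ ≤ 2 * 2 ^ (j : ℝ) := by
  have hlog := (Int.lt_zpow_succ_log_self (b := 2) one_lt_two ‖γ i‖).le
  rw [(Finset.mem_filter.mp hi).2, Nat.cast_ofNat, zpow_add_one₀ two_ne_zero] at hlog
  rwa [Real.rpow_intCast, mul_comm]

lemma two_rpow_le_norm_of_mem_modulusLevel (hγ : γ i ≠ 0) (hi : i ∈ modulusLevel A γ j) :
    2 ^ (j : ℝ) ≤ ‖γ i‖ := by
  have hlog := Int.zpow_log_le_self (b := 2) one_lt_two (norm_pos_iff.mpr hγ)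
  rwa [(Finset.mem_filter.mp hi).2, Nat.cast_ofNat, ← Real.rpow_intCast] at hlog

lemma sum_modulusLevel {M : Type*} [AddCommMonoid M] (A : Finset ι) (γ : ι → ℂ) (f : ι → M) :
    ∑ j ∈ A.image (fun i => Int.log 2 ‖γ i‖), ∑ i ∈ modulusLevel A γ j, f i = ∑ i ∈ A, f i :=
  Finset.sum_fiberwise_of_maps_to (fun _ hi => Finset.mem_image_of_mem _ hi) f

lemma sum_two_rpow_mul_sum_modulusLevel_le {p : ℝ} (hp : 0 ≤ p) (hw : ∀ i ∈ A, 0 ≤ w i)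
    (hγ : ∀ i ∈ A, γ i ≠ 0) :
    ∑ j ∈ A.image (fun i => Int.log 2 ‖γ i‖), (2 : ℝ) ^ (j * p) * ∑ i ∈ modulusLevel A γ j, w i ≤
      ∑ i ∈ A, ‖γ i‖ ^ p * w i := by
  simp_rw [← sum_modulusLevel A γ (fun i => ‖γ i‖ ^ p * w i), Finset.mul_sum]
  refine Finset.sum_le_sum fun j _ => Finset.sum_le_sum fun i hi => ?_
  have hiA := Finset.filter_subset _ _ hi
  refine mul_le_mul_of_nonneg_right ?_ (hw i hiA)
  rw [Real.rpow_mul zero_le_two]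
  exact Real.rpow_le_rpow (by positivity) (two_rpow_le_norm_of_mem_modulusLevel (hγ i hiA) hi) hp

lemma lintegral_enorm_sum_rpow_le_of_restrictedStrongType {p q₀ q₁ : ℝ} (hp : 0 < p) (hp₂ : p ≤ 2)
    (hq₀ : 0 < q₀) (hq₀p : q₀ < p) (hq₁ : 0 < q₁) (hconj : p / (2 * q₀) + p / (2 * q₁) = 1)
    (hC : 0 ≤ C) (hF : ∀ i ∈ A, AEStronglyMeasurable (F i) μ) (hw : ∀ i ∈ A, 0 ≤ w i)
    (h₀ : RestrictedStrongType μ F w A q₀ C) (h₁ : RestrictedStrongType μ F w A q₁ C)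
    (hγ : ∀ i ∈ A, γ i ≠ 0) :
    ∫⁻ x, ‖∑ i ∈ A, γ i * F i x‖ₑ ^ p ∂μ ≤
      .ofReal ((2 * C) ^ p * (2 * (∑' n, levelDecay (p * (p / (2 * q₀) - 1 / 2)) n)) *
        ∑ i ∈ A, ‖γ i‖ ^ p * w i) := by
  have hsub (j : ℤ) : modulusLevel A γ j ⊆ A := Finset.filter_subset _ _
  have hlevel {q : ℝ} (h : RestrictedStrongType μ F w A q C) (j : ℤ) :
      eLpNorm (fun x => ∑ i ∈ modulusLevel A γ j, γ i * F i x) (.ofReal q) μ ≤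
        .ofReal (2 * C * 2 ^ (j : ℝ) * (∑ i ∈ modulusLevel A γ j, w i) ^ (1 / q)) := by
    convert! h.eLpNorm_sum_le (hsub j) (t := 2 * 2 ^ (j : ℝ)) (by positivity)
      (fun i => norm_le_of_mem_modulusLevel) using 2
    ring
  have hsum := lintegral_enorm_sum_rpow_le_of_eLpNorm_le hp hp₂ hq₀ hq₀p hq₁ hconj
    (mul_nonneg zero_le_two hC)
    (fun j => Finset.aestronglyMeasurable_fun_sum _ fun i hi => (hF i (hsub j hi)).const_mul (γ i))
    (fun j => Finset.sum_nonneg fun i hi => hw i (hsub j hi)) (hlevel h₀) (hlevel h₁)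
    (A.image fun i => Int.log 2 ‖γ i‖)
  simp_rw [sum_modulusLevel A γ] at hsum
  refine hsum.trans (ENNReal.ofReal_le_ofReal (mul_le_mul_of_nonneg_left
    (sum_two_rpow_mul_sum_modulusLevel_le hp.le hw hγ) ?_))
  exact mul_nonneg (by positivity) (mul_nonneg zero_le_two (tsum_nonneg (levelDecay_nonneg _)))

lemma eLpNorm_le_ofReal_mul_rpow_of_lintegral_le {G : Type*} [NormedAddCommGroup G] {f : α → G}
    {p D Q : ℝ} (hp : 0 < p) (hD : 0 ≤ D) (hQ : 0 ≤ Q)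
    (h : ∫⁻ x, ‖f x‖ₑ ^ p ∂μ ≤ .ofReal (D * Q)) :
    eLpNorm f (.ofReal p) μ ≤ .ofReal (D ^ (1 / p) * Q ^ (1 / p)) := by
  rw [eLpNorm_eq_lintegral_rpow_enorm_toReal (ENNReal.ofReal_pos.mpr hp).ne' ENNReal.ofReal_ne_top,
    ENNReal.toReal_ofReal hp.le, ← Real.mul_rpow hD hQ,
    ← ENNReal.ofReal_rpow_of_nonneg (by positivity) (by positivity)]
  exact ENNReal.rpow_le_rpow h (by positivity)

end RestrictedType

section DiscreteInequality

variable {d : ℕ} {ψ₀ : Ed d → ℂ}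

lemma isSeparatedConfig_of_subset_prod {Y : Set (Ed d)} {R : Set ℝ} {A : Finset (Ed d × ℝ)}
    (hY : ∀ y ∈ Y, ∀ y' ∈ Y, y ≠ y' → 1 ≤ dist y y')
    (hR : ∀ r ∈ R, ∀ r' ∈ R, r ≠ r' → 1 ≤ |r - r'|) (hR₁ : ∀ r ∈ R, 1 ≤ r)
    (hA : (A : Set (Ed d × ℝ)) ⊆ Y ×ˢ R) : IsSeparatedConfig A where
  one_le_radius _ he := hR₁ _ (hA he).2
  one_le_dist _ he _ he' := hY _ (hA he).1 _ (hA he').1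
  one_le_abs_sub _ he _ he' := hR _ (hA he).2 _ (hA he').2

lemma Admissible.exists_restrictedStrongType (hψ : Admissible d ψ₀) (hd : 4 ≤ d) {q₀ q₁ : ℝ}
    (hq₀ : 1 ≤ q₀) (hq₀_lt : q₀ < (2 * (d : ℝ) - 2) / (d + 1)) (hq₁ : 1 ≤ q₁)
    (hq₁_lt : q₁ < (2 * (d : ℝ) - 2) / (d + 1)) :
    ∃ C, 0 ≤ C ∧ ∀ A : Finset (Ed d × ℝ), IsSeparatedConfig A → ∀ q ∈ ({q₀, q₁} : Set ℝ),
      RestrictedStrongType volume (fun e => Fyr d ψ₀ e.1 e.2) (fun e => e.2 ^ (d - 1)) A q C := by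
  obtain ⟨C₀, hC₀, h₀⟩ := hψ.exists_eLpNorm_sum_mul_Fyr_le_of_norm_le_one hd hq₀ hq₀_lt
  obtain ⟨C₁, -, h₁⟩ := hψ.exists_eLpNorm_sum_mul_Fyr_le_of_norm_le_one hd hq₁ hq₁_lt
  refine ⟨max C₀ C₁, le_max_of_le_left hC₀, fun A hA q hq => ?_⟩
  have hw : ∀ e ∈ A, 0 ≤ e.2 ^ (d - 1) := fun e he =>
    pow_nonneg (zero_le_one.trans (hA.one_le_radius e he)) _
  rcases hq with rfl | rfl
  · exact RestrictedStrongType.mono (fun B hB => h₀ B (hA.mono hB)) (le_max_left _ _) hw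
  · exact RestrictedStrongType.mono (fun B hB => h₁ B (hA.mono hB)) (le_max_right _ _) hw

lemma Admissible.exists_eLpNorm_sum_mul_Fyr_le (hψ : Admissible d ψ₀) (hd : 4 ≤ d) {p : ℝ}
    (hp₁ : 1 < p) (hp_lt : p < (2 * (d : ℝ) - 2) / (d + 1)) :
    ∃ C, 0 ≤ C ∧ ∀ A : Finset (Ed d × ℝ), IsSeparatedConfig A → ∀ γ : Ed d × ℝ → ℂ,
      (∀ e ∈ A, γ e ≠ 0) →
        eLpNorm (fun x => ∑ e ∈ A, γ e * Fyr d ψ₀ e.1 e.2 x) (.ofReal p) volume ≤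
          .ofReal (C * (∑ e ∈ A, ‖γ e‖ ^ p * e.2 ^ (d - 1)) ^ (1 / p)) := by
  have hp : 0 < p := one_pos.trans hp₁
  have hp₂ : p ≤ 2 := hp_lt.le.trans ((div_le_iff₀ (by positivity)).mpr (by linarith))
  obtain ⟨q₀, q₁, hq₀, hq₀p, hpq₁, hq₁, hconj⟩ :=
    exists_conjugate_exponents_between one_pos hp₁ hp_lt
  obtain ⟨C, hC, hrestricted⟩ := hψ.exists_restrictedStrongType hd hq₀.le (hq₀p.trans hp_lt)
    (hp₁.trans hpq₁).le hq₁
  set D := (2 * C) ^ p * (2 * ∑' n, levelDecay (p * (p / (2 * q₀) - 1 / 2)) n)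
  have hD : 0 ≤ D := mul_nonneg (by positivity)
    (mul_nonneg zero_le_two (tsum_nonneg (levelDecay_nonneg _)))
  refine ⟨D ^ (1 / p), by positivity, fun A hA γ hγ => ?_⟩
  have hradius : ∀ e ∈ A, 0 < e.2 := fun e he => one_pos.trans_le (hA.one_le_radius e he)
  have hw : ∀ e ∈ A, 0 ≤ e.2 ^ (d - 1) := fun e he => pow_nonneg (hradius e he).le _
  exact eLpNorm_le_ofReal_mul_rpow_of_lintegral_le hp hD
    (Finset.sum_nonneg fun e he => mul_nonneg (by positivity) (hw e he))
    (lintegral_enorm_sum_rpow_le_of_restrictedStrongType hp hp₂ (one_pos.trans hq₀) hq₀p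
      (hp.trans hpq₁) hconj hC
      (fun e he => (hψ.continuous_Fyr e.1 (hradius e he)).aestronglyMeasurable) hw
      (hrestricted A hA q₀ (by simp)) (hrestricted A hA q₁ (by simp)) hγ)

end DiscreteInequality

/-- the discrete `ℓ^p → L^p` inequality
`‖∑ γ(y,r) F_{y,r}‖_p ≲ (∑ |γ(y,r)|^p r^{d-1})^{1/p}`, `1 < p < (2d-2)/(d+1)`. -/
theorem discrete_lp_inequality
    (d : ℕ) (hd : 4 ≤ d) (p : ℝ) (hp1 : 1 < p)
    (hpd : p < (2 * (d : ℝ) - 2) / ((d : ℝ) + 1))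
    (ψ₀ : Ed d → ℂ) (hψ : Admissible d ψ₀) :
    ∃ C : ℝ, 0 < C ∧
      ∀ (Y : Set (Ed d)) (R : Set ℝ),
        (∀ y ∈ Y, ∀ y' ∈ Y, y ≠ y' → 1 ≤ dist y y') →
        (∀ r ∈ R, ∀ r' ∈ R, r ≠ r' → 1 ≤ |r - r'|) →
        (∀ r ∈ R, 1 ≤ r) →
        ∀ γ : Ed d × ℝ → ℂ, ∀ hfin : (Function.support γ).Finite,
          Function.support γ ⊆ Y ×ˢ R →
          eLpNorm (fun x => ∑ e ∈ hfin.toFinset, γ e * Fyr d ψ₀ e.1 e.2 x)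
              (ENNReal.ofReal p) volume ≤
            ENNReal.ofReal
              (C * (∑ e ∈ hfin.toFinset, ‖γ e‖ ^ p * e.2 ^ (d - 1)) ^ (1 / p)) := by
  obtain ⟨C, hC₀, hC⟩ := hψ.exists_eLpNorm_sum_mul_Fyr_le hd hp1 hpd
  refine ⟨C + 1, by positivity, fun Y R hY hR hR₁ γ hfin hsupp => ?_⟩
  have hconfig : IsSeparatedConfig hfin.toFinset :=
    isSeparatedConfig_of_subset_prod hY hR hR₁ (hfin.coe_toFinset.trans_subset hsupp)
  refine (hC _ hconfig γ fun e he => hfin.mem_toFinset.mp he).trans (ENNReal.ofReal_le_ofReal ?_)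
  gcongr
  · refine Real.rpow_nonneg (Finset.sum_nonneg fun e he => ?_) _
    exact mul_nonneg (by positivity)
      (pow_nonneg (zero_le_one.trans (hconfig.one_le_radius e he)) _)
  · exact le_add_of_nonneg_right zero_le_one
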